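/- arXiv:2504.09320 — 2 statements merged into one kernel-verified Lean document; each statement's English description precedes it below -/
import Mathlib

section
/- Let n ≥ 1 be an integer, θ ∈ (0, π/2) and 1 ≤ k ≤ n. If s_1 and s_2 are C³ capillary functions on C_θ with τ[s_1] > 0 and τ[s_2] > 0 such that σ_k(τ[s_1])(ζ) = σ_k(τ[s_2])(ζ) for all ζ ∈ C_θ, then there exists a vector a ∈ ℝ^{n+1} with ⟨a, E_{n+1}⟩ = 0 such that s_2(ζ) = s_1(ζ) + ⟨a, ζ⟩ for all ζ ∈ C_θ. -/
open MeasureTheory Real Set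
open scoped RealInnerProductSpace

noncomputable section

abbrev V (n : ℕ) := EuclideanSpace ℝ (Fin (n + 1))

/-- The vertical unit vector `E_{n+1}`. -/
def Etop (n : ℕ) : V n := EuclideanSpace.single (Fin.last n) 1

/-- The spherical cap `S^n_θ`. -/
def sphCap (n : ℕ) (θ : ℝ) : Set (V n) :=
  {u | ‖u‖ = 1 ∧ Real.cos θ ≤ u (Fin.last n)}

/-- The boundary circle `∂S^n_θ`. -/
def sphCapBdry (n : ℕ) (θ : ℝ) : Set (V n) :=
  {u | ‖u‖ = 1 ∧ u (Fin.last n) = Real.cos θ}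

/-- The capillary cap `C_θ`. -/
def capCap (n : ℕ) (θ : ℝ) : Set (V n) :=
  {ζ | 0 ≤ ζ (Fin.last n) ∧ ‖ζ + Real.cos θ • Etop n‖ = 1}

/-- The open cone over `S^n_θ`. -/
def coneCap (n : ℕ) (θ : ℝ) : Set (V n) :=
  {x | ∃ l : ℝ, 0 < l ∧ ∃ u ∈ sphCap n θ, x = l • u}

/-- `G` is a positively 1-homogeneous extension of `g : C_θ → ℝ` which is `C^m` on an
open neighborhood of the cone over `S^n_θ`. -/
def IsHomExt (n : ℕ) (θ : ℝ) (m : ℕ∞) (g G : V n → ℝ) : Prop :=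
  (∃ U : Set (V n), IsOpen U ∧ coneCap n θ ⊆ U ∧ ContDiffOn ℝ m G U) ∧
  (∀ l : ℝ, 0 < l → ∀ u ∈ sphCap n θ, G (l • u) = l * G u) ∧
  (∀ ζ ∈ capCap n θ, G (ζ + Real.cos θ • Etop n) = g ζ)

/-- The Hessian of `G` at `u` as a quadratic/bilinear form. -/
def hessQ (n : ℕ) (G : V n → ℝ) (u v w : V n) : ℝ :=
  fderiv ℝ (fderiv ℝ G) u v w

/-- The Hessian matrix `D²G(u)` in the standard coordinates. -/
def hessM (n : ℕ) (G : V n → ℝ) (u : V n) : Matrix (Fin (n + 1)) (Fin (n + 1)) ℝ :=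
  fun i j => fderiv ℝ (fderiv ℝ G) u (EuclideanSpace.single i 1) (EuclideanSpace.single j 1)

/-- `σ_j` of the eigenvalues of `D²G(u)` (via characteristic polynomial coefficients). -/
def sigmaElem (n : ℕ) (j : ℕ) (G : V n → ℝ) (u : V n) : ℝ :=
  (-1 : ℝ) ^ j * ((hessM n G u).charpoly.coeff (n + 1 - j))

/-- `τ[g] ≥ 0` : the Hessian of the extension is positive semidefinite on `S^n_θ`. -/
def TauNonneg (n : ℕ) (θ : ℝ) (G : V n → ℝ) : Prop :=
  ∀ u ∈ sphCap n θ, ∀ v : V n, 0 ≤ hessQ n G u v v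

/-- `τ[g] > 0`. -/
def TauPos (n : ℕ) (θ : ℝ) (G : V n → ℝ) : Prop :=
  TauNonneg n θ G ∧
  ∀ u ∈ sphCap n θ, ∀ v : V n, v ≠ 0 → ⟪v, u⟫ = 0 → 0 < hessQ n G u v v

/-- Capillary (Robin) boundary condition: `∂_{n+1}G = 0` on `∂S^n_θ`. -/
def IsCapillaryF (n : ℕ) (θ : ℝ) (G : V n → ℝ) : Prop :=
  ∀ u ∈ sphCapBdry n θ, fderiv ℝ G u (Etop n) = 0

/-- Reflection negating the horizontal coordinates. -/
def horizNeg (n : ℕ) (ζ : V n) : V n := (2 * ζ (Fin.last n)) • Etop n - ζ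

/-- Support function of a set. -/
def suppFn (n : ℕ) (K : Set (V n)) (u : V n) : ℝ := sSup ((fun y => ⟪u, y⟫) '' K)

/-- Relative interior (within the hyperplane `{x_{n+1}=0}`) of the base `K ∩ {x_{n+1}=0}`. -/
def relintBase (n : ℕ) (K : Set (V n)) : Set (V n) :=
  {x | x (Fin.last n) = 0 ∧ ∃ ε > 0, ∀ y : V n, y (Fin.last n) = 0 → ‖y - x‖ < ε → y ∈ K}

/-- A `θ`-capillary convex body. -/
def IsCapBody (n : ℕ) (θ : ℝ) (K : Set (V n)) : Prop :=
  IsCompact K ∧ Convex ℝ K ∧ (interior K).Nonempty ∧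
  (∀ x ∈ K, 0 ≤ x (Fin.last n)) ∧
  (∀ x ∈ K, 0 < x (Fin.last n) → ∀ u : V n, ‖u‖ = 1 → ⟪u, x⟫ = suppFn n K u →
    Real.cos θ ≤ u (Fin.last n)) ∧
  (∀ v : V n, ‖v‖ = 1 → v (Fin.last n) = 0 →
    suppFn n K (Real.sin θ • v + Real.cos θ • Etop n) = Real.sin θ * suppFn n K v) ∧
  (relintBase n K).Nonempty

/-- `ψ` is one of `x²`, `x^p (p<0)`, `-log x`. -/
def PsiOK (ψ : ℝ → ℝ) : Prop :=
  (ψ = fun x : ℝ => x ^ 2) ∨ (∃ p : ℝ, p < 0 ∧ ψ = fun x : ℝ => x ^ p) ∨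
    (ψ = fun x : ℝ => -Real.log x)

/-!
Extend the capillary functions `1`-homogeneously to the cone `⟨x, E⟩ ≥ c ‖x‖`, `c = cos θ`, with
vertical unit vector `E`. A `C¹` field `Z` on the cone which is orthogonal to `x`, has no vertical
component on the boundary and satisfies `div Z ≥ 0` is divergence free: integrate `div Z` against
cutoffs in `‖x‖` and in the distance `⟨x, E⟩ - c ‖x‖` to the boundary. The first kind contributes
nothing because `Z` is tangential, the second tends to zero because of the boundary condition.

For `k ≥ 2`, horizontal translations make both functions positive. Let `T(G)` be the `(k-1)`-st
Newton transformation of `D²G`, which is divergence free, and let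
`Z = (T(G₁) - T(G₂)) (G₁ ∇G₂ - G₂ ∇G₁)`. Then
`div Z = G₁ (tr (T(G₁) D²G₂) - k σ_k) + G₂ (tr (T(G₂) D²G₁) - k σ_k)` is nonnegative by Gårding's
inequality, whose equality case yields `D²G₁ = D²G₂`.

For `k = 1` the difference `w = G₂ - G₁` is harmonic, and `Z = ∂_E w ∇∂_E w` has divergence
`|∇∂_E w|²`.

In both cases `∂_E w` is constant, hence zero by the boundary condition, so `w` is invariant under
vertical translations. Being homogeneous, it is then equal to its linearization at `E`.
-/

namespace CapillaryUniqueness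

section ElementarySymmetric

variable {ι : Type*} {k : ℕ} {s t : Finset ι} {x y : ι → ℝ}

/-- The elementary symmetric polynomial of degree `k` in the variables `x i`, `i ∈ s`. The
variables come as a function on all of `ι` so that one of them can be deleted by erasing its
index from `s`. -/
def esymOn (k : ℕ) (s : Finset ι) (x : ι → ℝ) : ℝ := (s.val.map x).esymm k

lemma esymOn_eq_sum_prod (k : ℕ) (s : Finset ι) (x : ι → ℝ) :
    esymOn k s x = ∑ t ∈ s.powersetCard k, ∏ i ∈ t, x i :=
  Finset.esymm_map_val x s k

@[simp]
lemma esymOn_zero (s : Finset ι) (x : ι → ℝ) : esymOn 0 s x = 1 := by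
  simp [esymOn_eq_sum_prod]

lemma esymOn_one (s : Finset ι) (x : ι → ℝ) : esymOn 1 s x = ∑ i ∈ s, x i := by
  simp [esymOn_eq_sum_prod, Finset.powersetCard_one]

lemma esymOn_smul (k : ℕ) (s : Finset ι) (c : ℝ) (x : ι → ℝ) :
    esymOn k s (c • x) = c ^ k * esymOn k s x := by
  simpa [esymOn, Function.comp_def] using (Multiset.pow_smul_esymm c k (s.val.map x)).symm

lemma esymOn_univ_comp_equiv [Fintype ι] (k : ℕ) (x : ι → ℝ) (e : ι ≃ ι) :
    esymOn k Finset.univ (x ∘ e) = esymOn k Finset.univ x := by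
  rw [esymOn, esymOn, ← Multiset.map_map, Multiset.map_univ_val_equiv]

lemma exists_subset_forall_pos_of_esymOn_pos (hx : 0 ≤ x) (h : 0 < esymOn k s x) :
    ∃ t ⊆ s, t.card = k ∧ ∀ i ∈ t, 0 < x i := by
  rw [esymOn_eq_sum_prod] at h
  obtain ⟨t, ht, hprod⟩ := Finset.exists_ne_zero_of_sum_ne_zero h.ne'
  obtain ⟨hts, hcard⟩ := Finset.mem_powersetCard.1 ht
  exact ⟨t, hts, hcard, fun i hi => (hx i).lt_of_ne' (Finset.prod_ne_zero_iff.1 hprod i hi)⟩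

lemma esymOn_pos_of_subset (hx : 0 ≤ x) (hts : t ⊆ s) (hk : k ≤ t.card)
    (ht : ∀ i ∈ t, 0 < x i) : 0 < esymOn k s x := by
  obtain ⟨r, hrt, hcard⟩ := Finset.exists_subset_card_eq hk
  rw [esymOn_eq_sum_prod]
  exact Finset.sum_pos' (fun _ _ => Finset.prod_nonneg fun i _ => hx i)
    ⟨r, Finset.mem_powersetCard.2 ⟨hrt.trans hts, hcard⟩, Finset.prod_pos fun i hi => ht i (hrt hi)⟩

lemma esymOn_pos_of_le {l : ℕ} (hx : 0 ≤ x) (hkl : k ≤ l) (h : 0 < esymOn l s x) :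
    0 < esymOn k s x := by
  obtain ⟨t, hts, hcard, hpos⟩ := exists_subset_forall_pos_of_esymOn_pos hx h
  exact esymOn_pos_of_subset hx hts (hkl.trans hcard.ge) hpos

lemma esymOn_add_pos (hx : 0 ≤ x) (hy : 0 ≤ y) (h : 0 < esymOn k s x) :
    0 < esymOn k s (x + y) := by
  obtain ⟨t, hts, hcard, hpos⟩ := exists_subset_forall_pos_of_esymOn_pos hx h
  exact esymOn_pos_of_subset (add_nonneg hx hy) hts hcard.ge
    fun i hi => add_pos_of_pos_of_nonneg (hpos i hi) (hy i)

lemma esymOn_insert [DecidableEq ι] (k : ℕ) {a : ι} (ha : a ∉ s) (x : ι → ℝ) :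
    esymOn (k + 1) (insert a s) x = esymOn (k + 1) s x + x a * esymOn k s x := by
  rw [esymOn, Finset.insert_val_of_notMem ha, Multiset.map_cons]
  simp [esymOn, Multiset.esymm, Multiset.powersetCard_cons, Multiset.sum_map_mul_left]

lemma esymOn_succ_erase [DecidableEq ι] (k : ℕ) {i : ι} (hi : i ∈ s) (x : ι → ℝ) :
    esymOn (k + 1) s x = esymOn (k + 1) (s.erase i) x + x i * esymOn k (s.erase i) x := by
  rw [← esymOn_insert k (Finset.notMem_erase i s) x, Finset.insert_erase hi]

lemma esymOn_erase_pos [DecidableEq ι] (hx : 0 ≤ x) (h : 0 < esymOn (k + 1) s x) (i : ι) :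
    0 < esymOn k (s.erase i) x := by
  obtain ⟨t, hts, hcard, hpos⟩ := exists_subset_forall_pos_of_esymOn_pos hx h
  refine esymOn_pos_of_subset hx (Finset.erase_subset_erase i hts) ?_
    fun j hj => hpos j (Finset.mem_of_mem_erase hj)
  have := Finset.pred_card_le_card_erase (s := t) (a := i)
  omega

lemma hasDerivAt_esymOn_add_smul [DecidableEq ι] (k : ℕ) (s : Finset ι) (x y : ι → ℝ) (r : ℝ) :
    HasDerivAt (fun t : ℝ => esymOn (k + 1) s (x + t • y))
      (∑ i ∈ s, y i * esymOn k (s.erase i) (x + r • y)) r := by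
  induction s using Finset.induction_on generalizing k with
  | empty =>
    have hzero (z : ι → ℝ) : esymOn (k + 1) ∅ z = 0 := by
      rw [esymOn_eq_sum_prod, Finset.powersetCard_eq_empty.2 (by simp), Finset.sum_empty]
    simpa only [hzero, Finset.sum_empty] using hasDerivAt_const r (0 : ℝ)
  | insert a s ha ih =>
    have hlin : HasDerivAt (fun t : ℝ => (x + t • y) a) (y a) r := by
      simpa using ((hasDerivAt_id r).mul_const (y a)).const_add (x a)
    have hne : ∀ i ∈ s, a ≠ i := fun i hi h => ha (h ▸ hi)
    simp_rw [esymOn_insert k ha]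
    rw [Finset.sum_insert ha, Finset.erase_insert ha]
    cases k with
    | zero => simpa [esymOn_zero, add_comm (y a)] using (ih 0).fun_add hlin
    | succ k =>
      refine ((ih (k + 1)).add (hlin.mul (ih k))).congr_deriv ?_
      have herase : ∀ i ∈ s, y i * esymOn (k + 1) ((insert a s).erase i) (x + r • y)
          = y i * esymOn (k + 1) (s.erase i) (x + r • y)
            + (x + r • y) a * (y i * esymOn k (s.erase i) (x + r • y)) := fun i hi => by
        rw [Finset.erase_insert_of_ne (hne i hi),
          esymOn_insert k fun h => ha (Finset.mem_of_mem_erase h)]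
        ring
      rw [Finset.sum_congr rfl herase, Finset.sum_add_distrib, ← Finset.mul_sum]
      ring

/-- The derivative of the elementary symmetric polynomial of degree `k + 1` at `x` along `y`. -/
def esymDeriv [DecidableEq ι] (k : ℕ) (s : Finset ι) (x y : ι → ℝ) : ℝ :=
  ∑ i ∈ s, y i * esymOn k (s.erase i) x

lemma hasDerivAt_esymOn [DecidableEq ι] (k : ℕ) (s : Finset ι) (x y : ι → ℝ) :
    HasDerivAt (fun t : ℝ => esymOn (k + 1) s (x + t • y)) (esymDeriv k s x y) 0 := by
  simpa [esymDeriv] using hasDerivAt_esymOn_add_smul k s x y 0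

-- Euler's identity for the homogeneous polynomial `esymOn (k + 1) s`.
lemma esymDeriv_self [DecidableEq ι] (k : ℕ) (s : Finset ι) (x : ι → ℝ) :
    esymDeriv k s x x = (k + 1) * esymOn (k + 1) s x := by
  have hpow : HasDerivAt (fun t : ℝ => esymOn (k + 1) s (x + t • x))
      ((k + 1) * esymOn (k + 1) s x) 0 := by
    have hline (t : ℝ) : x + t • x = (1 + t) • x := by rw [add_smul, one_smul]
    simp_rw [hline, esymOn_smul]
    simpa using ((((hasDerivAt_id (0 : ℝ)).const_add 1).pow (k + 1)).mul_const _)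
  exact (hasDerivAt_esymOn k s x x).unique hpow

lemma two_mul_esymOn_two (s : Finset ι) (x : ι → ℝ) :
    2 * esymOn 2 s x = (∑ i ∈ s, x i) ^ 2 - ∑ i ∈ s, x i ^ 2 := by
  classical
  have heuler := esymDeriv_self 1 s x
  rw [Nat.cast_one, one_add_one_eq_two] at heuler
  rw [← heuler, esymDeriv, sq, Finset.sum_mul, ← Finset.sum_sub_distrib]
  refine Finset.sum_congr rfl fun i hi => ?_
  rw [esymOn_one, ← Finset.add_sum_erase s x hi]
  ring

end ElementarySymmetric

section EsymRatio

variable {ι : Type*} {k : ℕ} {s : Finset ι} {x y : ι → ℝ}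

/-- The quotient `e_{k+1} / e_k` of consecutive elementary symmetric polynomials. -/
def esymRatio (k : ℕ) (s : Finset ι) (x : ι → ℝ) : ℝ := esymOn (k + 1) s x / esymOn k s x

lemma esymRatio_pos (hx : 0 ≤ x) (h : 0 < esymOn (k + 1) s x) : 0 < esymRatio k s x :=
  div_pos h (esymOn_pos_of_le hx k.le_succ h)

lemma esymRatio_smul (k : ℕ) (s : Finset ι) {c : ℝ} (hc : c ≠ 0) (x : ι → ℝ) :
    esymRatio k s (c • x) = c * esymRatio k s x := by
  rw [esymRatio, esymRatio, esymOn_smul, esymOn_smul, pow_succ, mul_assoc,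
    mul_div_mul_left _ _ (pow_ne_zero k hc), mul_div_assoc]

lemma prod_esymRatio (hx : 0 ≤ x) (h : 0 < esymOn k s x) :
    ∏ j ∈ Finset.range k, esymRatio j s x = esymOn k s x := by
  induction k with
  | zero => simp
  | succ k ih =>
    have hk := esymOn_pos_of_le hx k.le_succ h
    rw [Finset.prod_range_succ, ih hk, esymRatio, mul_div_cancel₀ _ hk.ne']

lemma parallel_sum_add_le {a b c d e : ℝ} (ha : 0 ≤ a) (hc : 0 ≤ c) (hab : 0 < a + b)
    (hcd : 0 < c + d) (he : b + d ≤ e) :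
    a * b / (a + b) + c * d / (c + d) ≤ (a + c) * e / (a + c + e) := by
  calc a * b / (a + b) + c * d / (c + d)
      ≤ (a + c) * (b + d) / (a + c + (b + d)) := by
        rw [div_add_div _ _ hab.ne' hcd.ne', div_le_div_iff₀ (by positivity) (by linarith)]
        nlinarith [sq_nonneg (a * d - b * c)]
    _ ≤ (a + c) * e / (a + c + e) := by
        rw [div_le_div_iff₀ (by linarith) (by linarith)]
        nlinarith [mul_nonneg (mul_nonneg (add_nonneg ha hc) (add_nonneg ha hc)) (sub_nonneg.2 he)]

lemma add_esymRatio_erase [DecidableEq ι] {i : ι} (hi : i ∈ s) (h : 0 < esymOn k (s.erase i) x) :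
    x i + esymRatio k (s.erase i) x = esymOn (k + 1) s x / esymOn k (s.erase i) x := by
  rw [esymOn_succ_erase k hi x, esymRatio, add_div, mul_div_cancel_right₀ _ h.ne', add_comm]

lemma add_one_mul_esymRatio_succ [DecidableEq ι] (hx : 0 ≤ x) (h : 0 < esymOn (k + 1) s x) :
    (k + 1 + 1) * esymRatio (k + 1) s x
      = ∑ i ∈ s, x i * esymRatio k (s.erase i) x / (x i + esymRatio k (s.erase i) x) := by
  have heuler := esymDeriv_self (k + 1) s x
  push_cast at heuler
  rw [esymRatio, ← mul_div_assoc, ← heuler, esymDeriv, Finset.sum_div]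
  refine Finset.sum_congr rfl fun i hi => ?_
  have := esymOn_erase_pos hx h i
  rw [add_esymRatio_erase hi this, esymRatio]
  field_simp

/-- The Marcus–Lopes inequality. -/
lemma esymRatio_add_le (hx : 0 ≤ x) (hy : 0 ≤ y) (hxk : 0 < esymOn k s x)
    (hyk : 0 < esymOn k s y) :
    esymRatio k s x + esymRatio k s y ≤ esymRatio k s (x + y) := by
  classical
  induction k generalizing s with
  | zero => simp [esymRatio, esymOn_one, Finset.sum_add_distrib]
  | succ k ih =>
    have hdenom {z : ι → ℝ} (hz : 0 ≤ z) (hpos : 0 < esymOn (k + 1) s z) (i : ι) (hi : i ∈ s) :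
        0 < z i + esymRatio k (s.erase i) z := by
      rw [add_esymRatio_erase hi (esymOn_erase_pos hz hpos i)]
      exact div_pos hpos (esymOn_erase_pos hz hpos i)
    have hcoeff : (0 : ℝ) < k + 1 + 1 := by positivity
    rw [← mul_le_mul_iff_right₀ hcoeff, mul_add, add_one_mul_esymRatio_succ hx hxk,
      add_one_mul_esymRatio_succ hy hyk,
      add_one_mul_esymRatio_succ (add_nonneg hx hy) (esymOn_add_pos hx hy hxk),
      ← Finset.sum_add_distrib]
    exact Finset.sum_le_sum fun i hi => parallel_sum_add_le (hx i) (hy i) (hdenom hx hxk i hi)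
      (hdenom hy hyk i hi) (ih (esymOn_erase_pos hx hxk i) (esymOn_erase_pos hy hyk i))

end EsymRatio

section TangentInequality

variable {ι : Type*} {k : ℕ} {s : Finset ι} {x y : ι → ℝ}

lemma differentiableAt_esymOn (k : ℕ) (s : Finset ι) (x y : ι → ℝ) :
    DifferentiableAt ℝ (fun t : ℝ => esymOn k s (x + t • y)) 0 := by
  classical
  cases k with
  | zero => simp
  | succ k => exact (hasDerivAt_esymOn k s x y).differentiableAt

lemma differentiableAt_esymRatio (h : esymOn k s x ≠ 0) (y : ι → ℝ) :
    DifferentiableAt ℝ (fun t : ℝ => esymRatio k s (x + t • y)) 0 :=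
  (differentiableAt_esymOn (k + 1) s x y).fun_div (differentiableAt_esymOn k s x y)
    (by simpa using h)

-- The logarithmic derivative turns the product `∏ j < k, esymRatio j` into a sum.
lemma logDeriv_esymOn (hx : 0 ≤ x) (h : 0 < esymOn k s x) (y : ι → ℝ) :
    logDeriv (fun t : ℝ => esymOn k s (x + t • y)) 0
      = ∑ j ∈ Finset.range k, logDeriv (fun t : ℝ => esymRatio j s (x + t • y)) 0 := by
  induction k with
  | zero => simp
  | succ k ih =>
    have hk := esymOn_pos_of_le hx k.le_succ h
    rw [Finset.sum_range_succ, ← ih hk]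
    simp only [esymRatio]
    rw [logDeriv_div 0 (by simpa using h.ne') (by simpa using hk.ne')
      (differentiableAt_esymOn _ s x y) (differentiableAt_esymOn _ s x y)]
    ring

lemma esymRatio_le_deriv (hx : 0 ≤ x) (hy : 0 ≤ y) (hxk : 0 < esymOn k s x)
    (hyk : 0 < esymOn k s y) :
    esymRatio k s y ≤ deriv (fun t : ℝ => esymRatio k s (x + t • y)) 0 := by
  classical
  have hslope := (differentiableAt_esymRatio hxk.ne' y).hasDerivAt.tendsto_slope_zero_right
  refine ge_of_tendsto hslope ?_
  filter_upwards [self_mem_nhdsWithin] with t (ht : 0 < t)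
  have hsuper := esymRatio_add_le hx (smul_nonneg ht.le hy) hxk
    (by rw [esymOn_smul]; positivity)
  rw [esymRatio_smul k s ht.ne'] at hsuper
  rw [zero_add, zero_smul, add_zero, smul_eq_mul, inv_mul_eq_div, le_div_iff₀ ht]
  linarith

/-- The second-order gain in the concavity of `e_2 / e_1`, which carries the equality case. -/
lemma deriv_esymRatio_one (hx : 0 < ∑ i ∈ s, x i) (hy : 0 < ∑ i ∈ s, y i) :
    deriv (fun t : ℝ => esymRatio 1 s (x + t • y)) 0 = esymRatio 1 s y
      + (∑ i ∈ s, ((∑ j ∈ s, y j) * x i - (∑ j ∈ s, x j) * y i) ^ 2)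
        / (2 * (∑ j ∈ s, x j) ^ 2 * ∑ j ∈ s, y j) := by
  classical
  have hquot := (hasDerivAt_esymOn 1 s x y).fun_div (hasDerivAt_esymOn 0 s x y)
    (by simpa [esymOn_one] using hx.ne')
  rw [show (fun t : ℝ => esymRatio 1 s (x + t • y)) =
    fun t => esymOn 2 s (x + t • y) / esymOn 1 s (x + t • y) from rfl, hquot.deriv]
  have htwo (z : ι → ℝ) : esymOn 2 s z = ((∑ i ∈ s, z i) ^ 2 - ∑ i ∈ s, z i ^ 2) / 2 := by
    linarith [two_mul_esymOn_two s z]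
  have hderiv_two : esymDeriv 1 s x y = (∑ i ∈ s, x i) * ∑ i ∈ s, y i - ∑ i ∈ s, x i * y i := by
    rw [esymDeriv, Finset.mul_sum, ← Finset.sum_sub_distrib]
    refine Finset.sum_congr rfl fun i hi => ?_
    rw [esymOn_one, ← Finset.add_sum_erase s x hi]
    ring
  have hderiv_one : esymDeriv 0 s x y = ∑ i ∈ s, y i := by simp [esymDeriv]
  have hsquare (a b : ℝ) : ∑ i ∈ s, (b * x i - a * y i) ^ 2
      = b ^ 2 * ∑ i ∈ s, x i ^ 2 - 2 * a * b * ∑ i ∈ s, x i * y i + a ^ 2 * ∑ i ∈ s, y i ^ 2 := by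
    simp only [Finset.mul_sum, ← Finset.sum_sub_distrib, ← Finset.sum_add_distrib]
    exact Finset.sum_congr rfl fun i _ => by ring
  simp only [esymRatio, zero_smul, add_zero, zero_add, one_add_one_eq_two, htwo, hderiv_two,
    hderiv_one, hsquare, esymOn_one]
  field_simp
  ring

lemma card_le_sum_of_one_le_prod {s : Finset ι} {z : ι → ℝ} (hz : ∀ i ∈ s, 0 < z i)
    (h : 1 ≤ ∏ i ∈ s, z i) : (s.card : ℝ) ≤ ∑ i ∈ s, z i := by
  have hlog : 0 ≤ ∑ i ∈ s, (z i - 1) :=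
    calc 0 ≤ Real.log (∏ i ∈ s, z i) := Real.log_nonneg h
      _ = ∑ i ∈ s, Real.log (z i) := Real.log_prod fun i hi => (hz i hi).ne'
      _ ≤ ∑ i ∈ s, (z i - 1) :=
        Finset.sum_le_sum fun i hi => Real.log_le_sub_one_of_pos (hz i hi)
  simpa using hlog

lemma succ_le_sum_esymRatio_div (hx : 0 ≤ x) (hy : 0 ≤ y) (hpos : 0 < esymOn (k + 1) s x)
    (hle : esymOn (k + 1) s x ≤ esymOn (k + 1) s y) :
    (k + 1 : ℝ) ≤ ∑ j ∈ Finset.range (k + 1), esymRatio j s y / esymRatio j s x := by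
  have hpos' := hpos.trans_le hle
  have hratio {z : ι → ℝ} (hz : 0 ≤ z) (hp : 0 < esymOn (k + 1) s z) :
      ∀ j ∈ Finset.range (k + 1), 0 < esymRatio j s z := fun j hj =>
    esymRatio_pos hz (esymOn_pos_of_le hz (by simpa using hj) hp)
  refine (by simp : (k + 1 : ℝ) = (Finset.range (k + 1)).card).trans_le
    (card_le_sum_of_one_le_prod
      (fun j hj => div_pos (hratio hy hpos' j hj) (hratio hx hpos j hj)) ?_)
  rw [Finset.prod_div_distrib, prod_esymRatio hx hpos, prod_esymRatio hy hpos']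
  exact (one_le_div hpos).2 hle

lemma esymDeriv_eq_mul_sum [DecidableEq ι] (hx : 0 ≤ x) (hpos : 0 < esymOn (k + 1) s x)
    (y : ι → ℝ) :
    esymDeriv k s x y = esymOn (k + 1) s x * ∑ j ∈ Finset.range (k + 1),
      deriv (fun t : ℝ => esymRatio j s (x + t • y)) 0 / esymRatio j s x := by
  have hlog := logDeriv_esymOn hx hpos y
  simp only [logDeriv_apply, (hasDerivAt_esymOn k s x y).deriv, zero_smul, add_zero] at hlog
  rw [← hlog, mul_div_cancel₀ _ hpos.ne']

lemma esymRatio_div_le_deriv_div (hx : 0 ≤ x) (hy : 0 ≤ y) (hpos : 0 < esymOn (k + 1) s x)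
    (hpos' : 0 < esymOn (k + 1) s y) {j : ℕ} (hj : j ∈ Finset.range (k + 1)) :
    esymRatio j s y / esymRatio j s x
      ≤ deriv (fun t : ℝ => esymRatio j s (x + t • y)) 0 / esymRatio j s x := by
  have hjk := Finset.mem_range.1 hj
  have hratio := esymRatio_pos hx (esymOn_pos_of_le hx hjk hpos)
  gcongr
  exact esymRatio_le_deriv hx hy (esymOn_pos_of_le hx hjk.le hpos)
    (esymOn_pos_of_le hy hjk.le hpos')

/-- The tangent inequality for `e_{k+1}`, a consequence of the concavity of its `(k+1)`-st root. -/
lemma succ_mul_esymOn_le_esymDeriv [DecidableEq ι] (hx : 0 ≤ x) (hy : 0 ≤ y)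
    (hpos : 0 < esymOn (k + 1) s x) (hle : esymOn (k + 1) s x ≤ esymOn (k + 1) s y) :
    (k + 1) * esymOn (k + 1) s x ≤ esymDeriv k s x y := by
  rw [esymDeriv_eq_mul_sum hx hpos, mul_comm]
  refine mul_le_mul_of_nonneg_left ((succ_le_sum_esymRatio_div hx hy hpos hle).trans ?_) hpos.le
  exact Finset.sum_le_sum fun j => esymRatio_div_le_deriv_div hx hy hpos (hpos.trans_le hle)

lemma sum_mul_eq_sum_mul_of_esymDeriv_le [DecidableEq ι] (hk : 1 ≤ k) (hx : 0 ≤ x) (hy : 0 ≤ y)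
    (hpos : 0 < esymOn (k + 1) s x) (hle : esymOn (k + 1) s x ≤ esymOn (k + 1) s y)
    (hD : esymDeriv k s x y ≤ (k + 1) * esymOn (k + 1) s x) :
    ∀ i ∈ s, (∑ j ∈ s, y j) * x i = (∑ j ∈ s, x j) * y i := by
  have hpos' := hpos.trans_le hle
  have hone : 1 ∈ Finset.range (k + 1) := Finset.mem_range.2 (Nat.lt_succ_of_le hk)
  have hsumx : 0 < ∑ i ∈ s, x i := by
    simpa [esymOn_one] using esymOn_pos_of_le hx (Nat.le_add_left 1 k) hpos
  have hsumy : 0 < ∑ i ∈ s, y i := by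
    simpa [esymOn_one] using esymOn_pos_of_le hy (Nat.le_add_left 1 k) hpos'
  have hratio : 0 < esymRatio 1 s x :=
    esymRatio_pos hx (esymOn_pos_of_le hx (Nat.succ_le_succ hk) hpos)
  have hsums : ∑ j ∈ Finset.range (k + 1),
        deriv (fun t : ℝ => esymRatio j s (x + t • y)) 0 / esymRatio j s x
      ≤ ∑ j ∈ Finset.range (k + 1), esymRatio j s y / esymRatio j s x := by
    rw [esymDeriv_eq_mul_sum hx hpos, mul_comm] at hD
    exact (le_of_mul_le_mul_right hD hpos).trans (succ_le_sum_esymRatio_div hx hy hpos hle)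
  have hterm := (Finset.sum_eq_sum_iff_of_le fun j => esymRatio_div_le_deriv_div hx hy hpos hpos').1
    (hsums.antisymm' (Finset.sum_le_sum fun j => esymRatio_div_le_deriv_div hx hy hpos hpos'))
    1 hone
  rw [div_left_inj' hratio.ne', deriv_esymRatio_one hsumx hsumy, left_eq_add,
    div_eq_zero_iff, or_iff_left (by positivity),
    Finset.sum_eq_zero_iff_of_nonneg fun i _ => sq_nonneg _] at hterm
  exact fun i hi => sub_eq_zero.1 (pow_eq_zero_iff two_ne_zero |>.1 (hterm i hi))

lemma eq_of_esymDeriv_le [DecidableEq ι] (hk : 1 ≤ k) (hx : 0 ≤ x) (hy : 0 ≤ y)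
    (hpos : 0 < esymOn (k + 1) s x) (hle : esymOn (k + 1) s x ≤ esymOn (k + 1) s y)
    (hD : esymDeriv k s x y ≤ (k + 1) * esymOn (k + 1) s x) : ∀ i ∈ s, x i = y i := by
  have hprop := sum_mul_eq_sum_mul_of_esymDeriv_le hk hx hy hpos hle hD
  have hsumx : 0 < ∑ i ∈ s, x i := by
    simpa [esymOn_one] using esymOn_pos_of_le hx (Nat.le_add_left 1 k) hpos
  have hEq : esymDeriv k s x y = (k + 1) * esymOn (k + 1) s x :=
    hD.antisymm (succ_mul_esymOn_le_esymDeriv hx hy hpos hle)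
  have hscale : (∑ j ∈ s, y j) * esymDeriv k s x x = (∑ j ∈ s, x j) * esymDeriv k s x y := by
    rw [esymDeriv, esymDeriv, Finset.mul_sum, Finset.mul_sum]
    exact Finset.sum_congr rfl fun i hi => by rw [← mul_assoc, hprop i hi, mul_assoc]
  have hsum : ∑ j ∈ s, y j = ∑ j ∈ s, x j := by
    rw [esymDeriv_self, hEq] at hscale
    exact mul_right_cancel₀ (by positivity) hscale
  intro i hi
  have := hprop i hi
  rw [hsum] at this
  exact mul_left_cancel₀ hsumx.ne' this

end TangentInequality

section NewtonTransform

open Polynomial Matrix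

variable {ι : Type*} [Fintype ι] [DecidableEq ι]

/-- The sum of the principal minors of order `m`, which is the `m`-th elementary symmetric
function of the eigenvalues. -/
def sumMinors (A : Matrix ι ι ℝ) (m : ℕ) : ℝ :=
  ∑ s ∈ Finset.univ.powersetCard m,
    (A.submatrix (Subtype.val : s → ι) (Subtype.val : s → ι)).det

/-- The Newton transformations `T_0 = 1`, `T_{m+1} = σ_{m+1}(A) - A T_m`; the transformation `T_m`
is the gradient of `σ_{m+1}`. -/
def newtonTransform (A : Matrix ι ι ℝ) : ℕ → Matrix ι ι ℝ
  | 0 => 1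
  | m + 1 => sumMinors A (m + 1) • 1 - A * newtonTransform A m

lemma coeff_det_one_add_X_smul (A : Matrix ι ι ℝ) (m : ℕ) :
    (det (1 + (X : ℝ[X]) • A.map C)).coeff m = sumMinors A m :=
  coeff_det_one_add_X_smul_eq_sum_minors A m

lemma neg_one_pow_mul_charpoly_coeff (A : Matrix ι ι ℝ) {m : ℕ} (hm : m ≤ Fintype.card ι) :
    (-1) ^ m * A.charpoly.coeff (Fintype.card ι - m) = sumMinors A m := by
  rw [charpoly_coeff_eq_sum_minors A m hm, ← mul_assoc, ← mul_pow, neg_one_mul, neg_neg, one_pow,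
    one_mul, sumMinors]

lemma sumMinors_zero (A : Matrix ι ι ℝ) : sumMinors A 0 = 1 := by
  simp [sumMinors]

lemma sumMinors_one (A : Matrix ι ι ℝ) : sumMinors A 1 = A.trace := by
  rw [← coeff_det_one_add_X_smul, ← derivative_det_one_add_X_smul, ← coeff_zero_eq_eval_zero,
    coeff_derivative, Nat.cast_zero, zero_add, zero_add, mul_one]

lemma sumMinors_smul (c : ℝ) (A : Matrix ι ι ℝ) (m : ℕ) :
    sumMinors (c • A) m = c ^ m * sumMinors A m := by
  rw [sumMinors, sumMinors, Finset.mul_sum]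
  refine Finset.sum_congr rfl fun s hs => ?_
  rw [← (Finset.mem_powersetCard.1 hs).2, submatrix_smul, Pi.smul_apply, Pi.smul_apply, det_smul,
    Fintype.card_coe]

lemma sumMinors_diagonal (x : ι → ℝ) (m : ℕ) :
    sumMinors (diagonal x) m = esymOn m Finset.univ x := by
  rw [sumMinors, esymOn_eq_sum_prod]
  refine Finset.sum_congr rfl fun s _ => ?_
  rw [submatrix_diagonal _ _ Subtype.val_injective, det_diagonal]
  exact Finset.prod_coe_sort s x

lemma newtonTransform_diagonal (x : ι → ℝ) (m : ℕ) :
    newtonTransform (diagonal x) m = diagonal fun i => esymOn m (Finset.univ.erase i) x := by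
  induction m with
  | zero => simp [newtonTransform]
  | succ m ih =>
    rw [newtonTransform, ih, diagonal_mul_diagonal, sumMinors_diagonal, ← diagonal_one,
      ← diagonal_smul, diagonal_sub]
    congr 1
    funext i
    rw [esymOn_succ_erase m (Finset.mem_univ i) x, Pi.smul_apply, smul_eq_mul, mul_one,
      add_sub_cancel_right]

lemma commute_newtonTransform (A : Matrix ι ι ℝ) (m : ℕ) : Commute A (newtonTransform A m) := by
  induction m with
  | zero => exact Commute.one_right A
  | succ m ih =>
    exact ((Commute.one_right A).smul_right _).sub_right ((Commute.refl A).mul_right ih)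

lemma transpose_newtonTransform {A : Matrix ι ι ℝ} (hA : A.IsSymm) (m : ℕ) :
    (newtonTransform A m)ᵀ = newtonTransform A m := by
  induction m with
  | zero => exact transpose_one
  | succ m ih =>
    rw [newtonTransform, transpose_sub, transpose_smul, transpose_one, transpose_mul, ih, hA.eq,
      (commute_newtonTransform A m).eq]

lemma sumMinors_conj {Q : Matrix ι ι ℝ} (hQ : Qᵀ * Q = 1) (A : Matrix ι ι ℝ) (m : ℕ) :
    sumMinors (Q * A * Qᵀ) m = sumMinors A m := by
  rw [← coeff_det_one_add_X_smul, ← coeff_det_one_add_X_smul, Matrix.map_mul, ← smul_mul,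
    det_one_add_mul_comm, Matrix.mul_smul, ← Matrix.map_mul, ← mul_assoc, hQ, one_mul]

lemma newtonTransform_conj {Q : Matrix ι ι ℝ} (hQ : Qᵀ * Q = 1) (A : Matrix ι ι ℝ) (m : ℕ) :
    newtonTransform (Q * A * Qᵀ) m = Q * newtonTransform A m * Qᵀ := by
  induction m with
  | zero => simp [newtonTransform, mul_eq_one_comm.1 hQ]
  | succ m ih =>
    have hmul : Q * A * Qᵀ * (Q * newtonTransform A m * Qᵀ)
        = Q * (A * newtonTransform A m) * Qᵀ :=
      calc _ = Q * A * (Qᵀ * Q) * newtonTransform A m * Qᵀ := by simp only [mul_assoc]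
        _ = _ := by rw [hQ, mul_one]; simp only [mul_assoc]
    rw [newtonTransform, newtonTransform, ih, sumMinors_conj hQ, hmul, mul_sub, sub_mul,
      Matrix.mul_smul, mul_one, Matrix.smul_mul, mul_eq_one_comm.1 hQ]

lemma coeff_adjugate_one_add_X_smul (A : Matrix ι ι ℝ) (m : ℕ) (i j : ι) :
    (adjugate (1 + (X : ℝ[X]) • A.map C) i j).coeff m = newtonTransform A m i j := by
  have hrec : adjugate (1 + (X : ℝ[X]) • A.map C) = det (1 + (X : ℝ[X]) • A.map C) • 1
      - (X : ℝ[X]) • (A.map C * adjugate (1 + (X : ℝ[X]) • A.map C)) := by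
    rw [← mul_adjugate, add_mul, one_mul, smul_mul, add_sub_cancel_right]
  have hone (p : ℝ[X]) (m : ℕ) (i j : ι) :
      ((p • (1 : Matrix ι ι ℝ[X])) i j).coeff m = (p.coeff m • (1 : Matrix ι ι ℝ)) i j := by
    by_cases hij : i = j <;> simp [hij]
  induction m generalizing i j with
  | zero =>
    rw [hrec, Matrix.sub_apply, coeff_sub, Matrix.smul_apply X, smul_eq_mul, mul_coeff_zero X,
      coeff_X_zero, zero_mul, sub_zero, hone, coeff_det_one_add_X_smul, sumMinors_zero, one_smul,
      newtonTransform]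
  | succ m ih =>
    rw [hrec, Matrix.sub_apply, coeff_sub, Matrix.smul_apply X, smul_eq_mul, coeff_X_mul, hone,
      coeff_det_one_add_X_smul, newtonTransform, Matrix.sub_apply, Matrix.mul_apply,
      Matrix.mul_apply, finsetSum_coeff]
    simp only [Matrix.map_apply, coeff_C_mul, ih]

lemma mapMatrix_eval_one_add_X_smul (A : Matrix ι ι ℝ) (r : ℝ) :
    (evalRingHom r).mapMatrix (1 + (X : ℝ[X]) • A.map C) = 1 + r • A := by
  ext i j
  by_cases hij : i = j <;> simp [hij, mul_comm r]

lemma det_one_add_smul (A : Matrix ι ι ℝ) (r : ℝ) {N : ℕ} (hN : Fintype.card ι ≤ N) :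
    det (1 + r • A) = ∑ j ∈ Finset.range (N + 1), sumMinors A j * r ^ j := by
  have hdeg : (det (1 + (X : ℝ[X]) • A.map C)).natDegree < N + 1 := by
    have := natDegree_det_X_add_C_le A 1
    rw [Matrix.map_one _ C_0 C_1, add_comm] at this
    exact Nat.lt_succ_of_le (this.trans hN)
  rw [← mapMatrix_eval_one_add_X_smul, ← RingHom.map_det, coe_evalRingHom,
    eval_eq_sum_range' hdeg]
  simp only [coeff_det_one_add_X_smul]

/-- Jacobi's formula. -/
lemma hasDerivAt_det {M : ℝ → Matrix ι ι ℝ} {M' : Matrix ι ι ℝ} {t₀ : ℝ}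
    (h : ∀ i j, HasDerivAt (fun t => M t i j) (M' i j) t₀) :
    HasDerivAt (fun t => det (M t)) (trace (adjugate (M t₀) * M')) t₀ := by
  have hleibniz : HasDerivAt (fun t => det (M t))
      (∑ σ : Equiv.Perm ι, ((Equiv.Perm.sign σ : ℤ) : ℝ) *
        ∑ i, (∏ j ∈ Finset.univ.erase i, M t₀ (σ j) j) • M' (σ i) i) t₀ := by
    simp only [det_apply']
    exact HasDerivAt.fun_sum fun σ _ =>
      (HasDerivAt.fun_finsetProd fun i _ => h (σ i) i).const_mul _
  have hcramer : trace (adjugate (M t₀) * M') =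
      ∑ i, ((M t₀).updateCol i fun j => M' j i).det := by
    refine Finset.sum_congr rfl fun i _ => ?_
    rw [← cramer_apply, cramer_eq_adjugate_mulVec]
    rfl
  refine hleibniz.congr_deriv ?_
  simp only [hcramer, det_apply', Finset.mul_sum]
  rw [Finset.sum_comm]
  refine Finset.sum_congr rfl fun i _ => Finset.sum_congr rfl fun σ _ => ?_
  rw [← Finset.mul_prod_erase Finset.univ _ (Finset.mem_univ i), updateCol_self, smul_eq_mul,
    mul_comm (∏ _ ∈ _, _)]
  congr 2
  exact Finset.prod_congr rfl fun j hj => by rw [updateCol_ne (Finset.ne_of_mem_erase hj)]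

lemma differentiableAt_sumMinors {M : ℝ → Matrix ι ι ℝ} {t₀ : ℝ}
    (h : ∀ i j, DifferentiableAt ℝ (fun t => M t i j) t₀) (m : ℕ) :
    DifferentiableAt ℝ (fun t => sumMinors (M t) m) t₀ :=
  DifferentiableAt.fun_sum fun s _ =>
    (hasDerivAt_det (M := fun t => (M t).submatrix (Subtype.val : s → ι) Subtype.val)
      (M' := Matrix.of fun i j => deriv (fun t => M t i j) t₀)
      fun i j => (h i j).hasDerivAt).differentiableAt

-- Both sides are the derivative of `det (1 + r • M t)` at `t₀`, as polynomials in `r`.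
lemma sum_deriv_sumMinors {M : ℝ → Matrix ι ι ℝ} {M' : Matrix ι ι ℝ} {t₀ : ℝ}
    (h : ∀ i j, HasDerivAt (fun t => M t i j) (M' i j) t₀) {N : ℕ} (hN : Fintype.card ι ≤ N) :
    (∑ j ∈ Finset.range (N + 1), C (deriv (fun t => sumMinors (M t) j) t₀) * X ^ j : ℝ[X])
      = X * trace (adjugate (1 + (X : ℝ[X]) • (M t₀).map C) * M'.map C) := by
  refine Polynomial.funext fun r => ?_
  have hexpand : HasDerivAt (fun t => det (1 + r • M t))
      (∑ j ∈ Finset.range (N + 1), deriv (fun t => sumMinors (M t) j) t₀ * r ^ j) t₀ := by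
    simp only [det_one_add_smul _ r hN]
    exact HasDerivAt.fun_sum fun j _ => (differentiableAt_sumMinors
      (fun i j => (h i j).differentiableAt) j).hasDerivAt.mul_const _
  have hjacobi : HasDerivAt (fun t => det (1 + r • M t))
      (trace (adjugate (1 + r • M t₀) * (r • M'))) t₀ :=
    hasDerivAt_det fun i j => by
      simpa using ((h i j).const_mul r).const_add ((1 : Matrix ι ι ℝ) i j)
  have hmap : (evalRingHom r).mapMatrix (M'.map C) = M' := by ext; simp
  have htrace : (trace (adjugate (1 + (X : ℝ[X]) • (M t₀).map C) * M'.map C)).eval r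
      = trace (adjugate (1 + r • M t₀) * M') := by
    rw [← mapMatrix_eval_one_add_X_smul, ← RingHom.map_adjugate, ← coe_evalRingHom,
      AddMonoidHom.map_trace, ← RingHom.mapMatrix_apply, RingHom.map_mul, hmap]
  have heval := hexpand.unique hjacobi
  rw [Matrix.mul_smul, trace_smul, smul_eq_mul] at heval
  simp only [eval_finsetSum, eval_mul, eval_C, eval_pow, eval_X, htrace, heval]

lemma hasDerivAt_sumMinors {M : ℝ → Matrix ι ι ℝ} {M' : Matrix ι ι ℝ} {t₀ : ℝ}
    (h : ∀ i j, HasDerivAt (fun t => M t i j) (M' i j) t₀) (m : ℕ) :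
    HasDerivAt (fun t => sumMinors (M t) (m + 1)) (trace (newtonTransform (M t₀) m * M')) t₀ := by
  have hpoly := sum_deriv_sumMinors h (le_max_left (Fintype.card ι) (m + 1))
  have hcoeff := congrArg (fun p => p.coeff (m + 1)) hpoly
  simp only [coeff_X_mul, finsetSum_coeff, coeff_C_mul, coeff_mul_C, coeff_X_pow, mul_ite, mul_one,
    mul_zero, Finset.sum_ite_eq, Finset.mem_range, trace, diag_apply, Matrix.mul_apply,
    Matrix.map_apply, coeff_adjugate_one_add_X_smul] at hcoeff
  rw [if_pos (Nat.lt_succ_of_le (le_max_right _ _))] at hcoeff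
  refine (differentiableAt_sumMinors (fun i j => (h i j).differentiableAt) _).hasDerivAt.congr_deriv
    ?_
  simp only [hcoeff, trace, diag_apply, Matrix.mul_apply]

lemma trace_newtonTransform_mul_self (A : Matrix ι ι ℝ) (m : ℕ) :
    trace (newtonTransform A m * A) = (m + 1) * sumMinors A (m + 1) := by
  have hnewton := hasDerivAt_sumMinors (M := fun t => t • A) (M' := A) (t₀ := 1)
    (fun i j => by simpa using (hasDerivAt_id (1 : ℝ)).mul_const (A i j)) m
  have hpow : HasDerivAt (fun t : ℝ => sumMinors (t • A) (m + 1))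
      ((m + 1) * sumMinors A (m + 1)) 1 := by
    simp_rw [sumMinors_smul]
    simpa using (hasDerivAt_pow (m + 1) (1 : ℝ)).mul_const (sumMinors A (m + 1))
  simpa using hnewton.unique hpow

end NewtonTransform

section MatrixTangentInequality

open Matrix

variable {ι : Type*} [Fintype ι] [DecidableEq ι]

lemma exists_eq_conj_diagonal {A : Matrix ι ι ℝ} (hA : A.PosSemidef) :
    ∃ (Q : Matrix ι ι ℝ) (x : ι → ℝ), Qᵀ * Q = 1 ∧ 0 ≤ x ∧ A = Q * diagonal x * Qᵀ := by
  refine ⟨hA.1.eigenvectorUnitary, hA.1.eigenvalues,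
    Unitary.coe_star_mul_self hA.1.eigenvectorUnitary, hA.eigenvalues_nonneg, ?_⟩
  have hspec := hA.1.spectral_theorem
  rwa [Unitary.conjStarAlgAut_apply] at hspec

-- Birkhoff's theorem for the doubly stochastic matrix of the squares of the entries.
lemma exists_perm_weights {P : Matrix ι ι ℝ} (hP : Pᵀ * P = 1) :
    ∃ w : Equiv.Perm ι → ℝ, (∀ σ, 0 ≤ w σ) ∧ ∑ σ, w σ = 1 ∧
      ∀ i j, P i j ^ 2 = ∑ σ, if σ i = j then w σ else 0 := by
  have hstoch : (Matrix.of fun i j => P i j ^ 2) ∈ doublyStochastic ℝ ι := by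
    rw [mem_doublyStochastic_iff_sum]
    refine ⟨fun i j => sq_nonneg _, fun i => ?_, fun j => ?_⟩
    · simpa [Matrix.mul_apply, sq] using Matrix.ext_iff.2 (mul_eq_one_comm.1 hP) i i
    · simpa [Matrix.mul_apply, sq] using Matrix.ext_iff.2 hP j j
  obtain ⟨w, hw, hsum, hbirkhoff⟩ := exists_eq_sum_perm_of_mem_doublyStochastic hstoch
  refine ⟨w, hw, hsum, fun i j => ?_⟩
  simpa [Matrix.sum_apply, Equiv.Perm.permMatrix, PEquiv.toMatrix_apply, Equiv.toPEquiv_apply,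
    eq_comm] using (Matrix.ext_iff.2 hbirkhoff i j).symm

lemma trace_newtonTransform_mul_conj {Q R : Matrix ι ι ℝ} (hQ : Qᵀ * Q = 1) (k : ℕ)
    (x y : ι → ℝ) :
    trace (newtonTransform (Q * diagonal x * Qᵀ) k * (R * diagonal y * Rᵀ))
      = ∑ i, ∑ j, esymOn k (Finset.univ.erase i) x * ((Qᵀ * R) i j ^ 2 * y j) := by
  have hcycle (E : Matrix ι ι ℝ) : trace (Q * E * Qᵀ * (R * diagonal y * Rᵀ))
      = trace (E * (Qᵀ * R * diagonal y * (Qᵀ * R)ᵀ)) := by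
    rw [transpose_mul, transpose_transpose, mul_assoc Q, mul_assoc Q, trace_mul_comm]
    simp only [mul_assoc]
  rw [newtonTransform_conj hQ, newtonTransform_diagonal, hcycle]
  refine Finset.sum_congr rfl fun i _ => ?_
  rw [diag_apply, diagonal_mul, Matrix.mul_apply, Finset.mul_sum]
  refine Finset.sum_congr rfl fun j _ => ?_
  rw [mul_diagonal, transpose_apply]
  ring

lemma trace_newtonTransform_mul_conj_eq_sum_perm {Q R : Matrix ι ι ℝ} (hQ : Qᵀ * Q = 1)
    {w : Equiv.Perm ι → ℝ} (hw : ∀ i j, (Qᵀ * R) i j ^ 2 = ∑ σ, if σ i = j then w σ else 0)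
    (k : ℕ) (x y : ι → ℝ) :
    trace (newtonTransform (Q * diagonal x * Qᵀ) k * (R * diagonal y * Rᵀ))
      = ∑ σ, w σ * esymDeriv k Finset.univ x (y ∘ σ) := by
  rw [trace_newtonTransform_mul_conj hQ]
  simp only [hw, esymDeriv, Finset.mul_sum, Function.comp_apply]
  rw [Finset.sum_comm (s := (Finset.univ : Finset (Equiv.Perm ι)))]
  refine Finset.sum_congr rfl fun i _ => ?_
  simp only [Finset.sum_mul, Finset.mul_sum]
  rw [Finset.sum_comm]
  refine Finset.sum_congr rfl fun σ _ => ?_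
  simp only [ite_mul, zero_mul, mul_ite, mul_zero, Finset.sum_ite_eq, Finset.mem_univ, if_true]
  ring

lemma diagonal_mul_eq_mul_diagonal {P : Matrix ι ι ℝ} {x y : ι → ℝ}
    (h : ∀ i j, P i j ≠ 0 → x i = y j) : diagonal x * P = P * diagonal y := by
  ext i j
  rw [diagonal_mul, mul_diagonal]
  by_cases hij : P i j = 0
  · rw [hij, mul_zero, zero_mul]
  · rw [h i j hij, mul_comm]

lemma transpose_mul_mul_self {Q R : Matrix ι ι ℝ} (hQ : Qᵀ * Q = 1) (hR : Rᵀ * R = 1) :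
    (Qᵀ * R)ᵀ * (Qᵀ * R) = 1 := by
  rw [transpose_mul, transpose_transpose, mul_assoc, ← mul_assoc Q, mul_eq_one_comm.1 hQ, one_mul,
    hR]

lemma succ_mul_sumMinors_le_trace {A B : Matrix ι ι ℝ} (hA : A.PosSemidef) (hB : B.PosSemidef)
    {k : ℕ} (hpos : 0 < sumMinors A (k + 1)) (hle : sumMinors A (k + 1) ≤ sumMinors B (k + 1)) :
    (k + 1) * sumMinors A (k + 1) ≤ trace (newtonTransform A k * B) := by
  obtain ⟨Q, x, hQ, hx, rfl⟩ := exists_eq_conj_diagonal hA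
  obtain ⟨R, y, hR, hy, rfl⟩ := exists_eq_conj_diagonal hB
  obtain ⟨w, hw, hsum, hweights⟩ := exists_perm_weights (transpose_mul_mul_self hQ hR)
  simp only [sumMinors_conj hQ, sumMinors_conj hR, sumMinors_diagonal] at hpos hle ⊢
  calc (k + 1) * esymOn (k + 1) Finset.univ x
      = ∑ σ, w σ * ((k + 1) * esymOn (k + 1) Finset.univ x) := by
        rw [← Finset.sum_mul, hsum, one_mul]
    _ ≤ ∑ σ, w σ * esymDeriv k Finset.univ x (y ∘ σ) := by
        refine Finset.sum_le_sum fun σ _ => mul_le_mul_of_nonneg_left ?_ (hw σ)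
        exact succ_mul_esymOn_le_esymDeriv hx (fun i => hy (σ i)) hpos
          (by rwa [esymOn_univ_comp_equiv])
    _ = _ := (trace_newtonTransform_mul_conj_eq_sum_perm hQ hweights k x y).symm

lemma eq_of_trace_newtonTransform_le {A B : Matrix ι ι ℝ} (hA : A.PosSemidef)
    (hB : B.PosSemidef) {k : ℕ} (hk : 1 ≤ k) (hpos : 0 < sumMinors A (k + 1))
    (hle : sumMinors A (k + 1) ≤ sumMinors B (k + 1))
    (htr : trace (newtonTransform A k * B) ≤ (k + 1) * sumMinors A (k + 1)) : A = B := by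
  obtain ⟨Q, x, hQ, hx, rfl⟩ := exists_eq_conj_diagonal hA
  obtain ⟨R, y, hR, hy, rfl⟩ := exists_eq_conj_diagonal hB
  obtain ⟨w, hw, hsum, hweights⟩ := exists_perm_weights (transpose_mul_mul_self hQ hR)
  rw [trace_newtonTransform_mul_conj_eq_sum_perm hQ hweights] at htr
  simp only [sumMinors_conj hQ, sumMinors_conj hR, sumMinors_diagonal] at hpos hle htr
  have hle_perm (σ : Equiv.Perm ι) :
      esymOn (k + 1) Finset.univ x ≤ esymOn (k + 1) Finset.univ (y ∘ σ) := by
    rwa [esymOn_univ_comp_equiv]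
  have hy_perm (σ : Equiv.Perm ι) : 0 ≤ y ∘ σ := fun i => hy (σ i)
  have hterm (σ : Equiv.Perm ι) : w σ * ((k + 1) * esymOn (k + 1) Finset.univ x)
      ≤ w σ * esymDeriv k Finset.univ x (y ∘ σ) :=
    mul_le_mul_of_nonneg_left
      (succ_mul_esymOn_le_esymDeriv hx (hy_perm σ) hpos (hle_perm σ)) (hw σ)
  have hsum_eq : ∑ σ, w σ * ((k + 1) * esymOn (k + 1) Finset.univ x)
      = ∑ σ, w σ * esymDeriv k Finset.univ x (y ∘ σ) := by
    refine (Finset.sum_le_sum fun σ _ => hterm σ).antisymm ?_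
    rwa [← Finset.sum_mul, hsum, one_mul]
  have hperm (σ : Equiv.Perm ι) (hσ : w σ ≠ 0) (i : ι) : x i = y (σ i) :=
    eq_of_esymDeriv_le hk hx (hy_perm σ) hpos (hle_perm σ) (mul_left_cancel₀ hσ
      ((Finset.sum_eq_sum_iff_of_le fun σ _ => hterm σ).1 hsum_eq σ (Finset.mem_univ σ))).ge
      i (Finset.mem_univ i)
  have hentry (i j : ι) (hij : (Qᵀ * R) i j ≠ 0) : x i = y j := by
    obtain ⟨σ, -, hσ⟩ := Finset.exists_ne_zero_of_sum_ne_zero (hweights i j ▸ pow_ne_zero 2 hij)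
    rw [ite_ne_right_iff] at hσ
    exact hσ.1 ▸ hperm σ hσ.2 i
  calc Q * diagonal x * Qᵀ
      = Q * (diagonal x * (Qᵀ * R)) * Rᵀ := by
        simp only [mul_assoc, mul_eq_one_comm.1 hR, mul_one]
    _ = Q * (Qᵀ * R * diagonal y) * Rᵀ := by rw [diagonal_mul_eq_mul_diagonal hentry]
    _ = R * diagonal y * Rᵀ := by
        simp only [← mul_assoc, mul_eq_one_comm.1 hQ, one_mul]

lemma card_filter_eq_zero_le_one {ι : Type*} [Fintype ι] {x u : ι → ℝ}
    (h : ∀ v : ι → ℝ, v ≠ 0 → v ⬝ᵥ u = 0 → 0 < ∑ i, x i * v i ^ 2) :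
    (Finset.univ.filter fun i => x i = 0).card ≤ 1 := by
  classical
  refine Finset.card_le_one.2 fun i hi j hj => by_contra fun hij => ?_
  rw [Finset.mem_filter_univ] at hi hj
  have hsupp (v : ι → ℝ) (hv : ∀ l, l ≠ i → l ≠ j → v l = 0) : ∑ l, x l * v l ^ 2 = 0 := by
    refine Finset.sum_eq_zero fun l _ => ?_
    rcases eq_or_ne l i with rfl | hli
    · rw [hi, zero_mul]
    rcases eq_or_ne l j with rfl | hlj
    · rw [hj, zero_mul]
    · rw [hv l hli hlj, zero_pow two_ne_zero, mul_zero]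
  by_cases hu : u i = 0
  · refine (h (Pi.single i 1) (by simp) (by simp [hu])).ne' (hsupp _ fun l hl _ => ?_)
    simp [hl]
  · refine (h (Pi.single i (u j) - Pi.single j (u i)) (fun h0 => hu ?_) ?_).ne'
      (hsupp _ fun l hl hl' => ?_)
    · simpa [Ne.symm hij] using congrFun h0 j
    · simp [sub_dotProduct, mul_comm]
    · simp [hl, hl']

lemma sumMinors_pos {A : Matrix ι ι ℝ} (hA : A.PosSemidef) {u : ι → ℝ}
    (h : ∀ v : ι → ℝ, v ≠ 0 → v ⬝ᵥ u = 0 → 0 < v ⬝ᵥ (A *ᵥ v)) {k : ℕ}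
    (hk : k + 1 ≤ Fintype.card ι) : 0 < sumMinors A k := by
  obtain ⟨Q, x, hQ, hx, rfl⟩ := exists_eq_conj_diagonal hA
  rw [sumMinors_conj hQ, sumMinors_diagonal]
  have hzero : (Finset.univ.filter fun i => x i = 0).card ≤ 1 := by
    refine card_filter_eq_zero_le_one (u := Qᵀ *ᵥ u) fun v hv hvu => ?_
    have hQv : Qᵀ *ᵥ (Q *ᵥ v) = v := by rw [mulVec_mulVec, hQ, one_mulVec]
    have hdot (y : ι → ℝ) : (Q *ᵥ v) ⬝ᵥ y = v ⬝ᵥ (Qᵀ *ᵥ y) := by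
      rw [dotProduct_mulVec, vecMul_transpose]
    have hquad := h (Q *ᵥ v) (fun h0 => hv (by rw [← hQv, h0, mulVec_zero])) (by rwa [hdot])
    rw [← mulVec_mulVec, ← mulVec_mulVec, hQv, hdot, mulVec_mulVec, hQ, one_mulVec] at hquad
    simpa [dotProduct, mulVec_diagonal, sq, mul_left_comm] using hquad
  refine esymOn_pos_of_subset hx (Finset.filter_subset (fun i => ¬x i = 0) _) ?_ fun i hi =>
    (hx i).lt_of_ne' (Finset.mem_filter.1 hi).2
  have hcard := Finset.card_filter_add_card_filter_not (s := Finset.univ) (fun i => x i = 0)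
  rw [Finset.card_univ] at hcard
  lia

end MatrixTangentInequality

section PartialDerivatives

variable {n : ℕ} {f g : V n → ℝ} {x : V n}

/-- The partial derivative `∂ᵢf`, with the junk value `0` where `f` is not differentiable. -/
def pderiv (i : Fin (n + 1)) (f : V n → ℝ) (x : V n) : ℝ :=
  fderiv ℝ f x (EuclideanSpace.single i 1)

lemma pderiv_congr (h : f =ᶠ[nhds x] g) (i : Fin (n + 1)) : pderiv i f x = pderiv i g x := by
  rw [pderiv, pderiv, h.fderiv_eq]

lemma pderiv_mul (hf : DifferentiableAt ℝ f x) (hg : DifferentiableAt ℝ g x) (i : Fin (n + 1)) :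
    pderiv i (fun y => f y * g y) x = f x * pderiv i g x + g x * pderiv i f x := by
  simp [pderiv, fderiv_fun_mul hf hg]

lemma pderiv_sub (hf : DifferentiableAt ℝ f x) (hg : DifferentiableAt ℝ g x) (i : Fin (n + 1)) :
    pderiv i (fun y => f y - g y) x = pderiv i f x - pderiv i g x := by
  simp [pderiv, fderiv_fun_sub hf hg]

lemma pderiv_sum {ι : Type*} {s : Finset ι} {F : ι → V n → ℝ}
    (hF : ∀ j ∈ s, DifferentiableAt ℝ (F j) x) (i : Fin (n + 1)) :
    pderiv i (fun y => ∑ j ∈ s, F j y) x = ∑ j ∈ s, pderiv i (F j) x := by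
  simp [pderiv, fderiv_fun_sum hF]

lemma contDiffAt_pderiv {k m : WithTop ℕ∞} (hf : ContDiffAt ℝ k f x) (hmk : m + 1 ≤ k)
    (i : Fin (n + 1)) : ContDiffAt ℝ m (pderiv i f) x :=
  (hf.fderiv_right hmk).clm_apply contDiffAt_const

lemma pderiv_pderiv (hf : ContDiffAt ℝ 2 f x) (i j : Fin (n + 1)) :
    pderiv i (pderiv j f) x = hessM n f x i j := by
  have hdiff : DifferentiableAt ℝ (fderiv ℝ f) x :=
    (hf.fderiv_right (m := 1) (by norm_num)).differentiableAt one_ne_zero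
  change fderiv ℝ (fun y => fderiv ℝ f y (EuclideanSpace.single j 1)) x _ = _
  simp [fderiv_clm_apply hdiff (differentiableAt_const _), hessM]

lemma hessM_comm (hf : ContDiffAt ℝ 2 f x) (i j : Fin (n + 1)) :
    hessM n f x i j = hessM n f x j i :=
  hf.isSymmSndFDerivAt (by simp) _ _

/-- The divergence of the vector field with components `Z i`. -/
def divergence (Z : Fin (n + 1) → V n → ℝ) (x : V n) : ℝ := ∑ i, pderiv i (Z i) x

lemma divergence_mul {Z : Fin (n + 1) → V n → ℝ} (hf : DifferentiableAt ℝ f x)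
    (hZ : ∀ i, DifferentiableAt ℝ (Z i) x) :
    divergence (fun i y => f y * Z i y) x
      = f x * divergence Z x + ∑ i, Z i x * pderiv i f x := by
  simp_rw [divergence, pderiv_mul hf (hZ _), Finset.sum_add_distrib, Finset.mul_sum]

lemma divergence_sub {Y Z : Fin (n + 1) → V n → ℝ} (hY : ∀ i, DifferentiableAt ℝ (Y i) x)
    (hZ : ∀ i, DifferentiableAt ℝ (Z i) x) :
    divergence (fun i y => Y i y - Z i y) x = divergence Y x - divergence Z x := by
  simp_rw [divergence, pderiv_sub (hY _) (hZ _), Finset.sum_sub_distrib]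

lemma divergence_sum {ι : Type*} {s : Finset ι} {Z : ι → Fin (n + 1) → V n → ℝ}
    (hZ : ∀ j ∈ s, ∀ i, DifferentiableAt ℝ (Z j i) x) :
    divergence (fun i y => ∑ j ∈ s, Z j i y) x = ∑ j ∈ s, divergence (Z j) x := by
  simp_rw [divergence, pderiv_sum fun j hj => hZ j hj _]
  exact Finset.sum_comm

lemma continuousAt_divergence {Z : Fin (n + 1) → V n → ℝ} (hZ : ∀ i, ContDiffAt ℝ 1 (Z i) x) :
    ContinuousAt (divergence Z) x :=
  tendsto_finsetSum _ fun i _ => (contDiffAt_pderiv (m := 0) (hZ i) (by simp) i).continuousAt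

lemma integrable_pderiv (hf : ContDiff ℝ 1 f) (hs : HasCompactSupport f) (i : Fin (n + 1)) :
    Integrable (pderiv i f) :=
  ((hf.continuous_fderiv one_ne_zero).clm_apply
    continuous_const).integrable_of_hasCompactSupport (hs.fderiv_apply (𝕜 := ℝ) _)

-- Integration by parts against the constant function `1`.
lemma integral_pderiv_eq_zero (hf : ContDiff ℝ 1 f) (hs : HasCompactSupport f)
    (i : Fin (n + 1)) : ∫ x, pderiv i f x = 0 := by
  have hparts := integral_mul_fderiv_eq_neg_fderiv_mul_of_integrable (μ := volume) (f := f)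
    (g := fun _ => (1 : ℝ)) (v := EuclideanSpace.single i 1)
    (by simp only [mul_one]; exact integrable_pderiv hf hs i) (by simp)
    (by simpa using hf.continuous.integrable_of_hasCompactSupport hs)
    (fun x _ => hf.differentiable one_ne_zero x) (fun x _ => differentiableAt_const _)
  simpa [pderiv] using hparts

lemma integral_divergence_eq_zero {Z : Fin (n + 1) → V n → ℝ} (hZ : ∀ i, ContDiff ℝ 1 (Z i))
    (hs : ∀ i, HasCompactSupport (Z i)) : ∫ x, divergence Z x = 0 := by
  unfold divergence
  rw [integral_finsetSum _ fun i _ => integrable_pderiv (hZ i) (hs i) i]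
  exact Finset.sum_eq_zero fun i _ => integral_pderiv_eq_zero (hZ i) (hs i) i

end PartialDerivatives

section ConeGeometry

open Topology

variable {n : ℕ} {c : ℝ}

/-- The concave function `x ↦ xₙ₊₁ - c‖x‖`, which defines the circular cone about the vertical
axis with opening cosine `c`. -/
def coneFn (n : ℕ) (c : ℝ) (x : V n) : ℝ := x (Fin.last n) - c * ‖x‖

/-- The closed circular cone of opening cosine `c`, with its vertex removed. -/
def closedCone (n : ℕ) (c : ℝ) : Set (V n) := {x | x ≠ 0 ∧ 0 ≤ coneFn n c x}

/-- The open circular cone of opening cosine `c`. -/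
def openCone (n : ℕ) (c : ℝ) : Set (V n) := {x | 0 < coneFn n c x}

@[simp] lemma Etop_last : Etop n (Fin.last n) = 1 := by simp [Etop]

@[simp] lemma norm_Etop : ‖Etop n‖ = 1 := by simp [Etop]

@[simp] lemma coneFn_zero : coneFn n c 0 = 0 := by simp [coneFn]

lemma coneFn_smul {l : ℝ} (hl : 0 ≤ l) (x : V n) : coneFn n c (l • x) = l * coneFn n c x := by
  simp [coneFn, norm_smul, abs_of_nonneg hl]
  ring

lemma continuous_coneFn : Continuous (coneFn n c) := by
  unfold coneFn
  fun_prop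

lemma isOpen_openCone : IsOpen (openCone n c) := isOpen_lt continuous_const continuous_coneFn

lemma ne_zero_of_mem_openCone {x : V n} (hx : x ∈ openCone n c) : x ≠ 0 := by
  rintro rfl
  simp [openCone] at hx

lemma openCone_subset_closedCone : openCone n c ⊆ closedCone n c := fun _ hx =>
  ⟨ne_zero_of_mem_openCone hx, le_of_lt hx⟩

lemma concaveOn_coneFn (hc : 0 ≤ c) : ConcaveOn ℝ univ (coneFn n c) :=
  ((EuclideanSpace.proj (𝕜 := ℝ) (Fin.last n)).toLinearMap.concaveOn convex_univ).sub
    (convexOn_univ_norm.smul hc)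

lemma convex_openCone (hc : 0 ≤ c) : Convex ℝ (openCone n c) := by
  simpa [openCone] using (concaveOn_coneFn (n := n) hc).convex_gt 0

lemma coneFn_sub_smul_le (hc : 0 ≤ c) (x : V n) {s : ℝ} (hs : 0 ≤ s) :
    coneFn n c (x - s • Etop n) ≤ coneFn n c x - s * (1 - c) := by
  have hnorm : ‖x‖ ≤ ‖x - s • Etop n‖ + s := by
    simpa [norm_smul, abs_of_nonneg hs] using norm_le_norm_sub_add x (s • Etop n)
  simp only [coneFn, PiLp.sub_apply, PiLp.smul_apply, Etop_last, smul_eq_mul, mul_one]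
  linarith [mul_le_mul_of_nonneg_left hnorm hc]

lemma add_smul_Etop_mem_openCone (hc : c ∈ Ico (0 : ℝ) 1) {x : V n} (hx : 0 ≤ coneFn n c x)
    {s : ℝ} (hs : 0 < s) : x + s • Etop n ∈ openCone n c := by
  have hle := coneFn_sub_smul_le hc.1 (x + s • Etop n) hs.le
  rw [add_sub_cancel_right] at hle
  exact (mul_pos hs (sub_pos.2 hc.2)).trans_le (by linarith)

lemma exists_coneFn_sub_smul_eq_zero (hc : c ∈ Ico (0 : ℝ) 1) {x : V n}
    (hx : 0 ≤ coneFn n c x) :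
    ∃ s, 0 ≤ s ∧ s * (1 - c) ≤ coneFn n c x ∧ coneFn n c (x - s • Etop n) = 0 := by
  have hc1 : 0 < 1 - c := sub_pos.2 hc.2
  set b := coneFn n c x / (1 - c)
  have hb0 : 0 ≤ b := div_nonneg hx hc1.le
  have hbc : b * (1 - c) = coneFn n c x := div_mul_cancel₀ _ hc1.ne'
  have hcont : ContinuousOn (fun s : ℝ => coneFn n c (x - s • Etop n)) (Icc 0 b) :=
    (continuous_coneFn.comp (by fun_prop)).continuousOn
  have hend : coneFn n c (x - b • Etop n) ≤ 0 := by
    simpa [hbc] using coneFn_sub_smul_le hc.1 x hb0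
  obtain ⟨s, hs, hs0⟩ := intermediate_value_Icc' hb0 hcont ⟨hend, by simpa using hx⟩
  exact ⟨s, hs.1, (mul_le_mul_of_nonneg_right hs.2 hc1.le).trans_eq hbc, hs0⟩

lemma hasFDerivAt_norm {x : V n} (hx : x ≠ 0) :
    HasFDerivAt (fun y : V n => ‖y‖) (‖x‖⁻¹ • innerSL ℝ x) x := by
  have hsqrt := (hasStrictFDerivAt_norm_sq x).hasFDerivAt.sqrt (by positivity)
  simp only [Real.sqrt_sq (norm_nonneg _)] at hsqrt
  refine hsqrt.congr_fderiv ?_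
  ext v
  have : ‖x‖ ≠ 0 := norm_ne_zero_iff.2 hx
  simp
  field

lemma hasFDerivAt_coneFn {x : V n} (hx : x ≠ 0) :
    HasFDerivAt (coneFn n c)
      (EuclideanSpace.proj (Fin.last n) - c • (‖x‖⁻¹ • innerSL ℝ x)) x :=
  (EuclideanSpace.proj (𝕜 := ℝ) (Fin.last n)).hasFDerivAt.sub ((hasFDerivAt_norm hx).const_mul c)

lemma contDiffAt_coneFn {m : WithTop ℕ∞} {x : V n} (hx : x ≠ 0) :
    ContDiffAt ℝ m (coneFn n c) x :=
  (EuclideanSpace.proj (𝕜 := ℝ) (Fin.last n)).contDiff.contDiffAt.sub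
    (contDiffAt_const.mul (contDiffAt_norm ℝ hx))

-- Compare with the point where the vertical line through `y` meets the boundary of the cone: its
-- distance to `y` is at most `coneFn n c y / (1 - c)`.
lemma eventually_abs_le_mul_coneFn_of_coneFn_eq_zero (hc : c ∈ Ico (0 : ℝ) 1) {Y : V n → ℝ}
    {x₀ : V n} (hx₀ : x₀ ≠ 0) (hτ : coneFn n c x₀ = 0) (hY : ContDiffAt ℝ 1 Y x₀)
    (hbd : ∀ x ≠ 0, coneFn n c x = 0 → Y x = 0) :
    ∃ K, 0 ≤ K ∧ ∀ᶠ y in 𝓝 x₀, 0 ≤ coneFn n c y → |Y y| ≤ K * coneFn n c y := by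
  have hc1 : 0 < 1 - c := sub_pos.2 hc.2
  obtain ⟨L, t, ht, hL⟩ := hY.exists_lipschitzOnWith
  obtain ⟨ε, hε, hball⟩ := Metric.mem_nhds_iff.1
    (Filter.inter_mem ht (isOpen_ne.mem_nhds hx₀))
  have hsmall : ∀ᶠ y in 𝓝 x₀, ‖y - x₀‖ + coneFn n c y / (1 - c) < ε := by
    have hcont : Continuous fun y => ‖y - x₀‖ + coneFn n c y / (1 - c) :=
      (by fun_prop : Continuous fun y => ‖y - x₀‖).add (continuous_coneFn.div_const _)
    exact hcont.continuousAt.eventually_lt continuousAt_const (by simpa [hτ] using hε)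
  refine ⟨L / (1 - c), by positivity, hsmall.mono fun y hy hy0 => ?_⟩
  obtain ⟨s, hs, hsτ, hzero⟩ := exists_coneFn_sub_smul_eq_zero hc hy0
  have hs' : s ≤ coneFn n c y / (1 - c) := (le_div_iff₀ hc1).2 hsτ
  have hnorm : ‖s • Etop n‖ = s := by simp [norm_smul, abs_of_nonneg hs]
  have hymem : y ∈ Metric.ball x₀ ε := by
    rw [mem_ball_iff_norm]
    linarith [hs.trans hs']
  have hpmem : y - s • Etop n ∈ Metric.ball x₀ ε := by
    rw [mem_ball_iff_norm, sub_right_comm]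
    linarith [norm_sub_le (y - x₀) (s • Etop n)]
  have hlip := hL.norm_sub_le (hball hymem).1 (hball hpmem).1
  rw [hbd _ (hball hpmem).2 hzero, sub_zero, sub_sub_cancel, hnorm] at hlip
  calc |Y y| ≤ L * s := hlip
    _ ≤ L * (coneFn n c y / (1 - c)) := by gcongr
    _ = L / (1 - c) * coneFn n c y := by ring

lemma eventually_abs_le_mul_coneFn_of_coneFn_pos {Y : V n → ℝ} {x₀ : V n}
    (hx₀ : 0 < coneFn n c x₀) (hY : ContinuousAt Y x₀) :
    ∃ K, 0 ≤ K ∧ ∀ᶠ y in 𝓝 x₀, |Y y| ≤ K * coneFn n c y := by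
  refine ⟨(|Y x₀| + 1) / (coneFn n c x₀ / 2), by positivity, ?_⟩
  filter_upwards [hY.abs.eventually_lt continuousAt_const (lt_add_one _),
    continuousAt_const.eventually_lt continuous_coneFn.continuousAt (half_lt_self hx₀)]
    with y hYy hτy
  calc |Y y| ≤ (|Y x₀| + 1) / (coneFn n c x₀ / 2) * (coneFn n c x₀ / 2) := by
        rw [div_mul_cancel₀ _ (by positivity)]; exact hYy.le
    _ ≤ (|Y x₀| + 1) / (coneFn n c x₀ / 2) * coneFn n c y := by gcongr

lemma exists_abs_le_mul_coneFn (hc : c ∈ Ico (0 : ℝ) 1) {Y : V n → ℝ}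
    (hY : ∀ x ∈ closedCone n c, ContDiffAt ℝ 1 Y x)
    (hbd : ∀ x ≠ 0, coneFn n c x = 0 → Y x = 0) {S : Set (V n)} (hS : IsCompact S)
    (hSc : S ⊆ closedCone n c) : ∃ K, 0 ≤ K ∧ ∀ x ∈ S, |Y x| ≤ K * coneFn n c x := by
  suffices h : ∃ K, 0 ≤ K ∧ ∀ x ∈ S, 0 ≤ coneFn n c x → |Y x| ≤ K * coneFn n c x by
    obtain ⟨K, hK, hle⟩ := h
    exact ⟨K, hK, fun x hx => hle x hx (hSc hx).2⟩
  refine hS.induction_on (p := fun T => ∃ K, 0 ≤ K ∧ ∀ x ∈ T, 0 ≤ coneFn n c x →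
    |Y x| ≤ K * coneFn n c x) ⟨0, by simp⟩ ?mono ?union ?nhds
  case mono => exact fun T T' hTT' ⟨K, hK, hle⟩ => ⟨K, hK, fun x hx => hle x (hTT' hx)⟩
  case union =>
    rintro T T' ⟨K, hK, hle⟩ ⟨K', -, hle'⟩
    refine ⟨max K K', hK.trans (le_max_left _ _), fun x hx h0 => ?_⟩
    rcases hx with hx | hx
    · exact (hle x hx h0).trans (mul_le_mul_of_nonneg_right (le_max_left _ _) h0)
    · exact (hle' x hx h0).trans (mul_le_mul_of_nonneg_right (le_max_right _ _) h0)
  case nhds =>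
    intro x hx
    obtain ⟨K, hK, hle⟩ :
        ∃ K, 0 ≤ K ∧ ∀ᶠ y in 𝓝 x, 0 ≤ coneFn n c y → |Y y| ≤ K * coneFn n c y := by
      rcases (hSc hx).2.eq_or_lt with h0 | hpos
      · exact eventually_abs_le_mul_coneFn_of_coneFn_eq_zero hc (hSc hx).1 h0.symm
          (hY x (hSc hx)) hbd
      · obtain ⟨K, hK, hle⟩ :=
          eventually_abs_le_mul_coneFn_of_coneFn_pos hpos (hY x (hSc hx)).continuousAt
        exact ⟨K, hK, hle.mono fun y hy _ => hy⟩
    exact ⟨_, mem_nhdsWithin_of_mem_nhds hle, K, hK, fun y hy => hy⟩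

end ConeGeometry

section ConeDivergence

open Topology Filter

lemma deriv_smoothTransition_eq_zero {t : ℝ} (ht : t < 0 ∨ 1 < t) :
    deriv Real.smoothTransition t = 0 := by
  rcases ht with ht | ht
  · have hzero : Real.smoothTransition =ᶠ[𝓝 t] fun _ => 0 :=
      (gt_mem_nhds ht).mono fun s hs => Real.smoothTransition.zero_of_nonpos (le_of_lt hs)
    rw [hzero.deriv_eq, deriv_const]
  · have hone : Real.smoothTransition =ᶠ[𝓝 t] fun _ => 1 :=
      (lt_mem_nhds ht).mono fun s hs => Real.smoothTransition.one_of_one_le (le_of_lt hs)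
    rw [hone.deriv_eq, deriv_const]

lemma exists_abs_mul_deriv_smoothTransition_le :
    ∃ M, ∀ t : ℝ, |(t + 1) * deriv Real.smoothTransition t| ≤ M := by
  have hcont : Continuous (deriv Real.smoothTransition) :=
    (Real.smoothTransition.contDiff (n := 1)).continuous_deriv le_rfl
  have hsupp : HasCompactSupport (deriv Real.smoothTransition) :=
    HasCompactSupport.intro (isCompact_Icc (a := 0) (b := 1)) fun t ht =>
      deriv_smoothTransition_eq_zero <| by
        rwa [mem_Icc, not_and_or, not_le, not_le] at ht
  exact hsupp.mul_left.exists_bound_of_continuous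
    ((continuous_id.add continuous_const).mul hcont)

variable {n : ℕ} {c ρ t : ℝ} {b : ContDiffBump ρ} {x : V n}

/-- A cutoff function for the cone. The factor `b (‖x‖ ^ 2)` localises in a shell around the vertex
and the other factor vanishes where `coneFn n c ≤ t⁻¹`; it tends to `1` on the open cone as
`t → ∞`. -/
def cutoff (c : ℝ) (b : ContDiffBump ρ) (t : ℝ) (x : V n) : ℝ :=
  b (‖x‖ ^ 2) * Real.smoothTransition (t * coneFn n c x - 1)

lemma cutoff_eventuallyEq_zero (ht : 0 < t) (hx : coneFn n c x ≤ 0) :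
    cutoff c b t =ᶠ[𝓝 x] 0 := by
  have hlt : ∀ᶠ y in 𝓝 x, t * coneFn n c y < 1 :=
    (continuous_coneFn.const_mul t).continuousAt.eventually_lt continuousAt_const
      ((mul_nonpos_of_nonneg_of_nonpos ht.le hx).trans_lt one_pos)
  filter_upwards [hlt] with y hy
  rw [cutoff, Real.smoothTransition.zero_of_nonpos (by linarith), mul_zero, Pi.zero_apply]

lemma contDiffAt_cutoff (hx : x ≠ 0) : ContDiffAt ℝ 1 (cutoff c b t) x :=
  (b.contDiff.contDiffAt.comp x (contDiff_norm_sq ℝ).contDiffAt).mul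
    (Real.smoothTransition.contDiff.contDiffAt.comp x
      ((contDiffAt_const.mul (contDiffAt_coneFn hx)).sub contDiffAt_const))

lemma contDiff_cutoff_mul (ht : 0 < t) {Y : V n → ℝ}
    (hY : ∀ x ∈ openCone n c, ContDiffAt ℝ 1 Y x) :
    ContDiff ℝ 1 fun x => cutoff c b t x * Y x := by
  refine contDiff_iff_contDiffAt.2 fun x => ?_
  by_cases hx : x ∈ openCone n c
  · exact (contDiffAt_cutoff (ne_zero_of_mem_openCone hx)).mul (hY x hx)
  · refine (contDiffAt_const (c := (0 : ℝ))).congr_of_eventuallyEq ?_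
    filter_upwards [cutoff_eventuallyEq_zero ht (not_lt.1 hx)] with y hy
    rw [hy, Pi.zero_apply, zero_mul]

lemma isCompact_norm_sq_preimage_closedBall (ρ r : ℝ) :
    IsCompact {x : V n | ‖x‖ ^ 2 ∈ Metric.closedBall ρ r} := by
  refine (isCompact_closedBall (0 : V n) (1 + (ρ + r))).of_isClosed_subset
    (Metric.isClosed_closedBall.preimage (continuous_norm.pow 2)) fun x hx => ?_
  rw [mem_ofPred_eq, Metric.mem_closedBall, Real.dist_eq, abs_le] at hx
  rw [mem_closedBall_zero_iff]
  nlinarith [sq_nonneg (‖x‖ - 1)]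

lemma hasCompactSupport_bump_norm_sq : HasCompactSupport fun x : V n => b (‖x‖ ^ 2) :=
  HasCompactSupport.intro (isCompact_norm_sq_preimage_closedBall ρ b.rOut) fun _ hx =>
    b.zero_of_le_dist (not_le.1 hx).le

lemma hasCompactSupport_cutoff_mul (Y : V n → ℝ) :
    HasCompactSupport fun x => cutoff c b t x * Y x :=
  (hasCompactSupport_bump_norm_sq.mul_right (f' := fun x =>
    Real.smoothTransition (t * coneFn n c x - 1))).mul_right

-- The radial part of the gradient is not made explicit: it does not contribute to the divergence
-- of a tangential field.
lemma exists_pderiv_cutoff_eq (hx : x ≠ 0) :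
    ∃ a : ℝ, ∀ i, pderiv i (cutoff c b t) x = a * x i +
      if i = Fin.last n then
        b (‖x‖ ^ 2) * (t * deriv Real.smoothTransition (t * coneFn n c x - 1)) else 0 := by
  set s := t * coneFn n c x - 1 with hs
  have hbump : HasFDerivAt (fun y : V n => b (‖y‖ ^ 2))
      (deriv b (‖x‖ ^ 2) • (2 • innerSL ℝ x)) x :=
    ((b.contDiff (n := 1)).differentiable one_ne_zero _).hasDerivAt.comp_hasFDerivAt x
      (hasStrictFDerivAt_norm_sq x).hasFDerivAt
  have hstep : HasFDerivAt (fun y : V n => Real.smoothTransition (t * coneFn n c y - 1))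
      (deriv Real.smoothTransition s •
        (t • (EuclideanSpace.proj (Fin.last n) - c • (‖x‖⁻¹ • innerSL ℝ x)))) x :=
    ((Real.smoothTransition.contDiff (n := 1)).differentiable one_ne_zero
      _).hasDerivAt.comp_hasFDerivAt x (((hasFDerivAt_coneFn hx).const_mul t).sub_const 1)
  refine ⟨2 * deriv b (‖x‖ ^ 2) * Real.smoothTransition s -
    b (‖x‖ ^ 2) * deriv Real.smoothTransition s * t * c * ‖x‖⁻¹, fun i => ?_⟩
  have hcutoff : HasFDerivAt (cutoff c b t) _ x := hbump.mul hstep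
  have hlast : (EuclideanSpace.proj (Fin.last n) : V n →L[ℝ] ℝ) (EuclideanSpace.single i 1) =
      if i = Fin.last n then 1 else 0 := by
    simp [eq_comm]
  rw [pderiv, hcutoff.fderiv]
  simp only [← hs, hlast, EuclideanSpace.inner_single_right, add_apply, smul_apply, sub_apply,
    smul_eq_mul, nsmul_eq_mul, innerSL_apply_apply, conj_trivial, one_mul, Nat.cast_ofNat]
  split_ifs <;> ring

variable {Z : Fin (n + 1) → V n → ℝ}

lemma divergence_cutoff_mul (hx : x ∈ openCone n c) (hZ : ∀ i, DifferentiableAt ℝ (Z i) x)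
    (htan : ∑ i, Z i x * x i = 0) :
    divergence (fun i y => cutoff c b t y * Z i y) x = cutoff c b t x * divergence Z x +
      b (‖x‖ ^ 2) * (t * deriv Real.smoothTransition (t * coneFn n c x - 1)) *
        Z (Fin.last n) x := by
  have hx0 := ne_zero_of_mem_openCone hx
  obtain ⟨a, ha⟩ := exists_pderiv_cutoff_eq (b := b) (t := t) (c := c) hx0
  have hradial : ∑ i, Z i x * (a * x i) = 0 := by
    simp_rw [mul_left_comm _ a, ← Finset.mul_sum, htan, mul_zero]
  rw [divergence_mul ((contDiffAt_cutoff hx0).differentiableAt one_ne_zero) hZ]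
  simp_rw [ha, mul_add, Finset.sum_add_distrib, hradial]
  simp [mul_comm]

lemma tendsto_divergence_cutoff_mul (hx : x ∈ openCone n c)
    (hZ : ∀ i, DifferentiableAt ℝ (Z i) x) (htan : ∑ i, Z i x * x i = 0) :
    Tendsto (fun t => divergence (fun i y => cutoff c b t y * Z i y) x) atTop
      (𝓝 (b (‖x‖ ^ 2) * divergence Z x)) := by
  refine tendsto_const_nhds.congr' ?_
  filter_upwards [(tendsto_id.atTop_mul_const hx).eventually_gt_atTop 2] with t ht
  have hone : 1 < t * coneFn n c x - 1 := by
    rw [id] at ht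
    linarith
  rw [divergence_cutoff_mul hx hZ htan, deriv_smoothTransition_eq_zero (Or.inr hone), cutoff,
    Real.smoothTransition.one_of_one_le hone.le]
  ring

lemma isCompact_shell : IsCompact
    ({x : V n | ‖x‖ ^ 2 ∈ Metric.closedBall ρ b.rOut} ∩ {x | 0 ≤ coneFn n c x}) :=
  (isCompact_norm_sq_preimage_closedBall ρ b.rOut).inter_right
    (isClosed_le continuous_const continuous_coneFn)

lemma shell_subset_closedCone (hρ : b.rOut < ρ) :
    {x : V n | ‖x‖ ^ 2 ∈ Metric.closedBall ρ b.rOut} ∩ {x | 0 ≤ coneFn n c x} ⊆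
      closedCone n c := by
  rintro x ⟨hx, hτ⟩
  refine ⟨?_, hτ⟩
  rintro rfl
  simp [abs_of_pos (b.rOut_pos.trans hρ), hρ.not_ge] at hx

-- The term with the derivative of the cutoff function stays bounded because `Z (Fin.last n)` is
-- of the order of `coneFn n c`.
lemma exists_abs_divergence_cutoff_mul_le (hc : c ∈ Ico (0 : ℝ) 1) (hρ : b.rOut < ρ)
    (hZ : ∀ i, ∀ x ∈ closedCone n c, ContDiffAt ℝ 1 (Z i) x)
    (htan : ∀ x ∈ openCone n c, ∑ i, Z i x * x i = 0)
    (hbd : ∀ x ≠ 0, coneFn n c x = 0 → Z (Fin.last n) x = 0) :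
    ∃ C, ∀ t, ∀ x ∈ openCone n c,
      |divergence (fun i y => cutoff c b t y * Z i y) x| ≤ b (‖x‖ ^ 2) * C := by
  have hshell := shell_subset_closedCone (n := n) (c := c) hρ
  obtain ⟨L, hL⟩ := isCompact_shell.exists_bound_of_continuousOn (f := divergence Z)
    fun x hx => (continuousAt_divergence fun i => hZ i x (hshell hx)).continuousWithinAt
  obtain ⟨K, hK, hle⟩ := exists_abs_le_mul_coneFn hc (hZ _) hbd isCompact_shell hshell
  obtain ⟨M, hM⟩ := exists_abs_mul_deriv_smoothTransition_le
  refine ⟨L + K * M, fun t x hx => ?_⟩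
  rw [divergence_cutoff_mul hx (fun i => (hZ i x (openCone_subset_closedCone hx)).differentiableAt
    one_ne_zero) (htan x hx)]
  by_cases hball : ‖x‖ ^ 2 ∈ Metric.closedBall ρ b.rOut
  case neg => simp [cutoff, b.zero_of_le_dist (not_le.1 hball).le]
  set s := t * coneFn n c x - 1
  have hdiv : |Real.smoothTransition s * divergence Z x| ≤ L := by
    rw [abs_mul, abs_of_nonneg (Real.smoothTransition.nonneg s)]
    exact (mul_le_of_le_one_left (abs_nonneg _) (Real.smoothTransition.le_one s)).trans
      (hL x ⟨hball, (openCone_subset_closedCone hx).2⟩)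
  have hgrad : |t * deriv Real.smoothTransition s * Z (Fin.last n) x| ≤ K * M := by
    rw [abs_mul]
    calc |t * deriv Real.smoothTransition s| * |Z (Fin.last n) x|
        ≤ |t * deriv Real.smoothTransition s| * (K * coneFn n c x) := by
          gcongr
          exact hle x ⟨hball, (openCone_subset_closedCone hx).2⟩
      _ = K * |(s + 1) * deriv Real.smoothTransition s| := by
          rw [sub_add_cancel, mul_right_comm, abs_mul _ (coneFn n c x),
            abs_of_pos (show 0 < coneFn n c x from hx)]
          ring
      _ ≤ K * M := by gcongr; exact hM s
  rw [cutoff, mul_assoc, mul_assoc, ← mul_add, abs_mul, abs_of_nonneg b.nonneg]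
  exact mul_le_mul_of_nonneg_left ((abs_add_le _ _).trans (add_le_add hdiv hgrad)) b.nonneg

lemma setIntegral_divergence_cutoff_mul_eq_zero (ht : 0 < t)
    (hZ : ∀ i, ∀ x ∈ openCone n c, ContDiffAt ℝ 1 (Z i) x) :
    ∫ x in openCone n c, divergence (fun i y => cutoff c b t y * Z i y) x = 0 := by
  rw [setIntegral_eq_integral_of_forall_compl_eq_zero]
  · exact integral_divergence_eq_zero (fun i => contDiff_cutoff_mul ht (hZ i))
      fun i => hasCompactSupport_cutoff_mul (Z i)
  · intro x hx
    refine Finset.sum_eq_zero fun i _ => ?_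
    have hzero : (fun y => cutoff c b t y * Z i y) =ᶠ[𝓝 x] fun _ => 0 := by
      filter_upwards [cutoff_eventuallyEq_zero (b := b) ht (not_lt.1 hx)] with y hy
      rw [hy, Pi.zero_apply, zero_mul]
    simp [pderiv, hzero.fderiv_eq]

lemma continuousOn_bump_mul_divergence
    (hZ : ∀ i, ∀ x ∈ openCone n c, ContDiffAt ℝ 1 (Z i) x) :
    ContinuousOn (fun x => b (‖x‖ ^ 2) * divergence Z x) (openCone n c) := fun x hx =>
  ((b.continuous.comp (continuous_norm.pow 2)).continuousAt.mul
    (continuousAt_divergence fun i => hZ i x hx)).continuousWithinAt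

lemma setIntegral_bump_mul_divergence_eq_zero (hc : c ∈ Ico (0 : ℝ) 1) (hρ : b.rOut < ρ)
    (hZ : ∀ i, ∀ x ∈ closedCone n c, ContDiffAt ℝ 1 (Z i) x)
    (htan : ∀ x ∈ openCone n c, ∑ i, Z i x * x i = 0)
    (hbd : ∀ x ≠ 0, coneFn n c x = 0 → Z (Fin.last n) x = 0) :
    IntegrableOn (fun x => b (‖x‖ ^ 2) * divergence Z x) (openCone n c) ∧
      ∫ x in openCone n c, b (‖x‖ ^ 2) * divergence Z x = 0 := by
  have hmeas : MeasurableSet (openCone n c) := isOpen_openCone.measurableSet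
  have hZ' : ∀ i, ∀ x ∈ openCone n c, ContDiffAt ℝ 1 (Z i) x := fun i x hx =>
    hZ i x (openCone_subset_closedCone hx)
  obtain ⟨C, hC⟩ := exists_abs_divergence_cutoff_mul_le hc hρ hZ htan hbd
  have hlim : ∀ x ∈ openCone n c,
      Tendsto (fun t => divergence (fun i y => cutoff c b t y * Z i y) x) atTop
        (𝓝 (b (‖x‖ ^ 2) * divergence Z x)) := fun x hx =>
    tendsto_divergence_cutoff_mul hx (fun i => (hZ' i x hx).differentiableAt one_ne_zero)
      (htan x hx)
  have hint : IntegrableOn (fun x : V n => b (‖x‖ ^ 2) * C) (openCone n c) :=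
    (((b.continuous.comp (continuous_norm.pow 2)).integrable_of_hasCompactSupport
      hasCompactSupport_bump_norm_sq).mul_const C).integrableOn
  have hcont : ∀ t > 0, Continuous (divergence fun i (y : V n) => cutoff c b t y * Z i y) :=
    fun t ht => continuous_iff_continuousAt.2 fun x =>
      continuousAt_divergence fun i => (contDiff_cutoff_mul ht (hZ' i)).contDiffAt
  have hdom := tendsto_integral_filter_of_dominated_convergence
    (μ := volume.restrict (openCone n c)) (fun x => b (‖x‖ ^ 2) * C)
    ((eventually_gt_atTop 0).mono fun t ht => (hcont t ht).aestronglyMeasurable)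
    (.of_forall fun t => ae_restrict_of_forall_mem hmeas (hC t)) hint
    (ae_restrict_of_forall_mem hmeas hlim)
  refine ⟨hint.mono' ?_ ?_, ?_⟩
  · exact (continuousOn_bump_mul_divergence hZ').aestronglyMeasurable hmeas
  · exact ae_restrict_of_forall_mem hmeas fun x hx =>
      le_of_tendsto' (hlim x hx).norm fun t => hC t x hx
  · refine tendsto_nhds_unique hdom (tendsto_const_nhds.congr' ?_)
    exact (eventually_gt_atTop 0).mono fun t ht =>
      (setIntegral_divergence_cutoff_mul_eq_zero ht hZ').symm

theorem divergence_eq_zero_of_nonneg (hc : c ∈ Ico (0 : ℝ) 1)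
    (hZ : ∀ i, ∀ x ∈ closedCone n c, ContDiffAt ℝ 1 (Z i) x)
    (htan : ∀ x ∈ openCone n c, ∑ i, Z i x * x i = 0)
    (hbd : ∀ x ≠ 0, coneFn n c x = 0 → Z (Fin.last n) x = 0)
    (hdiv : ∀ x ∈ openCone n c, 0 ≤ divergence Z x) (hx : x ∈ openCone n c) :
    divergence Z x = 0 := by
  have hρ : 0 < ‖x‖ ^ 2 := by
    have := ne_zero_of_mem_openCone hx
    positivity
  let b : ContDiffBump (‖x‖ ^ 2) := ⟨‖x‖ ^ 2 / 4, ‖x‖ ^ 2 / 2, by positivity, by linarith⟩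
  obtain ⟨hint, hzero⟩ := setIntegral_bump_mul_divergence_eq_zero (b := b) hc
    (half_lt_self hρ) hZ htan hbd
  have hae := (setIntegral_eq_zero_iff_of_nonneg_ae (ae_restrict_of_forall_mem
    isOpen_openCone.measurableSet fun y hy => mul_nonneg b.nonneg (hdiv y hy)) hint).1 hzero
  have hcont : ContinuousOn (fun y => b (‖y‖ ^ 2) * divergence Z y) (openCone n c) :=
    continuousOn_bump_mul_divergence fun i y hy => hZ i y (openCone_subset_closedCone hy)
  have heq := Measure.eqOn_open_of_ae_eq hae isOpen_openCone hcont continuousOn_const hx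
  have hb : b (‖x‖ ^ 2) = 1 := b.one_of_mem_closedBall (Metric.mem_closedBall_self b.rIn_pos.le)
  simpa [hb] using heq

end ConeDivergence

section HessianCalculus

open Topology Matrix

variable {n : ℕ} {G G₁ G₂ : V n → ℝ} {x : V n}

lemma sum_smul_single (v : V n) : ∑ j, v j • EuclideanSpace.single j (1 : ℝ) = v := by
  simpa using (EuclideanSpace.basisFun (Fin (n + 1)) ℝ).sum_repr v

lemma sum_pderiv_mul (v : V n) : ∑ j, pderiv j G x * v j = fderiv ℝ G x v := by
  conv_rhs => rw [← sum_smul_single v]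
  simp [pderiv, mul_comm]

lemma hessM_mulVec (v : V n) (i : Fin (n + 1)) :
    (hessM n G x *ᵥ v) i = fderiv ℝ (fderiv ℝ G) x (EuclideanSpace.single i 1) v := by
  conv_rhs => rw [← sum_smul_single v]
  simp [mulVec, dotProduct, hessM, mul_comm]

lemma dotProduct_hessM_mulVec (v w : V n) :
    v ⬝ᵥ (hessM n G x *ᵥ w) = hessQ n G x v w := by
  conv_rhs => rw [← sum_smul_single v]
  simp [dotProduct, hessM_mulVec, hessQ]

lemma isSymm_hessM (hG : ContDiffAt ℝ 2 G x) : (hessM n G x).IsSymm :=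
  Matrix.ext fun i j => hessM_comm hG j i

lemma hessM_sub (h₁ : ContDiffAt ℝ 2 G₁ x) (h₂ : ContDiffAt ℝ 2 G₂ x) :
    hessM n (fun y => G₁ y - G₂ y) x = hessM n G₁ x - hessM n G₂ x := by
  have hfderiv : fderiv ℝ (fun y => G₁ y - G₂ y)
      =ᶠ[𝓝 x] fun y => fderiv ℝ G₁ y - fderiv ℝ G₂ y := by
    filter_upwards [h₁.eventually (by simp), h₂.eventually (by simp)] with y hy₁ hy₂
    exact fderiv_fun_sub (hy₁.differentiableAt two_ne_zero) (hy₂.differentiableAt two_ne_zero)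
  have hdiff {F : V n → ℝ} (hF : ContDiffAt ℝ 2 F x) : DifferentiableAt ℝ (fderiv ℝ F) x :=
    (hF.fderiv_right (m := 1) (by norm_num)).differentiableAt one_ne_zero
  ext i j
  rw [hessM, hfderiv.fderiv_eq, fderiv_fun_sub (hdiff h₁) (hdiff h₂)]
  rfl

lemma contDiffAt_hessM (hG : ContDiffAt ℝ 3 G x) (i j : Fin (n + 1)) :
    ContDiffAt ℝ 1 (fun y => hessM n G y i j) x :=
  (((hG.fderiv_right (m := 2) (by norm_num)).fderiv_right (m := 1) (by norm_num)).clm_apply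
    contDiffAt_const).clm_apply contDiffAt_const

lemma pderiv_hessM (hG : ContDiffAt ℝ 3 G x) (i a b : Fin (n + 1)) :
    pderiv i (fun y => hessM n G y a b) x = hessM n (pderiv a G) x i b := by
  have hcomm : (fun y => hessM n G y a b) =ᶠ[𝓝 x] pderiv b (pderiv a G) := by
    filter_upwards [hG.eventually (by simp)] with y hy
    have hy2 := hy.of_le (m := 2) (by norm_num)
    rw [pderiv_pderiv hy2, hessM_comm hy2]
  rw [pderiv_congr hcomm, pderiv_pderiv (contDiffAt_pderiv hG (by norm_num) a)]

lemma pderiv_hessM_swap (hG : ContDiffAt ℝ 3 G x) (i a b : Fin (n + 1)) :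
    pderiv i (fun y => hessM n G y a b) x = pderiv b (fun y => hessM n G y a i) x := by
  rw [pderiv_hessM hG, pderiv_hessM hG,
    hessM_comm (contDiffAt_pderiv hG (by norm_num) a)]

end HessianCalculus

section NewtonTransformFields

open Topology Matrix

variable {n : ℕ} {ι : Type*} [Fintype ι] [DecidableEq ι] {x : V n}

lemma contDiffAt_sumMinors {M : V n → Matrix ι ι ℝ}
    (hM : ∀ i j, ContDiffAt ℝ 1 (fun y => M y i j) x) (m : ℕ) :
    ContDiffAt ℝ 1 (fun y => sumMinors (M y) m) x := by
  simp only [sumMinors, det_apply]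
  exact ContDiffAt.sum fun s _ => ContDiffAt.sum fun σ _ =>
    (contDiffAt_prod fun i _ => hM _ _).const_smul _

lemma contDiffAt_newtonTransform {M : V n → Matrix ι ι ℝ}
    (hM : ∀ i j, ContDiffAt ℝ 1 (fun y => M y i j) x) (m : ℕ) (i j : ι) :
    ContDiffAt ℝ 1 (fun y => newtonTransform (M y) m i j) x := by
  induction m generalizing i with
  | zero => exact contDiffAt_const
  | succ m ih =>
    simp only [newtonTransform, Matrix.sub_apply, Matrix.smul_apply, Matrix.mul_apply,
      smul_eq_mul]
    exact ((contDiffAt_sumMinors hM _).mul contDiffAt_const).sub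
      (ContDiffAt.sum fun a _ => (hM i a).mul (ih a))

lemma pderiv_sumMinors {M : V n → Matrix ι ι ℝ}
    (hM : ∀ i j, ContDiffAt ℝ 1 (fun y => M y i j) x) (m : ℕ) (i : Fin (n + 1)) :
    pderiv i (fun y => sumMinors (M y) (m + 1)) x
      = trace (newtonTransform (M x) m * Matrix.of fun a b => pderiv i (fun y => M y a b) x) := by
  have hline {f : V n → ℝ} (hf : ContDiffAt ℝ 1 f x) :
      HasDerivAt (fun t : ℝ => f (x + t • EuclideanSpace.single i 1)) (pderiv i f x) 0 :=
    (hf.differentiableAt one_ne_zero).hasFDerivAt.hasLineDerivAt _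
  have htrace := hasDerivAt_sumMinors
    (M := fun t : ℝ => M (x + t • EuclideanSpace.single i 1)) (fun a b => hline (hM a b)) m
  rw [zero_smul, add_zero] at htrace
  exact (hline (contDiffAt_sumMinors hM (m + 1))).unique htrace

-- The derivatives of `T_{m+1} = σ_{m+1} - T_m D²G` that do not fall on `T_m`
-- cancel because the third derivatives of `G` are symmetric.
lemma divergence_newtonTransform_hessM {G : V n → ℝ} (hG : ContDiffAt ℝ 3 G x) (m : ℕ)
    (j : Fin (n + 1)) : divergence (fun i y => newtonTransform (hessM n G y) m i j) x = 0 := by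
  have hH := contDiffAt_hessM hG
  induction m generalizing j with
  | zero => simp [divergence, newtonTransform, pderiv]
  | succ m ih =>
    have hT (i a) := (contDiffAt_newtonTransform hH m i a).differentiableAt one_ne_zero
    have hA (a b) := (hH a b).differentiableAt one_ne_zero
    have hσ := (contDiffAt_sumMinors hH (m + 1)).differentiableAt one_ne_zero
    have hrec (y : V n) (i : Fin (n + 1)) : newtonTransform (hessM n G y) (m + 1) i j
        = sumMinors (hessM n G y) (m + 1) * (if i = j then 1 else 0)
          - ∑ a, hessM n G y a j * newtonTransform (hessM n G y) m i a := by
      rw [newtonTransform, (commute_newtonTransform _ m).eq]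
      simp [Matrix.mul_apply, Matrix.one_apply, mul_comm]
    have hconst : divergence (fun i _ => if i = j then (1 : ℝ) else 0) x = 0 := by
      simp [divergence, pderiv]
    have hσj : pderiv j (fun y => sumMinors (hessM n G y) (m + 1)) x
        = ∑ a, ∑ i, newtonTransform (hessM n G x) m i a
          * pderiv j (fun y => hessM n G y a i) x := by
      rw [pderiv_sumMinors hH, Finset.sum_comm]
      simp [trace, Matrix.mul_apply]
    simp_rw [hrec]
    rw [divergence_sub (fun i => hσ.fun_mul (differentiableAt_const _))
        (fun i => DifferentiableAt.fun_sum fun a _ => (hA a j).fun_mul (hT i a)),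
      divergence_mul hσ (fun i => differentiableAt_const _),
      divergence_sum (fun a _ i => (hA a j).fun_mul (hT i a))]
    simp_rw [divergence_mul (hA _ j) fun i => hT i _, ih, pderiv_hessM_swap hG _ _ j]
    simp [hconst, hσj]

end NewtonTransformFields

section ClosedCone

open Topology

variable {n : ℕ} {c : ℝ}

@[simp] lemma inner_Etop (x : V n) : ⟪x, Etop n⟫ = x (Fin.last n) := by
  simp [Etop, EuclideanSpace.inner_single_right]

lemma last_pos_of_mem_closedCone (hc : 0 < c) {x : V n} (hx : x ∈ closedCone n c) :
    0 < x (Fin.last n) :=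
  (mul_pos hc (norm_pos_iff.2 hx.1)).trans_le (sub_nonneg.1 hx.2)

lemma smul_mem_closedCone {x : V n} (hx : x ∈ closedCone n c) {l : ℝ} (hl : 0 < l) :
    l • x ∈ closedCone n c :=
  ⟨smul_ne_zero hl.ne' hx.1, by rw [coneFn_smul hl.le]; exact mul_nonneg hl.le hx.2⟩

lemma convex_closedCone (hc : 0 < c) : Convex ℝ (closedCone n c) := by
  have heq : closedCone n c = {x | 0 ≤ coneFn n c x} ∩ {x | 0 < x (Fin.last n)} := by
    ext x
    refine ⟨fun hx => ⟨hx.2, last_pos_of_mem_closedCone hc hx⟩, fun hx => ⟨?_, hx.1⟩⟩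
    rintro rfl
    simpa using hx.2
  rw [heq]
  refine .inter (by simpa using (concaveOn_coneFn (n := n) hc.le).convex_ge 0) ?_
  exact convex_halfSpace_gt (EuclideanSpace.proj (𝕜 := ℝ) (Fin.last n)).toLinearMap.isLinear 0

lemma Etop_mem_openCone (hc : c < 1) : Etop n ∈ openCone n c := by
  simpa [openCone, coneFn] using hc

lemma closedCone_subset_closure (hc : c ∈ Ico (0 : ℝ) 1) :
    closedCone n c ⊆ closure (openCone n c) := by
  intro x hx
  have hlim : Filter.Tendsto (fun s : ℝ => x + s • Etop n) (𝓝[>] 0) (𝓝 x) := by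
    refine tendsto_nhdsWithin_of_tendsto_nhds ?_
    have hcont : Continuous fun s : ℝ => x + s • Etop n := by fun_prop
    simpa using hcont.tendsto 0
  exact mem_closure_of_tendsto hlim
    (eventually_mem_nhdsWithin.mono fun s hs => add_smul_Etop_mem_openCone hc hx.2 hs)

lemma uniqueDiffWithinAt_closedCone (hc : c ∈ Ico (0 : ℝ) 1) {x : V n}
    (hx : x ∈ closedCone n c) : UniqueDiffWithinAt ℝ (closedCone n c) x :=
  (uniqueDiffWithinAt_convex (convex_openCone hc.1)
    ⟨Etop n, isOpen_openCone.interior_eq.symm ▸ Etop_mem_openCone hc.2⟩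
    (closedCone_subset_closure hc hx)).mono openCone_subset_closedCone

lemma eqOn_closedCone (hc : c ∈ Ico (0 : ℝ) 1) {Y : Type*} [TopologicalSpace Y] [T2Space Y]
    {f g : V n → Y} (hf : ContinuousOn f (closedCone n c)) (hg : ContinuousOn g (closedCone n c))
    (h : EqOn f g (openCone n c)) : EqOn f g (closedCone n c) :=
  h.of_subset_closure hf hg openCone_subset_closedCone (closedCone_subset_closure hc)

lemma zero_ne_last (hn : 1 ≤ n) : (0 : Fin (n + 1)) ≠ Fin.last n :=
  Fin.ne_of_val_ne (Nat.one_le_iff_ne_zero.1 hn).symm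

-- Slide down vertically from a high point above `E₁`.
lemma exists_coneFn_eq_zero_and_apply_zero_eq_one (hc : c ∈ Ico (0 : ℝ) 1) (hn : 1 ≤ n) :
    ∃ x : V n, coneFn n c x = 0 ∧ x 0 = 1 := by
  have hlast := zero_ne_last hn
  have hEtop : Etop n 0 = 0 := by simp [Etop, hlast]
  set r : ℝ := (1 - c)⁻¹
  have hr : 0 < r := inv_pos.2 (sub_pos.2 hc.2)
  have hrc : r * (1 - c) = 1 := inv_mul_cancel₀ (sub_pos.2 hc.2).ne'
  set y : V n := EuclideanSpace.single 0 1 + r • Etop n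
  have hy : 0 ≤ coneFn n c y := by
    have hnorm : ‖y‖ ≤ 1 + r := by
      simpa [norm_smul, abs_of_pos hr] using
        norm_add_le (EuclideanSpace.single 0 1 : V n) (r • Etop n)
    have hylast : y (Fin.last n) = r := by simp [y, hlast.symm]
    rw [coneFn, hylast]
    linarith [mul_le_mul_of_nonneg_left hnorm hc.1, hc.2]
  obtain ⟨s, -, -, hs⟩ := exists_coneFn_sub_smul_eq_zero hc hy
  exact ⟨y - s • Etop n, hs, by simp [y, hEtop]⟩

-- Restricted to the plane spanned by `x` and `v`, and with the height adjusted, this is the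
-- rational parametrization of a conic.
lemma exists_curve_coneFn_eq_zero (hc : c ∈ Ico (0 : ℝ) 1) {x v : V n} (hx : x ≠ 0)
    (hτ : coneFn n c x = 0) (hv : v (Fin.last n) = 0) (hvx : ⟪v, x⟫ = 0) :
    ∃ γ : ℝ → V n, γ 0 = x ∧ HasDerivAt γ v 0 ∧ ∀ t, γ t ≠ 0 ∧ coneFn n c (γ t) = 0 := by
  have hxlast : x (Fin.last n) = c * ‖x‖ := sub_eq_zero.1 hτ
  have hc2 : 0 < 1 - c ^ 2 := sub_pos.2 (pow_lt_one₀ hc.1 hc.2 two_ne_zero)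
  set a : ℝ := ‖v‖ ^ 2 / (4 * ((1 - c ^ 2) * ‖x‖ ^ 2))
  have ha : a * (4 * ((1 - c ^ 2) * ‖x‖ ^ 2)) = ‖v‖ ^ 2 := div_mul_cancel₀ _ (by positivity)
  have hpos (t : ℝ) : 0 < 1 + a * t ^ 2 :=
    add_pos_of_pos_of_nonneg one_pos (mul_nonneg (by positivity) (sq_nonneg t))
  set γ : ℝ → V n := fun t =>
    (1 - a * t ^ 2) • x + t • v + (2 * a * t ^ 2 * x (Fin.last n)) • Etop n with hγ
  have hγlast (t : ℝ) : γ t (Fin.last n) = (1 + a * t ^ 2) * x (Fin.last n) := by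
    simp [hγ, hv]
    ring
  have hγnorm (t : ℝ) : ‖γ t‖ = (1 + a * t ^ 2) * ‖x‖ := by
    refine (sq_eq_sq₀ (norm_nonneg _) (mul_nonneg (hpos t).le (norm_nonneg x))).1 ?_
    rw [hγ, norm_add_sq_real, norm_add_sq_real, inner_add_left]
    simp only [real_inner_smul_left, real_inner_smul_right, norm_smul, norm_Etop, mul_pow,
      inner_Etop, Real.norm_eq_abs, sq_abs, real_inner_comm v x, hvx, hv, hxlast]
    linear_combination -t ^ 2 * ha
  have hγderiv : HasDerivAt γ v 0 := by
    have h₁ : HasDerivAt (fun t : ℝ => 1 - a * t ^ 2) 0 0 := by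
      simpa using ((hasDerivAt_pow 2 (0 : ℝ)).const_mul a).const_sub 1
    have h₂ : HasDerivAt (fun t : ℝ => 2 * a * t ^ 2 * x (Fin.last n)) 0 0 := by
      simpa using ((hasDerivAt_pow 2 (0 : ℝ)).const_mul (2 * a)).mul_const (x (Fin.last n))
    simpa using ((h₁.smul_const x).fun_add ((hasDerivAt_id' (0 : ℝ)).smul_const v)).fun_add
      (h₂.smul_const (Etop n))
  refine ⟨γ, by simp [hγ], hγderiv, fun t => ⟨?_, ?_⟩⟩
  · rw [← norm_pos_iff, hγnorm]
    exact mul_pos (hpos t) (norm_pos_iff.2 hx)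
  · rw [coneFn, hγlast, hγnorm, hxlast]
    ring

end ClosedCone

section HomogeneousFunctions

variable {n : ℕ} {c : ℝ} {F : Type*} [NormedAddCommGroup F] [NormedSpace ℝ F] {f : V n → F}

lemma smul_fderiv_smul_of_homogeneous (hc : c ∈ Ico (0 : ℝ) 1)
    (hf : ∀ x ∈ closedCone n c, DifferentiableAt ℝ f x) {l a : ℝ} (hl : 0 < l)
    (h : ∀ x ∈ closedCone n c, f (l • x) = a • f x) {x : V n} (hx : x ∈ closedCone n c) :
    l • fderiv ℝ f (l • x) = a • fderiv ℝ f x := by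
  have hleft : HasFDerivAt (fun y => f (l • y))
      ((fderiv ℝ f (l • x)).comp (l • ContinuousLinearMap.id ℝ (V n))) x :=
    (hf _ (smul_mem_closedCone hx hl)).hasFDerivAt.comp x ((hasFDerivAt_id x).const_smul l)
  have hright : HasFDerivAt (fun y => a • f y) (a • fderiv ℝ f x) x :=
    (hf x hx).hasFDerivAt.const_smul a
  simpa using (uniqueDiffWithinAt_closedCone hc hx).eq hleft.hasFDerivWithinAt
    (hright.hasFDerivWithinAt.congr h (h x hx))

lemma fderiv_apply_self_of_homogeneous {φ : ℝ → ℝ} {φ' : ℝ} (hφ : HasDerivAt φ φ' 1) {x : V n}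
    (hf : DifferentiableAt ℝ f x) (h : ∀ l > 0, f (l • x) = φ l • f x) :
    fderiv ℝ f x x = φ' • f x := by
  have hray : HasDerivAt (fun l : ℝ => f (l • x)) (fderiv ℝ f x x) 1 := by
    have hline := (hasDerivAt_id (1 : ℝ)).smul_const x
    rw [one_smul] at hline
    exact HasFDerivAt.comp_hasDerivAt_of_eq 1 hf.hasFDerivAt hline (by simp)
  refine hray.unique ((hφ.smul_const (f x)).congr_of_eventuallyEq ?_)
  filter_upwards [lt_mem_nhds one_pos] with l hl using h l hl

end HomogeneousFunctions

section CapillaryConeFunctions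

open Matrix

variable {n : ℕ} {c : ℝ} {G G₁ G₂ : V n → ℝ} {x y : V n}

/-- A capillary function read on the cone: a function which is `C³` near the closed cone, and
positively `1`-homogeneous on it, whose vertical derivative vanishes on the boundary. -/
structure IsCapillaryConeFn (n : ℕ) (c : ℝ) (G : V n → ℝ) : Prop where
  contDiffAt : ∀ x ∈ closedCone n c, ContDiffAt ℝ 3 G x
  homogeneous : ∀ l > 0, ∀ x ∈ closedCone n c, G (l • x) = l * G x
  fderiv_Etop : ∀ x ≠ 0, coneFn n c x = 0 → fderiv ℝ G x (Etop n) = 0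

/-- The convexity condition `τ > 0` on the cone: the Hessian is positive semidefinite, and its
kernel is the radial direction. -/
def HasPosHess (n : ℕ) (c : ℝ) (G : V n → ℝ) : Prop :=
  ∀ x ∈ closedCone n c, (∀ v, 0 ≤ hessQ n G x v v) ∧
    ∀ v ≠ 0, ⟪v, x⟫ = 0 → 0 < hessQ n G x v v

lemma exists_eq_add_deriv_add_mul_deriv {φ φ' φ'' : ℝ → ℝ}
    (hφ : ∀ t ∈ Icc (0 : ℝ) 1, HasDerivAt φ (φ' t) t)
    (hφ' : ∀ t ∈ Icc (0 : ℝ) 1, HasDerivAt φ' (φ'' t) t) :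
    ∃ t ∈ Ioo (0 : ℝ) 1, ∃ s ∈ Ioo (0 : ℝ) 1, φ 1 = φ 0 + φ' 0 + s * φ'' t := by
  obtain ⟨s, hs, hslope⟩ := exists_hasDerivAt_eq_slope φ φ' one_pos
    (fun t ht => (hφ t ht).continuousAt.continuousWithinAt)
    (fun t ht => hφ t (Ioo_subset_Icc_self ht))
  have hsub : Icc 0 s ⊆ Icc (0 : ℝ) 1 := Icc_subset_Icc_right hs.2.le
  obtain ⟨t, ht, hslope'⟩ := exists_hasDerivAt_eq_slope φ' φ'' hs.1
    (fun t ht => (hφ' t (hsub ht)).continuousAt.continuousWithinAt)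
    (fun t ht => hφ' t (hsub (Ioo_subset_Icc_self ht)))
  refine ⟨t, ⟨ht.1, ht.2.trans hs.2⟩, s, hs, ?_⟩
  rw [eq_div_iff (by simpa using hs.1.ne')] at hslope'
  rw [sub_zero, div_one] at hslope
  linarith

lemma exists_eq_add_fderiv_add_hessQ
    (hG : ∀ t ∈ Icc (0 : ℝ) 1, ContDiffAt ℝ 2 G (x + t • (y - x))) :
    ∃ t ∈ Ioo (0 : ℝ) 1, ∃ s ∈ Ioo (0 : ℝ) 1, G y = G x + fderiv ℝ G x (y - x)
      + s * hessQ n G (x + t • (y - x)) (y - x) (y - x) := by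
  have hline (t : ℝ) : HasDerivAt (fun t : ℝ => x + t • (y - x)) (y - x) t := by
    simpa using ((hasDerivAt_id t).smul_const (y - x)).const_add x
  have hderiv : ∀ t ∈ Icc (0 : ℝ) 1, HasDerivAt (fun t : ℝ => G (x + t • (y - x)))
      (fderiv ℝ G (x + t • (y - x)) (y - x)) t := fun t ht =>
    ((hG t ht).differentiableAt two_ne_zero).hasFDerivAt.comp_hasDerivAt t (hline t)
  have hderiv' : ∀ t ∈ Icc (0 : ℝ) 1,
      HasDerivAt (fun t : ℝ => fderiv ℝ G (x + t • (y - x)) (y - x))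
        (hessQ n G (x + t • (y - x)) (y - x) (y - x)) t := fun t ht => by
    have hdiff := ((hG t ht).fderiv_right (m := 1) (by norm_num)).differentiableAt one_ne_zero
    have hcomp := hdiff.hasFDerivAt.comp_hasDerivAt t (hline t)
    have happly := hcomp.clm_apply (hasDerivAt_const t (y - x))
    rw [map_zero, add_zero] at happly
    exact happly
  obtain ⟨t, ht, s, hs, heq⟩ := exists_eq_add_deriv_add_mul_deriv hderiv hderiv'
  exact ⟨t, ht, s, hs, by simpa using heq⟩

namespace IsCapillaryConeFn

lemma differentiableAt (h : IsCapillaryConeFn n c G) (hx : x ∈ closedCone n c) :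
    DifferentiableAt ℝ G x :=
  (h.contDiffAt x hx).differentiableAt three_ne_zero

lemma contDiffAt_two (h : IsCapillaryConeFn n c G) (hx : x ∈ closedCone n c) :
    ContDiffAt ℝ 2 G x :=
  (h.contDiffAt x hx).of_le (by norm_num)

lemma contDiffAt_fderiv (h : IsCapillaryConeFn n c G) (hx : x ∈ closedCone n c) :
    ContDiffAt ℝ 2 (fderiv ℝ G) x :=
  (h.contDiffAt x hx).fderiv_right (by norm_num)

lemma differentiableAt_fderiv (h : IsCapillaryConeFn n c G) (hx : x ∈ closedCone n c) :
    DifferentiableAt ℝ (fderiv ℝ G) x :=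
  (h.contDiffAt_fderiv hx).differentiableAt two_ne_zero

lemma hessQ_comm (h : IsCapillaryConeFn n c G) (hx : x ∈ closedCone n c) (v w : V n) :
    hessQ n G x v w = hessQ n G x w v :=
  (h.contDiffAt_two hx).isSymmSndFDerivAt (by simp) v w

lemma fderiv_smul (h : IsCapillaryConeFn n c G) (hc : c ∈ Ico (0 : ℝ) 1) {l : ℝ} (hl : 0 < l)
    (hx : x ∈ closedCone n c) : fderiv ℝ G (l • x) = fderiv ℝ G x :=
  smul_right_injective _ hl.ne' (smul_fderiv_smul_of_homogeneous hc
    (fun _ => h.differentiableAt) hl (h.homogeneous l hl) hx)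

lemma hessQ_smul (h : IsCapillaryConeFn n c G) (hc : c ∈ Ico (0 : ℝ) 1) {l : ℝ} (hl : 0 < l)
    (hx : x ∈ closedCone n c) (v w : V n) : l * hessQ n G (l • x) v w = hessQ n G x v w := by
  have hhom := smul_fderiv_smul_of_homogeneous hc (fun _ => h.differentiableAt_fderiv) hl
    (a := 1) (fun y hy => by rw [one_smul, h.fderiv_smul hc hl hy]) hx
  simpa [hessQ] using congr($hhom v w)

lemma fderiv_self (h : IsCapillaryConeFn n c G) (hx : x ∈ closedCone n c) :
    fderiv ℝ G x x = G x := by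
  simpa using fderiv_apply_self_of_homogeneous (hasDerivAt_id (1 : ℝ)) (h.differentiableAt hx)
    fun l hl => h.homogeneous l hl x hx

lemma hessQ_self_left (h : IsCapillaryConeFn n c G) (hc : c ∈ Ico (0 : ℝ) 1)
    (hx : x ∈ closedCone n c) (v : V n) : hessQ n G x x v = 0 := by
  have hhom := fderiv_apply_self_of_homogeneous (hasDerivAt_const (1 : ℝ) (1 : ℝ))
    (h.differentiableAt_fderiv hx) fun l hl => by rw [one_smul, h.fderiv_smul hc hl hx]
  simpa [hessQ] using congr($hhom v)

lemma hessQ_Etop_eq_zero (h : IsCapillaryConeFn n c G) (hc : c ∈ Ico (0 : ℝ) 1) (hx : x ≠ 0)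
    (hτ : coneFn n c x = 0) {v : V n} (hv : v (Fin.last n) = 0) (hvx : ⟪v, x⟫ = 0) :
    hessQ n G x v (Etop n) = 0 := by
  obtain ⟨γ, hγ0, hγ, hγτ⟩ := exists_curve_coneFn_eq_zero hc hx hτ hv hvx
  have hconst : (fun t => fderiv ℝ G (γ t) (Etop n)) = fun _ => 0 :=
    funext fun t => h.fderiv_Etop _ (hγτ t).1 (hγτ t).2
  have hcomp : HasDerivAt (fun t => fderiv ℝ G (γ t)) (fderiv ℝ (fderiv ℝ G) x v) 0 :=
    HasFDerivAt.comp_hasDerivAt_of_eq 0 (h.differentiableAt_fderiv ⟨hx, hτ.ge⟩).hasFDerivAt hγ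
      hγ0.symm
  have hderiv := hcomp.clm_apply (hasDerivAt_const 0 (Etop n))
  rw [hconst] at hderiv
  simpa [hessQ] using hderiv.unique (hasDerivAt_const 0 0)

lemma sub (h₁ : IsCapillaryConeFn n c G₁) (h₂ : IsCapillaryConeFn n c G₂) :
    IsCapillaryConeFn n c (fun x => G₁ x - G₂ x) where
  contDiffAt x hx := (h₁.contDiffAt x hx).sub (h₂.contDiffAt x hx)
  homogeneous l hl x hx := by rw [h₁.homogeneous l hl x hx, h₂.homogeneous l hl x hx, mul_sub]
  fderiv_Etop x hx hτ := by
    have hmem : x ∈ closedCone n c := ⟨hx, hτ.ge⟩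
    rw [fderiv_fun_sub (h₁.differentiableAt hmem) (h₂.differentiableAt hmem)]
    simp [h₁.fderiv_Etop x hx hτ, h₂.fderiv_Etop x hx hτ]

end IsCapillaryConeFn

lemma isCapillaryConeFn_inner {a : V n} (ha : a (Fin.last n) = 0) :
    IsCapillaryConeFn n c (fun x => ⟪a, x⟫) where
  contDiffAt _ _ := (innerSL ℝ a).contDiff.contDiffAt
  homogeneous l _ x _ := real_inner_smul_right a x l
  fderiv_Etop x _ _ := by
    rw [show fderiv ℝ (fun x : V n => ⟪a, x⟫) x = innerSL ℝ a from (innerSL ℝ a).fderiv]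
    simp [ha]

lemma hessM_inner (a x : V n) : hessM n (fun x => ⟪a, x⟫) x = 0 := by
  have hconst : fderiv ℝ (fun x : V n => ⟪a, x⟫) = fun _ => innerSL ℝ a :=
    funext fun x => (innerSL ℝ a).fderiv
  ext i j
  simp [hessM, hconst]

namespace IsCapillaryConeFn

lemma hessQ_pos_of_ne_smul (h : IsCapillaryConeFn n c G) (hc : c ∈ Ico (0 : ℝ) 1)
    (hG : HasPosHess n c G) (hx : x ∈ closedCone n c) {v : V n} (hv : ∀ l : ℝ, v ≠ l • x) :
    0 < hessQ n G x v v := by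
  set l := ⟪v, x⟫ / ‖x‖ ^ 2
  have horth : ⟪v - l • x, x⟫ = 0 := by
    have hx0 : ‖x‖ ≠ 0 := norm_ne_zero_iff.2 hx.1
    rw [inner_sub_left, real_inner_smul_left, real_inner_self_eq_norm_sq]
    simp only [l]
    field_simp
    ring
  have hpos := (hG x hx).2 (v - l • x) (sub_ne_zero.2 (hv l)) horth
  have hleft (w : V n) : fderiv ℝ (fderiv ℝ G) x x w = 0 := h.hessQ_self_left hc hx w
  have hright (w : V n) : fderiv ℝ (fderiv ℝ G) x w x = 0 :=
    (h.hessQ_comm hx w x).trans (hleft w)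
  simpa [hessQ, hleft, hright] using hpos

lemma exists_eq_fderiv_add_hessQ (h : IsCapillaryConeFn n c G) (hc : 0 < c)
    (hx : x ∈ closedCone n c) (hy : y ∈ closedCone n c) :
    ∃ t ∈ Ioo (0 : ℝ) 1, x + t • (y - x) ∈ closedCone n c ∧ ∃ s ∈ Ioo (0 : ℝ) 1,
      G y = fderiv ℝ G x y + s * hessQ n G (x + t • (y - x)) (y - x) (y - x) := by
  have hmem (t : ℝ) (ht : t ∈ Icc (0 : ℝ) 1) : x + t • (y - x) ∈ closedCone n c :=
    (convex_closedCone hc).add_smul_sub_mem hx hy ht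
  obtain ⟨t, ht, s, hs, heq⟩ :=
    exists_eq_add_fderiv_add_hessQ fun t ht => h.contDiffAt_two (hmem t ht)
  refine ⟨t, ht, hmem t (Ioo_subset_Icc_self ht), s, hs, ?_⟩
  rw [map_sub, h.fderiv_self hx, add_sub_cancel] at heq
  exact heq

lemma apply_Etop_pos (h : IsCapillaryConeFn n c G) (hc : c ∈ Ioo (0 : ℝ) 1) (hn : 1 ≤ n)
    (hG : HasPosHess n c G) : 0 < G (Etop n) := by
  have hc' := Ioo_subset_Ico_self hc
  obtain ⟨x, hτ, hx0⟩ := exists_coneFn_eq_zero_and_apply_zero_eq_one hc' hn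
  have hx : x ≠ 0 := by
    rintro rfl
    simp at hx0
  obtain ⟨t, -, hmem, s, hs, heq⟩ := h.exists_eq_fderiv_add_hessQ hc.1 ⟨hx, hτ.ge⟩
    (openCone_subset_closedCone (Etop_mem_openCone hc.2))
  rw [h.fderiv_Etop x hx hτ, zero_add] at heq
  rw [heq]
  refine mul_pos hs.1 (h.hessQ_pos_of_ne_smul hc' hG hmem fun l hl => ?_)
  have hfirst := congr($hl 0)
  have hlast := congr($hl (Fin.last n))
  have hE0 : Etop n 0 = 0 := by simp [Etop, zero_ne_last hn]
  simp only [PiLp.add_apply, PiLp.sub_apply, PiLp.smul_apply, smul_eq_mul, Etop_last, hx0,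
    hE0] at hfirst hlast
  have hl0 : l = 0 := by linear_combination (x (Fin.last n) - 1) * hfirst - hlast
  rw [hl0] at hfirst
  norm_num at hfirst

lemma exists_forall_inner_lt (h : IsCapillaryConeFn n c G) (hc : c ∈ Ioo (0 : ℝ) 1) (hn : 1 ≤ n)
    (hG : HasPosHess n c G) :
    ∃ a : V n, a (Fin.last n) = 0 ∧ ∀ x ∈ closedCone n c, ⟪a, x⟫ < G x := by
  have hE := openCone_subset_closedCone (Etop_mem_openCone (n := n) hc.2)
  set g : V n := (InnerProductSpace.toDual ℝ (V n)).symm (fderiv ℝ G (Etop n))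
  have hinner (v : V n) : ⟪g, v⟫ = fderiv ℝ G (Etop n) v :=
    InnerProductSpace.toDual_symm_apply
  have hlast : g (Fin.last n) = G (Etop n) := by
    rw [← inner_Etop, hinner, h.fderiv_self hE]
  refine ⟨g - G (Etop n) • Etop n, by simp [hlast], fun x hx => ?_⟩
  obtain ⟨t, -, hmem, s, hs, heq⟩ := h.exists_eq_fderiv_add_hessQ hc.1 hE hx
  have hvert : 0 < G (Etop n) * x (Fin.last n) :=
    mul_pos (h.apply_Etop_pos hc hn hG) (last_pos_of_mem_closedCone hc.1 hx)
  have hhess := mul_nonneg hs.1.le ((hG _ hmem).1 (x - Etop n))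
  rw [inner_sub_left, real_inner_smul_left, hinner, real_inner_comm, inner_Etop]
  linarith

lemma posSemidef_hessM (h : IsCapillaryConeFn n c G) (hG : HasPosHess n c G)
    (hx : x ∈ closedCone n c) : (hessM n G x).PosSemidef := by
  refine PosSemidef.of_dotProduct_mulVec_nonneg
    (isHermitian_iff_isSymm.2 (isSymm_hessM (h.contDiffAt_two hx))) fun v => ?_
  rw [star_trivial]
  exact ((hG x hx).1 (WithLp.toLp 2 v)).trans_eq (dotProduct_hessM_mulVec _ _).symm

lemma sumMinors_hessM_pos (h : IsCapillaryConeFn n c G) (hG : HasPosHess n c G)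
    (hx : x ∈ closedCone n c) {k : ℕ} (hk : k ≤ n) : 0 < sumMinors (hessM n G x) k := by
  refine sumMinors_pos (h.posSemidef_hessM hG hx) (u := x) (fun v hv hvx => ?_) (by simpa using hk)
  have hpos := (hG x hx).2 (WithLp.toLp 2 v) (by simpa using hv)
    (by simpa [EuclideanSpace.inner_eq_star_dotProduct, dotProduct_comm] using hvx)
  rwa [← dotProduct_hessM_mulVec] at hpos

end IsCapillaryConeFn

end CapillaryConeFunctions

section NewtonFields

open Matrix

variable {n : ℕ} {c : ℝ} {G G₁ G₂ : V n → ℝ} {x : V n}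

lemma newtonTransform_mulVec_mem {ι : Type*} [Fintype ι] [DecidableEq ι] {A : Matrix ι ι ℝ}
    {S : Submodule ℝ (ι → ℝ)} (hA : ∀ v ∈ S, A *ᵥ v ∈ S) (m : ℕ) {v : ι → ℝ} (hv : v ∈ S) :
    newtonTransform A m *ᵥ v ∈ S := by
  induction m with
  | zero => simpa [newtonTransform] using hv
  | succ m ih =>
    rw [newtonTransform, sub_mulVec, smul_mulVec, one_mulVec, ← mulVec_mulVec]
    exact S.sub_mem (S.smul_mem _ hv) (hA _ ih)

/-- The orthogonal complement of the radial direction `x`, in coordinates. -/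
def radialPerp (x : V n) : Submodule ℝ (Fin (n + 1) → ℝ) where
  carrier := {v | v ⬝ᵥ x.ofLp = 0}
  zero_mem' := zero_dotProduct _
  add_mem' {v w} hv hw := by
    rw [mem_ofPred_eq] at hv hw ⊢
    rw [add_dotProduct, hv, hw, add_zero]
  smul_mem' l v hv := by
    rw [mem_ofPred_eq] at hv ⊢
    rw [smul_dotProduct, hv, smul_zero]

lemma mem_radialPerp {v : Fin (n + 1) → ℝ} : v ∈ radialPerp x ↔ v ⬝ᵥ x.ofLp = 0 := Iff.rfl

/-- The components of the vector field `G₁ ∇G₂ - G₂ ∇G₁`. -/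
def crossGrad (G₁ G₂ : V n → ℝ) (j : Fin (n + 1)) (x : V n) : ℝ :=
  G₁ x * pderiv j G₂ x - G₂ x * pderiv j G₁ x

/-- The components of the vector field `T (G₁ ∇G₂ - G₂ ∇G₁)`, where `T` is the `m`-th Newton
transformation of `D²G`. -/
def newtonField (G G₁ G₂ : V n → ℝ) (m : ℕ) (i : Fin (n + 1)) (x : V n) : ℝ :=
  ∑ j, newtonTransform (hessM n G x) m i j * crossGrad G₁ G₂ j x

lemma contDiffAt_crossGrad (h₁ : ContDiffAt ℝ 2 G₁ x) (h₂ : ContDiffAt ℝ 2 G₂ x)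
    (j : Fin (n + 1)) : ContDiffAt ℝ 1 (crossGrad G₁ G₂ j) x :=
  ((h₁.of_le (by norm_num)).mul (contDiffAt_pderiv h₂ (by norm_num) j)).sub
    ((h₂.of_le (by norm_num)).mul (contDiffAt_pderiv h₁ (by norm_num) j))

lemma contDiffAt_newtonField (hG : ContDiffAt ℝ 3 G x) (h₁ : ContDiffAt ℝ 2 G₁ x)
    (h₂ : ContDiffAt ℝ 2 G₂ x) (m : ℕ) (i : Fin (n + 1)) :
    ContDiffAt ℝ 1 (newtonField G G₁ G₂ m i) x :=
  ContDiffAt.sum fun j _ => (contDiffAt_newtonTransform (contDiffAt_hessM hG) m i j).mul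
    (contDiffAt_crossGrad h₁ h₂ j)

lemma pderiv_crossGrad (h₁ : ContDiffAt ℝ 2 G₁ x) (h₂ : ContDiffAt ℝ 2 G₂ x)
    (i j : Fin (n + 1)) :
    pderiv i (crossGrad G₁ G₂ j) x = G₁ x * hessM n G₂ x i j - G₂ x * hessM n G₁ x i j
      + (pderiv i G₁ x * pderiv j G₂ x - pderiv i G₂ x * pderiv j G₁ x) := by
  have hd₁ := h₁.differentiableAt two_ne_zero
  have hd₂ := h₂.differentiableAt two_ne_zero
  have hdp₁ := (contDiffAt_pderiv (m := 1) h₁ (by norm_num) j).differentiableAt one_ne_zero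
  have hdp₂ := (contDiffAt_pderiv (m := 1) h₂ (by norm_num) j).differentiableAt one_ne_zero
  unfold crossGrad
  rw [pderiv_sub (hd₁.fun_mul hdp₂) (hd₂.fun_mul hdp₁), pderiv_mul hd₁ hdp₂, pderiv_mul hd₂ hdp₁,
    pderiv_pderiv h₁, pderiv_pderiv h₂]
  ring

lemma divergence_newtonField (hG : ContDiffAt ℝ 3 G x) (h₁ : ContDiffAt ℝ 2 G₁ x)
    (h₂ : ContDiffAt ℝ 2 G₂ x) (m : ℕ) :
    divergence (newtonField G G₁ G₂ m) x
      = G₁ x * (newtonTransform (hessM n G x) m * hessM n G₂ x).trace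
        - G₂ x * (newtonTransform (hessM n G x) m * hessM n G₁ x).trace := by
  set T := newtonTransform (hessM n G x) m with hT
  have hsymm (i j) : T i j = T j i := by
    conv_rhs => rw [hT, ← transpose_newtonTransform (isSymm_hessM (hG.of_le (by norm_num))) m]
    rfl
  have hcross (j) := (contDiffAt_crossGrad h₁ h₂ j).differentiableAt one_ne_zero
  have hnewton (i j) := (contDiffAt_newtonTransform (contDiffAt_hessM hG) m i
    j).differentiableAt one_ne_zero
  have hleibniz : divergence (newtonField G G₁ G₂ m) x
      = ∑ j, ∑ i, T i j * pderiv i (crossGrad G₁ G₂ j) x := by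
    unfold newtonField
    rw [divergence_sum fun j _ i => (hnewton i j).fun_mul (hcross j)]
    refine Finset.sum_congr rfl fun j _ => ?_
    simp_rw [mul_comm _ (crossGrad G₁ G₂ j _)]
    rw [divergence_mul (hcross j) fun i => hnewton i j, divergence_newtonTransform_hessM hG,
      mul_zero, zero_add]
  have hantisymm : ∑ j, ∑ i, T i j * (pderiv i G₁ x * pderiv j G₂ x)
      = ∑ j, ∑ i, T i j * (pderiv i G₂ x * pderiv j G₁ x) := by
    rw [Finset.sum_comm]
    refine Finset.sum_congr rfl fun i _ => Finset.sum_congr rfl fun j _ => ?_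
    rw [hsymm i j, mul_comm (pderiv i G₁ x)]
  simp_rw [hleibniz, pderiv_crossGrad h₁ h₂, mul_add, mul_sub, Finset.sum_add_distrib,
    Finset.sum_sub_distrib]
  rw [hantisymm, sub_self, add_zero]
  simp only [trace, diag, mul_apply, Finset.mul_sum]
  congr 1 <;> refine Finset.sum_congr rfl fun j _ => Finset.sum_congr rfl fun i _ => ?_
  · rw [hsymm, hessM_comm h₂, mul_left_comm]
  · rw [hsymm, hessM_comm h₁, mul_left_comm]

namespace IsCapillaryConeFn

lemma hessM_mulVec_mem_radialPerp (h : IsCapillaryConeFn n c G) (hc : c ∈ Ico (0 : ℝ) 1)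
    (hx : x ∈ closedCone n c) (v : Fin (n + 1) → ℝ) : hessM n G x *ᵥ v ∈ radialPerp x := by
  rw [mem_radialPerp, dotProduct_comm]
  exact (dotProduct_hessM_mulVec x (WithLp.toLp 2 v)).trans (h.hessQ_self_left hc hx _)

lemma hessM_mulVec_last (h : IsCapillaryConeFn n c G) (hc : c ∈ Ico (0 : ℝ) 1) (hx : x ≠ 0)
    (hτ : coneFn n c x = 0) {v : Fin (n + 1) → ℝ} (hv : v ∈ radialPerp x)
    (hlast : v (Fin.last n) = 0) : (hessM n G x *ᵥ v) (Fin.last n) = 0 := by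
  have horth : ⟪WithLp.toLp 2 v, x⟫ = 0 := by
    simpa [EuclideanSpace.inner_eq_star_dotProduct, dotProduct_comm] using mem_radialPerp.1 hv
  have hzero := h.hessQ_Etop_eq_zero hc hx hτ (v := WithLp.toLp 2 v) hlast horth
  rw [h.hessQ_comm ⟨hx, hτ.ge⟩] at hzero
  exact (hessM_mulVec (WithLp.toLp 2 v) _).trans hzero

lemma crossGrad_mem_radialPerp (h₁ : IsCapillaryConeFn n c G₁) (h₂ : IsCapillaryConeFn n c G₂)
    (hx : x ∈ closedCone n c) : (fun j => crossGrad G₁ G₂ j x) ∈ radialPerp x := by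
  simp only [mem_radialPerp, dotProduct, crossGrad, sub_mul, mul_assoc, Finset.sum_sub_distrib,
    ← Finset.mul_sum, sum_pderiv_mul, h₁.fderiv_self hx, h₂.fderiv_self hx]
  ring

lemma sum_newtonField_mul_self (h : IsCapillaryConeFn n c G) (h₁ : IsCapillaryConeFn n c G₁)
    (h₂ : IsCapillaryConeFn n c G₂) (hc : c ∈ Ico (0 : ℝ) 1) (m : ℕ) (hx : x ∈ closedCone n c) :
    ∑ i, newtonField G G₁ G₂ m i x * x i = 0 :=
  mem_radialPerp.1 (newtonTransform_mulVec_mem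
    (fun v _ => h.hessM_mulVec_mem_radialPerp hc hx v) m (h₁.crossGrad_mem_radialPerp h₂ hx))

lemma newtonField_last (h : IsCapillaryConeFn n c G) (h₁ : IsCapillaryConeFn n c G₁)
    (h₂ : IsCapillaryConeFn n c G₂) (hc : c ∈ Ico (0 : ℝ) 1) (m : ℕ) (hx : x ≠ 0)
    (hτ : coneFn n c x = 0) : newtonField G G₁ G₂ m (Fin.last n) x = 0 := by
  have hmem : x ∈ closedCone n c := ⟨hx, hτ.ge⟩
  have hcross : crossGrad G₁ G₂ (Fin.last n) x = 0 := by
    have hG₁ : pderiv (Fin.last n) G₁ x = 0 := h₁.fderiv_Etop x hx hτ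
    have hG₂ : pderiv (Fin.last n) G₂ x = 0 := h₂.fderiv_Etop x hx hτ
    rw [crossGrad, hG₁, hG₂, mul_zero, mul_zero, sub_zero]
  let S : Submodule ℝ (Fin (n + 1) → ℝ) :=
    radialPerp x ⊓ LinearMap.ker (LinearMap.proj (Fin.last n))
  have hinv : ∀ v ∈ S, hessM n G x *ᵥ v ∈ S := fun v hv =>
    ⟨h.hessM_mulVec_mem_radialPerp hc hmem v, h.hessM_mulVec_last hc hx hτ hv.1 hv.2⟩
  exact (newtonTransform_mulVec_mem hinv m ⟨h₁.crossGrad_mem_radialPerp h₂ hmem, hcross⟩).2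

end IsCapillaryConeFn

end NewtonFields

section HessianUniqueness

open Matrix

variable {n : ℕ} {c : ℝ} {G G₁ G₂ : V n → ℝ} {x : V n}

lemma divergence_newtonField_sub (h₁ : ContDiffAt ℝ 3 G₁ x) (h₂ : ContDiffAt ℝ 3 G₂ x) {m : ℕ}
    (heq : sumMinors (hessM n G₁ x) (m + 1) = sumMinors (hessM n G₂ x) (m + 1)) :
    divergence (fun i y => newtonField G₁ G₁ G₂ m i y - newtonField G₂ G₁ G₂ m i y) x
      = G₁ x * ((newtonTransform (hessM n G₁ x) m * hessM n G₂ x).trace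
          - (m + 1) * sumMinors (hessM n G₁ x) (m + 1))
        + G₂ x * ((newtonTransform (hessM n G₂ x) m * hessM n G₁ x).trace
          - (m + 1) * sumMinors (hessM n G₂ x) (m + 1)) := by
  have h₁' : ContDiffAt ℝ 2 G₁ x := h₁.of_le (by norm_num)
  have h₂' : ContDiffAt ℝ 2 G₂ x := h₂.of_le (by norm_num)
  rw [divergence_sub
      (fun i => (contDiffAt_newtonField h₁ h₁' h₂' m i).differentiableAt one_ne_zero)
      (fun i => (contDiffAt_newtonField h₂ h₁' h₂' m i).differentiableAt one_ne_zero),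
    divergence_newtonField h₁ h₁' h₂', divergence_newtonField h₂ h₁' h₂',
    trace_newtonTransform_mul_self, trace_newtonTransform_mul_self, heq]
  ring

lemma divergence_hessM_of_trace_eq_zero (h : ContDiffAt ℝ 3 G x)
    (htrace : ∀ᶠ y in nhds x, (hessM n G y).trace = 0) (j : Fin (n + 1)) :
    divergence (fun i y => hessM n G y i j) x = 0 := by
  have hdiff (i) := (contDiffAt_hessM h i i).differentiableAt one_ne_zero
  calc ∑ i, pderiv i (fun y => hessM n G y i j) x
      = ∑ i, pderiv j (fun y => hessM n G y i i) x :=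
        Finset.sum_congr rfl fun i _ => pderiv_hessM_swap h i i j
    _ = pderiv j (fun y => (hessM n G y).trace) x :=
        (pderiv_sum (fun i _ => hdiff i) _).symm
    _ = 0 := by
        rw [pderiv_congr (g := fun _ => 0) htrace]
        simp [pderiv]

namespace IsCapillaryConeFn

theorem hessM_eq_of_sumMinors_eq (h₁ : IsCapillaryConeFn n c G₁) (h₂ : IsCapillaryConeFn n c G₂)
    (hc : c ∈ Ico (0 : ℝ) 1) (hG₁ : HasPosHess n c G₁) (hG₂ : HasPosHess n c G₂)
    (hpos₁ : ∀ x ∈ openCone n c, 0 < G₁ x) (hpos₂ : ∀ x ∈ openCone n c, 0 < G₂ x) {m : ℕ}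
    (hm : 1 ≤ m) (hmn : m + 1 ≤ n)
    (heq : ∀ x ∈ openCone n c,
      sumMinors (hessM n G₁ x) (m + 1) = sumMinors (hessM n G₂ x) (m + 1))
    (hx : x ∈ openCone n c) : hessM n G₁ x = hessM n G₂ x := by
  have hmem : ∀ y ∈ openCone n c, y ∈ closedCone n c := fun y hy => openCone_subset_closedCone hy
  have hdiv : ∀ y ∈ openCone n c, _ := fun y hy => divergence_newtonField_sub
    (h₁.contDiffAt y (hmem y hy)) (h₂.contDiffAt y (hmem y hy)) (heq y hy)
  have hnonneg₁ (y) (hy : y ∈ openCone n c) :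
      0 ≤ G₁ y * ((newtonTransform (hessM n G₁ y) m * hessM n G₂ y).trace
        - (m + 1) * sumMinors (hessM n G₁ y) (m + 1)) :=
    mul_nonneg (hpos₁ y hy).le (sub_nonneg.2 (succ_mul_sumMinors_le_trace
      (h₁.posSemidef_hessM hG₁ (hmem y hy)) (h₂.posSemidef_hessM hG₂ (hmem y hy))
      (h₁.sumMinors_hessM_pos hG₁ (hmem y hy) hmn) (heq y hy).le))
  have hnonneg₂ (y) (hy : y ∈ openCone n c) :
      0 ≤ G₂ y * ((newtonTransform (hessM n G₂ y) m * hessM n G₁ y).trace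
        - (m + 1) * sumMinors (hessM n G₂ y) (m + 1)) :=
    mul_nonneg (hpos₂ y hy).le (sub_nonneg.2 (succ_mul_sumMinors_le_trace
      (h₂.posSemidef_hessM hG₂ (hmem y hy)) (h₁.posSemidef_hessM hG₁ (hmem y hy))
      (h₂.sumMinors_hessM_pos hG₂ (hmem y hy) hmn) (heq y hy).ge))
  have hzero := divergence_eq_zero_of_nonneg hc
    (fun i y hy => (contDiffAt_newtonField (h₁.contDiffAt y hy) (h₁.contDiffAt_two hy)
      (h₂.contDiffAt_two hy) m i).sub (contDiffAt_newtonField (h₂.contDiffAt y hy)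
      (h₁.contDiffAt_two hy) (h₂.contDiffAt_two hy) m i))
    (fun y hy => by
      simp only [sub_mul, Finset.sum_sub_distrib]
      rw [h₁.sum_newtonField_mul_self h₁ h₂ hc m (hmem y hy),
        h₂.sum_newtonField_mul_self h₁ h₂ hc m (hmem y hy), sub_zero])
    (fun y hy hτ => by
      rw [h₁.newtonField_last h₁ h₂ hc m hy hτ, h₂.newtonField_last h₁ h₂ hc m hy hτ, sub_zero])
    (fun y hy => (add_nonneg (hnonneg₁ y hy) (hnonneg₂ y hy)).trans_eq (hdiv y hy).symm) hx
  rw [hdiv x hx, add_eq_zero_iff_of_nonneg (hnonneg₁ x hx) (hnonneg₂ x hx)] at hzero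
  have htrace := (mul_eq_zero.1 hzero.1).resolve_left (hpos₁ x hx).ne'
  exact eq_of_trace_newtonTransform_le (h₁.posSemidef_hessM hG₁ (hmem x hx))
    (h₂.posSemidef_hessM hG₂ (hmem x hx)) hm (h₁.sumMinors_hessM_pos hG₁ (hmem x hx) hmn)
    (heq x hx).le (sub_eq_zero.1 htrace).le

theorem hessM_last_eq_zero_of_trace_eq_zero (h : IsCapillaryConeFn n c G)
    (hc : c ∈ Ico (0 : ℝ) 1) (htrace : ∀ x ∈ openCone n c, (hessM n G x).trace = 0)
    (hx : x ∈ openCone n c) (i : Fin (n + 1)) : hessM n G x i (Fin.last n) = 0 := by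
  have hmem : ∀ y ∈ openCone n c, y ∈ closedCone n c := fun y hy => openCone_subset_closedCone hy
  have hW : ∀ y ∈ closedCone n c, ContDiffAt ℝ 1 (pderiv (Fin.last n) G) y := fun y hy =>
    contDiffAt_pderiv (h.contDiffAt_two hy) (by norm_num) _
  have hdiv : ∀ y ∈ openCone n c,
      divergence (fun i y => pderiv (Fin.last n) G y * hessM n G y i (Fin.last n)) y
        = ∑ i, hessM n G y i (Fin.last n) ^ 2 := fun y hy => by
    have hG := h.contDiffAt y (hmem y hy)
    rw [divergence_mul ((hW y (hmem y hy)).differentiableAt one_ne_zero)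
        fun i => (contDiffAt_hessM hG i _).differentiableAt one_ne_zero,
      divergence_hessM_of_trace_eq_zero hG
        (Filter.eventually_of_mem (isOpen_openCone.mem_nhds hy) htrace), mul_zero, zero_add]
    exact Finset.sum_congr rfl fun i _ => by
      rw [pderiv_pderiv (h.contDiffAt_two (hmem y hy)), pow_two]
  have hzero := divergence_eq_zero_of_nonneg hc
    (fun i y hy => (hW y hy).mul (contDiffAt_hessM (h.contDiffAt y hy) i _))
    (fun y hy => by
      have hradial := mem_radialPerp.1
        (h.hessM_mulVec_mem_radialPerp hc (hmem y hy) (Pi.single (Fin.last n) 1))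
      simp only [mulVec_single_one, dotProduct, col_apply] at hradial
      simp only [mul_assoc, ← Finset.mul_sum]
      rw [hradial, mul_zero])
    (fun y hy hτ => mul_eq_zero_of_left (h.fderiv_Etop y hy hτ) _)
    (fun y hy => (Finset.sum_nonneg fun i _ => sq_nonneg _).trans_eq (hdiv y hy).symm) hx
  rw [hdiv x hx, Finset.sum_eq_zero_iff_of_nonneg fun i _ => sq_nonneg _] at hzero
  exact pow_eq_zero_iff two_ne_zero |>.1 (hzero i (Finset.mem_univ i))

end IsCapillaryConeFn

end HessianUniqueness

section Linearity

variable {n : ℕ} {c : ℝ} {G : V n → ℝ} {x : V n}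

namespace IsCapillaryConeFn

lemma fderiv_Etop_eq_zero (h : IsCapillaryConeFn n c G) (hc : c ∈ Ico (0 : ℝ) 1) (hn : 1 ≤ n)
    (hhess : ∀ x ∈ openCone n c, ∀ i, hessM n G x i (Fin.last n) = 0)
    (hx : x ∈ closedCone n c) : fderiv ℝ G x (Etop n) = 0 := by
  let W := pderiv (Fin.last n) G
  have hdiff : ∀ y ∈ closedCone n c, DifferentiableAt ℝ W y := fun y hy =>
    (contDiffAt_pderiv (m := 1) (h.contDiffAt_two hy) (by norm_num) _).differentiableAt one_ne_zero
  have hfderiv : ∀ y ∈ openCone n c, fderiv ℝ W y = 0 := fun y hy => by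
    have htwo := h.contDiffAt_two (openCone_subset_closedCone hy)
    ext v
    rw [← sum_pderiv_mul]
    simp [W, pderiv_pderiv htwo, hhess y hy]
  obtain ⟨b, hb, hb0⟩ := exists_coneFn_eq_zero_and_apply_zero_eq_one hc hn
  have hbne : b ≠ 0 := by
    rintro rfl
    simp at hb0
  have hconst : EqOn W (fun _ => W (Etop n)) (openCone n c) := fun y hy =>
    isOpen_openCone.is_const_of_fderiv_eq_zero (𝕜 := ℝ) (convex_openCone hc.1).isPreconnected
      (fun z hz => (hdiff z (openCone_subset_closedCone hz)).differentiableWithinAt)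
      hfderiv hy (Etop_mem_openCone hc.2)
  have hconst' : EqOn W (fun _ => W (Etop n)) (closedCone n c) := eqOn_closedCone hc
    (fun y hy => (hdiff y hy).continuousAt.continuousWithinAt) continuousOn_const hconst
  calc W x = W b := (hconst' hx).trans (hconst' ⟨hbne, hb.ge⟩).symm
    _ = 0 := h.fderiv_Etop b hbne hb

lemma apply_add_smul_Etop (h : IsCapillaryConeFn n c G) (hc : c ∈ Ico (0 : ℝ) 1)
    (hvert : ∀ x ∈ closedCone n c, fderiv ℝ G x (Etop n) = 0) (hx : x ∈ closedCone n c) {s : ℝ}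
    (hs : 0 ≤ s) : G (x + s • Etop n) = G x := by
  have hmem : ∀ t ∈ Icc (0 : ℝ) s, x + t • Etop n ∈ closedCone n c := fun t ht => by
    rcases ht.1.eq_or_lt with rfl | ht0
    · simpa using hx
    · exact openCone_subset_closedCone (add_smul_Etop_mem_openCone hc hx.2 ht0)
  have hderiv : ∀ t ∈ Icc (0 : ℝ) s, HasDerivAt (fun t : ℝ => G (x + t • Etop n)) 0 t :=
    fun t ht => by
      have hline : HasDerivAt (fun t : ℝ => x + t • Etop n) (Etop n) t := by
        simpa using ((hasDerivAt_id t).smul_const (Etop n)).const_add x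
      rw [← hvert _ (hmem t ht)]
      exact (h.differentiableAt (hmem t ht)).hasFDerivAt.comp_hasDerivAt t hline
  have hconst := constant_of_has_deriv_right_zero
    (fun t ht => (hderiv t ht).continuousAt.continuousWithinAt)
    (fun t ht => (hderiv t (Ico_subset_Icc_self ht)).hasDerivWithinAt) s (right_mem_Icc.2 hs)
  simpa using hconst

lemma fderiv_Etop_apply (h : IsCapillaryConeFn n c G) (hc : c ∈ Ico (0 : ℝ) 1)
    (hvert : ∀ x ∈ closedCone n c, fderiv ℝ G x (Etop n) = 0) (hx : x ∈ closedCone n c) :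
    fderiv ℝ G (Etop n) x = G x := by
  have hE := openCone_subset_closedCone (Etop_mem_openCone (n := n) hc.2)
  have hGE : G (Etop n) = 0 := by rw [← h.fderiv_self hE, hvert _ hE]
  have hline : HasDerivAt (fun t : ℝ => Etop n + t • x) x 0 := by
    simpa using ((hasDerivAt_id (0 : ℝ)).smul_const x).const_add (Etop n)
  have hderiv : HasDerivAt (fun t : ℝ => G (Etop n + t • x)) (fderiv ℝ G (Etop n) x) 0 :=
    (h.differentiableAt hE).hasFDerivAt.comp_hasDerivAt_of_eq 0 hline (by simp)
  -- For `t > 0` the point `E + t x` is a multiple of the vertical translate `x + t⁻¹ E` of `x`.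
  have hray : ∀ t ∈ Ici (0 : ℝ), G (Etop n + t • x) = t * G x := fun t ht => by
    rcases (mem_Ici.1 ht).eq_or_lt with rfl | ht0
    · simp [hGE]
    · have hinv : 0 < t⁻¹ := inv_pos.2 ht0
      have hscale : Etop n + t • x = t • (x + t⁻¹ • Etop n) := by
        rw [smul_add, smul_inv_smul₀ ht0.ne', add_comm]
      rw [hscale, h.homogeneous t ht0 _ (openCone_subset_closedCone
        (add_smul_Etop_mem_openCone hc hx.2 hinv)), h.apply_add_smul_Etop hc hvert hx hinv.le]
  have hderiv' : HasDerivWithinAt (fun t : ℝ => G (Etop n + t • x)) (G x) (Ici 0) 0 :=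
    (by simpa using (hasDerivAt_id (0 : ℝ)).mul_const (G x) :
      HasDerivAt (fun t : ℝ => t * G x) (G x) 0).hasDerivWithinAt.congr hray (by simp [hGE])
  exact (uniqueDiffWithinAt_Ici (0 : ℝ)).eq_deriv _ hderiv.hasDerivWithinAt hderiv'

theorem exists_eq_inner (h : IsCapillaryConeFn n c G) (hc : c ∈ Ico (0 : ℝ) 1) (hn : 1 ≤ n)
    (hhess : ∀ x ∈ openCone n c, ∀ i, hessM n G x i (Fin.last n) = 0) :
    ∃ a : V n, a (Fin.last n) = 0 ∧ ∀ x ∈ closedCone n c, G x = ⟪a, x⟫ := by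
  have hvert : ∀ x ∈ closedCone n c, fderiv ℝ G x (Etop n) = 0 := fun _ =>
    h.fderiv_Etop_eq_zero hc hn hhess
  refine ⟨(InnerProductSpace.toDual ℝ (V n)).symm (fderiv ℝ G (Etop n)), ?_, fun x hx => ?_⟩
  · rw [← inner_Etop, InnerProductSpace.toDual_symm_apply]
    exact hvert _ (openCone_subset_closedCone (Etop_mem_openCone hc.2))
  · rw [InnerProductSpace.toDual_symm_apply, h.fderiv_Etop_apply hc hvert hx]

end IsCapillaryConeFn

end Linearity

section HorizontalDifference

open Matrix

variable {n : ℕ} {c : ℝ} {G G₁ G₂ : V n → ℝ} {x : V n}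

lemma hessM_sub_inner (hG : ContDiffAt ℝ 2 G x) (a : V n) :
    hessM n (fun y => G y - ⟪a, y⟫) x = hessM n G x := by
  have hinner : ContDiffAt ℝ 2 (fun y : V n => ⟪a, y⟫) x := (innerSL ℝ a).contDiff.contDiffAt
  rw [hessM_sub hG hinner, hessM_inner, sub_zero]

lemma HasPosHess.sub_inner (hG : HasPosHess n c G) (h : IsCapillaryConeFn n c G) (a : V n) :
    HasPosHess n c fun x => G x - ⟪a, x⟫ := fun x hx => by
  simp_rw [← dotProduct_hessM_mulVec, hessM_sub_inner (h.contDiffAt_two hx),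
    dotProduct_hessM_mulVec]
  exact hG x hx

lemma IsCapillaryConeFn.hessM_sub_last_eq_zero (h₁ : IsCapillaryConeFn n c G₁)
    (h₂ : IsCapillaryConeFn n c G₂) (hc : c ∈ Ioo (0 : ℝ) 1) (hG₁ : HasPosHess n c G₁)
    (hG₂ : HasPosHess n c G₂) {k : ℕ} (hk : 1 ≤ k) (hkn : k ≤ n)
    (heq : ∀ x ∈ openCone n c, sumMinors (hessM n G₁ x) k = sumMinors (hessM n G₂ x) k)
    (hx : x ∈ openCone n c) (i : Fin (n + 1)) :
    hessM n (fun y => G₂ y - G₁ y) x i (Fin.last n) = 0 := by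
  have hc' := Ioo_subset_Ico_self hc
  have htwo₁ : ∀ y ∈ openCone n c, ContDiffAt ℝ 2 G₁ y := fun y hy =>
    h₁.contDiffAt_two (openCone_subset_closedCone hy)
  have htwo₂ : ∀ y ∈ openCone n c, ContDiffAt ℝ 2 G₂ y := fun y hy =>
    h₂.contDiffAt_two (openCone_subset_closedCone hy)
  obtain ⟨m, rfl⟩ := Nat.exists_eq_add_of_le' hk
  rcases Nat.eq_zero_or_pos m with rfl | hm
  · refine (h₂.sub h₁).hessM_last_eq_zero_of_trace_eq_zero hc' (fun y hy => ?_) hx i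
    rw [hessM_sub (htwo₂ y hy) (htwo₁ y hy), trace_sub, sub_eq_zero]
    simpa [sumMinors_one] using (heq y hy).symm
  · obtain ⟨a₁, ha₁, hlt₁⟩ := h₁.exists_forall_inner_lt hc (hk.trans hkn) hG₁
    obtain ⟨a₂, ha₂, hlt₂⟩ := h₂.exists_forall_inner_lt hc (hk.trans hkn) hG₂
    have hhess := (h₁.sub (isCapillaryConeFn_inner ha₁)).hessM_eq_of_sumMinors_eq
      (h₂.sub (isCapillaryConeFn_inner ha₂)) hc' (hG₁.sub_inner h₁ a₁) (hG₂.sub_inner h₂ a₂)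
      (fun y hy => sub_pos.2 (hlt₁ y (openCone_subset_closedCone hy)))
      (fun y hy => sub_pos.2 (hlt₂ y (openCone_subset_closedCone hy))) hm hkn
      (fun y hy => by
        rw [hessM_sub_inner (htwo₁ y hy), hessM_sub_inner (htwo₂ y hy), heq y hy]) hx
    rw [hessM_sub_inner (htwo₁ x hx), hessM_sub_inner (htwo₂ x hx)] at hhess
    rw [hessM_sub (htwo₂ x hx) (htwo₁ x hx), hhess, sub_self, Matrix.zero_apply]

end HorizontalDifference

section Caps

variable {n : ℕ} {θ : ℝ} {G G₁ G₂ s : V n → ℝ} {x : V n}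

lemma cos_mem_Ioo (hθ : θ ∈ Ioo 0 (π / 2)) : Real.cos θ ∈ Ioo (0 : ℝ) 1 :=
  ⟨Real.cos_pos_of_mem_Ioo ⟨by linarith [hθ.1, Real.pi_pos], hθ.2⟩,
    Real.cos_zero ▸ Real.cos_lt_cos_of_nonneg_of_le_pi_div_two le_rfl hθ.2.le hθ.1⟩

lemma add_smul_Etop_mem_sphCap_iff {ζ : V n} :
    ζ + Real.cos θ • Etop n ∈ sphCap n θ ↔ ζ ∈ capCap n θ := by
  simp [sphCap, capCap, and_comm]

lemma sphCap_subset_closedCone : sphCap n θ ⊆ closedCone n (Real.cos θ) := fun u hu => by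
  refine ⟨norm_ne_zero_iff.1 (hu.1.symm ▸ one_ne_zero), ?_⟩
  rw [coneFn, hu.1, mul_one, sub_nonneg]
  exact hu.2

lemma exists_eq_smul_sphCap (hx : x ∈ closedCone n (Real.cos θ)) :
    ∃ u ∈ sphCap n θ, ∃ l : ℝ, 0 < l ∧ x = l • u := by
  have hnorm : 0 < ‖x‖ := norm_pos_iff.2 hx.1
  refine ⟨‖x‖⁻¹ • x, ⟨norm_smul_inv_norm hx.1, ?_⟩, ‖x‖, hnorm, (smul_inv_smul₀ hnorm.ne' x).symm⟩
  rw [PiLp.smul_apply, smul_eq_mul, inv_mul_eq_div, le_div_iff₀ hnorm]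
  exact sub_nonneg.1 hx.2

lemma _root_.IsHomExt.isCapillaryConeFn (h : IsHomExt n θ 3 s G) (hcap : IsCapillaryF n θ G)
    (hθ : θ ∈ Ioo 0 (π / 2)) : IsCapillaryConeFn n (Real.cos θ) G := by
  obtain ⟨⟨U, hU, hsub, hG⟩, hhom, -⟩ := h
  have hsmooth : ∀ x ∈ closedCone n (Real.cos θ), ContDiffAt ℝ 3 G x := fun x hx => by
    obtain ⟨u, hu, l, hl, rfl⟩ := exists_eq_smul_sphCap hx
    exact hG.contDiffAt (hU.mem_nhds (hsub ⟨l, hl, u, hu, rfl⟩))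
  have hhom' : ∀ l > 0, ∀ x ∈ closedCone n (Real.cos θ), G (l • x) = l * G x := fun l hl x hx => by
    obtain ⟨u, hu, r, hr, rfl⟩ := exists_eq_smul_sphCap hx
    rw [smul_smul, hhom _ (mul_pos hl hr) u hu, hhom r hr u hu, mul_assoc]
  refine ⟨hsmooth, hhom', fun x hx hτ => ?_⟩
  obtain ⟨u, hu, l, hl, rfl⟩ := exists_eq_smul_sphCap ⟨hx, hτ.ge⟩
  have hu' := sphCap_subset_closedCone hu
  have hfderiv : fderiv ℝ G (l • u) = fderiv ℝ G u :=
    smul_right_injective _ hl.ne' (smul_fderiv_smul_of_homogeneous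
      (Ioo_subset_Ico_self (cos_mem_Ioo hθ))
      (fun y hy => (hsmooth y hy).differentiableAt three_ne_zero) hl (hhom' l hl) hu')
  have hbdry : coneFn n (Real.cos θ) u = 0 := by
    rwa [coneFn_smul hl.le, mul_eq_zero_iff_left hl.ne'] at hτ
  rw [coneFn, hu.1, mul_one, sub_eq_zero] at hbdry
  rw [hfderiv]
  exact hcap u ⟨hu.1, hbdry⟩

namespace IsCapillaryConeFn

lemma hasPosHess (h : IsCapillaryConeFn n (Real.cos θ) G) (hθ : θ ∈ Ioo 0 (π / 2))
    (hpos : TauPos n θ G) : HasPosHess n (Real.cos θ) G := fun x hx => by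
  obtain ⟨u, hu, l, hl, rfl⟩ := exists_eq_smul_sphCap hx
  have hscale (v) := h.hessQ_smul (Ioo_subset_Ico_self (cos_mem_Ioo hθ)) hl
    (sphCap_subset_closedCone hu) v v
  refine ⟨fun v => nonneg_of_mul_nonneg_right ((hscale v).symm ▸ hpos.1 u hu v) hl,
    fun v hv hvx => pos_of_mul_pos_right ((hscale v).symm ▸ hpos.2 u hu v hv ?_) hl.le⟩
  rw [real_inner_smul_right] at hvx
  exact (mul_eq_zero.1 hvx).resolve_left hl.ne'

lemma sumMinors_hessM_eq (h₁ : IsCapillaryConeFn n (Real.cos θ) G₁)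
    (h₂ : IsCapillaryConeFn n (Real.cos θ) G₂) (hθ : θ ∈ Ioo 0 (π / 2)) {k : ℕ} (hk : k ≤ n + 1)
    (heq : ∀ ζ ∈ capCap n θ, sigmaElem n k G₁ (ζ + Real.cos θ • Etop n)
      = sigmaElem n k G₂ (ζ + Real.cos θ • Etop n)) (hx : x ∈ closedCone n (Real.cos θ)) :
    sumMinors (hessM n G₁ x) k = sumMinors (hessM n G₂ x) k := by
  obtain ⟨u, hu, l, hl, rfl⟩ := exists_eq_smul_sphCap hx
  have hscale {G} (h : IsCapillaryConeFn n (Real.cos θ) G) :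
      l • hessM n G (l • u) = hessM n G u := Matrix.ext fun i j =>
    h.hessQ_smul (Ioo_subset_Ico_self (cos_mem_Ioo hθ)) hl (sphCap_subset_closedCone hu) _ _
  have hsigma (G) : sigmaElem n k G u = sumMinors (hessM n G u) k := by
    simpa [sigmaElem] using
      neg_one_pow_mul_charpoly_coeff (hessM n G u) (m := k) (by simpa using hk)
  have hcap := heq (u - Real.cos θ • Etop n)
    (add_smul_Etop_mem_sphCap_iff.1 (by rwa [sub_add_cancel]))
  rw [sub_add_cancel, hsigma, hsigma, ← hscale h₁, ← hscale h₂, sumMinors_smul,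
    sumMinors_smul] at hcap
  exact mul_left_cancel₀ (pow_pos hl k).ne' hcap

end IsCapillaryConeFn

end Caps

end CapillaryUniqueness

open CapillaryUniqueness

/-- uniqueness up to horizontal translation for `σ_k`. -/
theorem capillary_sigmaK_uniqueness (n k : ℕ) (hn : 1 ≤ n) (θ : ℝ)
    (hθ : θ ∈ Ioo 0 (π / 2)) (hk : 1 ≤ k) (hkn : k ≤ n)
    (s₁ G₁ s₂ G₂ : V n → ℝ)
    (h1 : IsHomExt n θ 3 s₁ G₁) (h1c : IsCapillaryF n θ G₁) (h1τ : TauPos n θ G₁)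
    (h2 : IsHomExt n θ 3 s₂ G₂) (h2c : IsCapillaryF n θ G₂) (h2τ : TauPos n θ G₂)
    (heq : ∀ ζ ∈ capCap n θ,
      sigmaElem n k G₁ (ζ + Real.cos θ • Etop n) =
        sigmaElem n k G₂ (ζ + Real.cos θ • Etop n)) :
    ∃ a : V n, a (Fin.last n) = 0 ∧ ∀ ζ ∈ capCap n θ, s₂ ζ = s₁ ζ + ⟪a, ζ⟫ := by
  have hc := cos_mem_Ioo hθ
  have hG₁ := h1.isCapillaryConeFn h1c hθ
  have hG₂ := h2.isCapillaryConeFn h2c hθ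
  have hσ : ∀ x ∈ openCone n (Real.cos θ),
      sumMinors (hessM n G₁ x) k = sumMinors (hessM n G₂ x) k := fun x hx =>
    hG₁.sumMinors_hessM_eq hG₂ hθ (Nat.le_succ_of_le hkn) heq (openCone_subset_closedCone hx)
  have hhess : ∀ x ∈ openCone n (Real.cos θ), ∀ i,
      hessM n (fun y => G₂ y - G₁ y) x i (Fin.last n) = 0 := fun x hx =>
    hG₁.hessM_sub_last_eq_zero hG₂ hc (hG₁.hasPosHess hθ h1τ) (hG₂.hasPosHess hθ h2τ) hk hkn hσ hx
  obtain ⟨a, ha, hlin⟩ := (hG₂.sub hG₁).exists_eq_inner (Ioo_subset_Ico_self hc) hn hhess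
  refine ⟨a, ha, fun ζ hζ => ?_⟩
  have hdiff := hlin _ (sphCap_subset_closedCone (add_smul_Etop_mem_sphCap_iff.2 hζ))
  rw [h1.2.2 ζ hζ, h2.2.2 ζ hζ, inner_add_right, real_inner_smul_right, inner_Etop, ha,
    mul_zero, add_zero] at hdiff
  exact sub_eq_iff_eq_add'.1 hdiff
end
end

section
/- Let n ≥ 1 be an integer and θ ∈ (0, π/2). Let s be a smooth capillary function on C_θ with τ[s] > 0, with positively 1-homogeneous extension G and Euclidean gradient ∇G. Then: (a) ∇G is injective on S^n_θ; (b) ⟨∇G(u), E_{n+1}⟩ > 0 for every u ∈ S^n_θ with u_{n+1} > cos θ, and ⟨∇G(u), E_{n+1}⟩ = 0 for every u ∈ ∂S^n_θ; (c) K := convexHull(∇G(S^n_θ)) is a compact convex set with nonempty interior contained in {x_{n+1} ≥ 0}, its support function satisfies h_K(u) = G(u) for every u ∈ S^n_θ, and the topological boundary of K equals ∇G(S^n_θ) ∪ (K ∩ {x_{n+1} = 0}). -/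
open MeasureTheory Real Set
open scoped RealInnerProductSpace

noncomputable section

/-!
Homogeneity turns the positivity of `D²G` transverse to the radial direction into strict convexity
of `G` along every segment of the cone over the cap that does not point to the origin. With Euler's
identity `⟪∇G x, x⟫ = G x`, the tangent inequality becomes `⟪u, ∇G w⟫ < ⟪u, ∇G u⟫` for distinct
`u`, `w` in the cap: the direction `u` exposes exactly the point `∇G u` of the hull `K`.

Everything else follows from this inequality and the vanishing of `(∇G b)_{n+1}` for `b` on the
boundary circle, because every vector can be written `v = r b + t E_{n+1}` with such a `b` and
`r ≥ 0`. For instance, if `v` supports `K` at a point `x` with `x_{n+1} > 0`, then `t ≥ 0`, since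
otherwise `⟪v, ∇G b⟫ = r ⟪b, ∇G b⟫ ≥ r ⟪b, x⟫ > ⟪v, x⟫`; hence `v` lies in the cone over the cap
and `x` is a value of `∇G`.
-/

section ConvexHull

variable {E : Type*} [NormedAddCommGroup E]

theorem convexHull_eq_biUnion_image_stdSimplex [NormedSpace ℝ E] [FiniteDimensional ℝ E]
    (s : Set E) :
    convexHull ℝ s = ⋃ k ∈ Iic (Module.finrank ℝ E + 1),
      (fun p : (Fin k → ℝ) × (Fin k → E) ↦ ∑ i, p.1 i • p.2 i) ''
        (stdSimplex ℝ (Fin k) ×ˢ univ.pi fun _ ↦ s) := by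
  ext x
  simp only [mem_iUnion]
  constructor
  · intro hx
    obtain ⟨ι, _, z, w, hz, hind, hw, hw1, hx⟩ := eq_pos_convex_span_of_mem_convexHull hx
    have hcard : Fintype.card ι ≤ Module.finrank ℝ E + 1 :=
      hind.card_le_finrank_succ.trans (Nat.succ_le_succ (Submodule.finrank_le _))
    let e := (Fintype.equivFin ι).symm
    exact ⟨Fintype.card ι, hcard, (w ∘ e, z ∘ e),
      ⟨⟨fun i ↦ (hw _).le, (e.sum_comp w).trans hw1⟩, fun i _ ↦ hz ⟨_, rfl⟩⟩,
      (e.sum_comp fun i ↦ w i • z i).trans hx⟩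
  · rintro ⟨k, -, p, ⟨hp, hps⟩, rfl⟩
    exact (convex_convexHull ℝ s).sum_mem (fun i _ ↦ hp.1 i) hp.2
      fun i _ ↦ subset_convexHull ℝ s (hps i trivial)

theorem isCompact_convexHull [NormedSpace ℝ E] [FiniteDimensional ℝ E] {s : Set E}
    (hs : IsCompact s) : IsCompact (convexHull ℝ s) := by
  rw [convexHull_eq_biUnion_image_stdSimplex]
  exact (finite_Iic _).isCompact_biUnion fun k _ ↦
    ((isCompact_stdSimplex ℝ (Fin k)).prod (isCompact_univ_pi fun _ ↦ hs)).image (by fun_prop)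

variable [InnerProductSpace ℝ E] {s K : Set E} {v x : E}

theorem interior_convexHull_nonempty [FiniteDimensional ℝ E] (hs : s.Nonempty)
    (h : ∀ v : E, (∀ x ∈ s, ∀ y ∈ s, ⟪v, x⟫ = ⟪v, y⟫) → v = 0) :
    (interior (convexHull ℝ s)).Nonempty := by
  rw [interior_convexHull_nonempty_iff_affineSpan_eq_top,
    AffineSubspace.affineSpan_eq_top_iff_vectorSpan_eq_top_of_nonempty _ _ _ hs,
    ← Submodule.orthogonal_eq_bot_iff, Submodule.eq_bot_iff]
  intro v hv
  refine h v fun x hx y hy ↦ ?_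
  rw [← sub_eq_zero, ← inner_sub_right]
  exact Submodule.inner_left_of_mem_orthogonal (vsub_mem_vectorSpan ℝ hx hy) hv

theorem mem_frontier_of_forall_inner_le (hv : v ≠ 0) (hx : x ∈ K)
    (h : ∀ y ∈ K, ⟪v, y⟫ ≤ ⟪v, x⟫) : x ∈ frontier K := by
  refine ⟨subset_closure hx, fun hxi ↦ hv ?_⟩
  have hmax : IsLocalMax (innerSL ℝ v) x := by
    filter_upwards [mem_interior_iff_mem_nhds.1 hxi] with y hy
    simpa only [innerSL_apply_apply] using h y hy
  have hzero := hmax.hasFDerivAt_eq_zero (innerSL ℝ v).hasFDerivAt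
  simpa using DFunLike.congr_fun hzero v

theorem exists_forall_inner_le_of_mem_frontier [CompleteSpace E] (hK : Convex ℝ K)
    (hKi : (interior K).Nonempty) (hx : x ∈ frontier K) :
    ∃ v : E, v ≠ 0 ∧ ∀ y ∈ K, ⟪v, y⟫ ≤ ⟪v, x⟫ := by
  obtain ⟨f, hf, hfx⟩ := geometric_hahn_banach_of_nonempty_interior_point hK hx.2 hKi
  refine ⟨(InnerProductSpace.toDual ℝ E).symm f, by simpa using hf, fun y hy ↦ ?_⟩
  simpa only [InnerProductSpace.toDual_symm_apply] using hfx y hy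

theorem convex_openHalfSpace_union_singleton (v p : E) :
    Convex ℝ ({y | ⟪v, y⟫ < ⟪v, p⟫} ∪ {p}) := by
  rw [convex_iff_forall_pos]
  intro x hx y hy a b ha hb hab
  have hp : ⟪v, p⟫ = a * ⟪v, p⟫ + b * ⟪v, p⟫ := by rw [← add_mul, hab, one_mul]
  simp only [mem_union, mem_ofPred_eq, mem_singleton_iff, inner_add_right,
    inner_smul_right] at hx hy ⊢
  rcases hx with hx | rfl <;> rcases hy with hy | rfl
  · left; nlinarith
  · left; nlinarith
  · left; nlinarith
  · right; rw [← add_smul, hab, one_smul]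

end ConvexHull

section LinearIndependentPair

variable {E : Type*} [NormedAddCommGroup E] [InnerProductSpace ℝ E]

theorem apply_self_pos_of_linearIndependent {B : E →L[ℝ] E →L[ℝ] ℝ} {u v : E}
    (hsymm : ∀ x y, B x y = B y x) (hu : B u = 0) (hpos : ∀ w, w ≠ 0 → ⟪w, u⟫ = 0 → 0 < B w w)
    (huv : LinearIndependent ℝ ![u, v]) : 0 < B v v := by
  have hu0 : u ≠ 0 := huv.ne_zero 0
  rw [LinearIndependent.pair_iff' hu0] at huv
  set a := ⟪v, u⟫ / ⟪u, u⟫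
  have hw : 0 < B (v - a • u) (v - a • u) := by
    refine hpos _ (sub_ne_zero.2 (huv a).symm) ?_
    rw [inner_sub_left, real_inner_smul_left, div_mul_cancel₀ _ (inner_self_ne_zero.2 hu0),
      sub_self]
  have hvu : B v u = 0 := by rw [hsymm, hu, zero_apply]
  simpa [hu, hvu] using hw

theorem linearIndependent_pair_of_norm_eq_one {x y : E} (hx : ‖x‖ = 1) (hy : ‖y‖ = 1)
    (hne : y ≠ x) (hneg : y ≠ -x) : LinearIndependent ℝ ![x, y] := by
  rw [LinearIndependent.pair_iff' (norm_ne_zero_iff.1 (hx ▸ one_ne_zero))]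
  rintro a rfl
  rw [norm_smul, hx, mul_one, Real.norm_eq_abs] at hy
  rcases eq_or_eq_neg_of_abs_eq hy with rfl | rfl
  · exact hne (one_smul ℝ x)
  · exact hneg (neg_one_smul ℝ x)

end LinearIndependentPair

/-- The values of `X` are exposed by their parameters: for each `u ∈ S`, the functional `⟪u, ·⟫`
attains its maximum over `X '' S` only at `X u`, and only with the parameter `u`. It models the
inverse Gauss map of a strictly convex hypersurface. -/
def StrictlyExposes {E : Type*} [NormedAddCommGroup E] [InnerProductSpace ℝ E]
    (X : E → E) (S : Set E) : Prop :=
  ∀ u ∈ S, ∀ w ∈ S, w ≠ u → ⟪u, X w⟫ < ⟪u, X u⟫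

namespace StrictlyExposes

variable {E : Type*} [NormedAddCommGroup E] [InnerProductSpace ℝ E] {X : E → E} {S : Set E}
  {u w x : E}

theorem injOn (hX : StrictlyExposes X S) : InjOn X S := by
  intro u hu w hw huw
  by_contra hne
  exact (hX u hu w hw (Ne.symm hne)).ne (by rw [huw])

theorem inner_smul_sub_smul_lt (hX : StrictlyExposes X S) (hu : u ∈ S) (hw : w ∈ S)
    (hwu : w ≠ u) {r t : ℝ} (hr : 0 < r) (ht : 0 ≤ t) :
    ⟪r • u - t • w, X w⟫ < ⟪r • u - t • w, X u⟫ := by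
  have hru : r * ⟪u, X w⟫ < r * ⟪u, X u⟫ := mul_lt_mul_of_pos_left (hX u hu w hw hwu) hr
  have htw : t * ⟪w, X u⟫ ≤ t * ⟪w, X w⟫ :=
    mul_le_mul_of_nonneg_left (hX w hw u hu hwu.symm).le ht
  simp only [inner_sub_left, real_inner_smul_left]
  linarith

theorem inner_lt_or_eq (hX : StrictlyExposes X S) (hu : u ∈ S)
    (hx : x ∈ convexHull ℝ (X '' S)) : ⟪u, x⟫ < ⟪u, X u⟫ ∨ x = X u := by
  refine convexHull_min ?_ (convex_openHalfSpace_union_singleton u (X u)) hx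
  rintro _ ⟨w, hw, rfl⟩
  rcases eq_or_ne w u with rfl | hwu
  · exact Or.inr rfl
  · exact Or.inl (hX u hu w hw hwu)

theorem inner_le (hX : StrictlyExposes X S) (hu : u ∈ S) (hx : x ∈ convexHull ℝ (X '' S)) :
    ⟪u, x⟫ ≤ ⟪u, X u⟫ := by
  rcases hX.inner_lt_or_eq hu hx with h | rfl
  exacts [h.le, le_rfl]

theorem isGreatest_inner (hX : StrictlyExposes X S) (hu : u ∈ S) :
    IsGreatest ((fun y ↦ ⟪u, y⟫) '' convexHull ℝ (X '' S)) ⟪u, X u⟫ :=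
  ⟨mem_image_of_mem _ (subset_convexHull ℝ _ (mem_image_of_mem X hu)),
    forall_mem_image.2 fun _ ↦ hX.inner_le hu⟩

theorem mem_frontier (hX : StrictlyExposes X S) (hu : u ∈ S) (hu0 : u ≠ 0) :
    X u ∈ frontier (convexHull ℝ (X '' S)) :=
  mem_frontier_of_forall_inner_le hu0 (subset_convexHull ℝ _ (mem_image_of_mem X hu))
    fun _ ↦ hX.inner_le hu

end StrictlyExposes

/-- `f` is positively homogeneous of degree `k` on `C`. The degree is an integer so that
the notion is stable under differentiation. -/
def PosHomogeneousOn {E F : Type*} [SMul ℝ E] [SMul ℝ F] (k : ℤ) (f : E → F) (C : Set E) : Prop :=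
  ∀ l : ℝ, 0 < l → ∀ x ∈ C, f (l • x) = l ^ k • f x

namespace PosHomogeneousOn

variable {E F : Type*} [NormedAddCommGroup E] [NormedSpace ℝ E] [NormedAddCommGroup F]
  [NormedSpace ℝ F] {k : ℤ} {f : E → F} {C : Set E}

theorem fderiv_apply_self (hf : PosHomogeneousOn k f C) {x : E} (hx : x ∈ C)
    (hd : DifferentiableAt ℝ f x) : fderiv ℝ f x x = (k : ℝ) • f x := by
  have hchain : HasDerivAt (fun t : ℝ ↦ f (t • x)) (fderiv ℝ f x x) 1 := by
    have h := (one_smul ℝ x).symm ▸ hd.hasFDerivAt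
    simpa [Function.comp_def] using h.comp_hasDerivAt (1 : ℝ) ((hasDerivAt_id (1 : ℝ)).smul_const x)
  have hpow : HasDerivAt (fun t : ℝ ↦ f (t • x)) ((k : ℝ) • f x) 1 := by
    have h := (hasDerivAt_zpow k (1 : ℝ) (Or.inl one_ne_zero)).smul_const (f x)
    rw [one_zpow, mul_one] at h
    refine h.congr_of_eventuallyEq ?_
    filter_upwards [lt_mem_nhds one_pos] with t ht
    exact hf t ht x hx
  exact hchain.unique hpow

protected theorem fderiv (hf : PosHomogeneousOn k f C) (hC : UniqueDiffOn ℝ C)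
    (hsmul : ∀ l : ℝ, 0 < l → ∀ x ∈ C, l • x ∈ C) (hd : ∀ x ∈ C, DifferentiableAt ℝ f x) :
    PosHomogeneousOn (k - 1) (fderiv ℝ f) C := by
  intro l hl x hx
  have hchain : HasFDerivWithinAt (fun y ↦ f (l • y)) (l • fderiv ℝ f (l • x)) C x := by
    have h := (hd _ (hsmul l hl x hx)).hasFDerivAt.comp x ((hasFDerivAt_id x).const_smul l)
    simpa [Function.comp_def] using h.hasFDerivWithinAt
  have hpow : HasFDerivWithinAt (fun y ↦ f (l • y)) (l ^ k • fderiv ℝ f x) C x :=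
    ((hd x hx).hasFDerivAt.const_smul (l ^ k)).hasFDerivWithinAt.congr
      (hf l hl) (hf l hl x hx)
  have heq := (hC x hx).eq hchain hpow
  rw [zpow_sub_one₀ hl.ne', mul_comm, mul_smul, ← heq, inv_smul_smul₀ hl.ne']

end PosHomogeneousOn

section TangentInequality

variable {E : Type*} [NormedAddCommGroup E] [NormedSpace ℝ E] {G : E → ℝ} {x y : E}

theorem add_fderiv_sub_lt_of_fderiv_fderiv_pos
    (hG : ∀ z ∈ segment ℝ x y, ContDiffAt ℝ 2 G z)
    (hpos : ∀ z ∈ openSegment ℝ x y, 0 < fderiv ℝ (fderiv ℝ G) z (y - x) (y - x)) :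
    G x + fderiv ℝ G x (y - x) < G y := by
  set γ : ℝ → E := fun t ↦ x + t • (y - x)
  have hγ : ∀ t, HasDerivAt γ (y - x) t := fun t ↦
    (((hasDerivAt_id t).smul_const (y - x)).const_add x).congr_deriv (one_smul ℝ _)
  have hGγ : ∀ t ∈ Icc (0 : ℝ) 1, ContDiffAt ℝ 2 G (γ t) := fun t ht ↦
    hG _ (segment_eq_image' ℝ x y ▸ mem_image_of_mem _ ht)
  have hd : ∀ t ∈ Icc (0 : ℝ) 1,
      HasDerivAt (fun t ↦ G (γ t)) (fderiv ℝ G (γ t) (y - x)) t := fun t ht ↦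
    ((hGγ t ht).differentiableAt (by norm_num)).hasFDerivAt.comp_hasDerivAt t (hγ t)
  have hd' : ∀ t ∈ Icc (0 : ℝ) 1, HasDerivAt (fun t ↦ fderiv ℝ G (γ t) (y - x))
      (fderiv ℝ (fderiv ℝ G) (γ t) (y - x) (y - x)) t := fun t ht ↦ by
    have h := (((hGγ t ht).fderiv_right (m := 1) (by norm_num)).differentiableAt
      (by norm_num)).hasFDerivAt.comp_hasDerivAt t (hγ t)
    exact (ContinuousLinearMap.apply ℝ ℝ (y - x)).hasFDerivAt.comp_hasDerivAt t h
  have hmono : StrictMonoOn (fun t ↦ fderiv ℝ G (γ t) (y - x)) (Icc 0 1) := by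
    refine strictMonoOn_of_hasDerivWithinAt_pos (convex_Icc 0 1)
      (fun t ht ↦ (hd' t ht).continuousAt.continuousWithinAt)
      (fun t ht ↦ (hd' t (interior_subset ht)).hasDerivWithinAt) fun t ht ↦ ?_
    rw [interior_Icc] at ht
    exact hpos _ (openSegment_eq_image' ℝ x y ▸ mem_image_of_mem _ ht)
  obtain ⟨t, ht, hslope⟩ := exists_hasDerivAt_eq_slope _ _ one_pos
    (fun t ht ↦ (hd t ht).continuousAt.continuousWithinAt)
    (fun t ht ↦ hd t (Ioo_subset_Icc_self ht))
  have hlt := hmono (left_mem_Icc.2 zero_le_one) (Ioo_subset_Icc_self ht) ht.1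
  simp only [hslope, γ, zero_smul, one_smul, add_zero, add_sub_cancel, sub_zero, div_one] at hlt
  linarith

theorem PosHomogeneousOn.fderiv_apply_lt {C : Set E}
    (hh : PosHomogeneousOn 1 G C) (hC : Convex ℝ C) (hG : ∀ z ∈ C, ContDiffAt ℝ 2 G z)
    (hpos : ∀ z ∈ C, ∀ v, LinearIndependent ℝ ![z, v] → 0 < fderiv ℝ (fderiv ℝ G) z v v)
    (hx : x ∈ C) (hy : y ∈ C) (hxy : LinearIndependent ℝ ![x, y]) :
    fderiv ℝ G x y < G y := by
  have hsub := hC.segment_subset hx hy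
  have htangent : G x + fderiv ℝ G x (y - x) < G y := by
    refine add_fderiv_sub_lt_of_fderiv_fderiv_pos (fun z hz ↦ hG z (hsub hz)) fun z hz ↦
      hpos z (hsub (openSegment_subset_segment ℝ x y hz)) _ ?_
    obtain ⟨a, b, -, -, hab, rfl⟩ := hz
    rw [show y - x = (-1 : ℝ) • x + (1 : ℝ) • y by module,
      LinearIndependent.pair_add_smul_add_smul_iff]
    exact ⟨hxy, by linarith⟩
  have heuler : fderiv ℝ G x x = G x := by
    simpa using hh.fderiv_apply_self hx ((hG x hx).differentiableAt (by norm_num))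
  rw [map_sub, heuler] at htangent
  linarith

end TangentInequality

section CapGeometry

variable {n : ℕ} {θ : ℝ}

theorem Etop_last : Etop n (Fin.last n) = 1 := by simp [Etop]

theorem norm_Etop : ‖Etop n‖ = 1 := by simp [Etop]

theorem inner_Etop_left (x : V n) : ⟪Etop n, x⟫ = x (Fin.last n) := by
  simp [Etop, EuclideanSpace.inner_single_left]

theorem cos_pos_of_mem_Ioo_zero_pi_div_two (hθ : θ ∈ Ioo 0 (π / 2)) : 0 < Real.cos θ :=
  Real.cos_pos_of_mem_Ioo ⟨by linarith [hθ.1, Real.pi_pos], hθ.2⟩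

theorem cos_lt_one_of_mem_Ioo_zero_pi_div_two (hθ : θ ∈ Ioo 0 (π / 2)) : Real.cos θ < 1 := by
  rw [← Real.cos_zero]
  exact Real.cos_lt_cos_of_nonneg_of_le_pi_div_two le_rfl hθ.2.le hθ.1

theorem Etop_mem_sphCap : Etop n ∈ sphCap n θ :=
  ⟨norm_Etop, Etop_last (n := n) ▸ Real.cos_le_one θ⟩

theorem ne_zero_of_mem_sphCap {u : V n} (hu : u ∈ sphCap n θ) : u ≠ 0 :=
  norm_ne_zero_iff.1 (hu.1 ▸ one_ne_zero)

theorem sphCapBdry_subset_sphCap : sphCapBdry n θ ⊆ sphCap n θ :=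
  fun _ hu ↦ ⟨hu.1, hu.2.ge⟩

theorem isCompact_sphCap : IsCompact (sphCap n θ) := by
  have h : sphCap n θ = Metric.sphere 0 1 ∩ {u : V n | Real.cos θ ≤ u (Fin.last n)} := by
    ext u; simp [sphCap]
  rw [h]
  exact (isCompact_sphere _ _).inter_right (isClosed_le (by fun_prop) (by fun_prop))

theorem linearIndependent_of_mem_sphCap (hc : 0 < Real.cos θ) {u w : V n}
    (hu : u ∈ sphCap n θ) (hw : w ∈ sphCap n θ) (hwu : w ≠ u) :
    LinearIndependent ℝ ![w, u] := by
  refine linearIndependent_pair_of_norm_eq_one hw.1 hu.1 hwu.symm ?_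
  rintro rfl
  have h : Real.cos θ ≤ -w (Fin.last n) := hu.2
  linarith [hw.2]

theorem sphCap_subset_coneCap : sphCap n θ ⊆ coneCap n θ :=
  fun u hu ↦ ⟨1, one_pos, u, hu, (one_smul _ _).symm⟩

theorem smul_mem_coneCap {l : ℝ} (hl : 0 < l) {x : V n} (hx : x ∈ coneCap n θ) :
    l • x ∈ coneCap n θ := by
  obtain ⟨r, hr, u, hu, rfl⟩ := hx
  exact ⟨l * r, mul_pos hl hr, u, hu, smul_smul _ _ _⟩

theorem mem_coneCap_iff (hc : 0 < Real.cos θ) {x : V n} :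
    x ∈ coneCap n θ ↔ 0 < x (Fin.last n) ∧ Real.cos θ * ‖x‖ - x (Fin.last n) ≤ 0 := by
  constructor
  · rintro ⟨l, hl, u, ⟨hu, hcu⟩, rfl⟩
    have hlu : l * Real.cos θ ≤ l * u (Fin.last n) := mul_le_mul_of_nonneg_left hcu hl.le
    rw [norm_smul, Real.norm_of_nonneg hl.le, hu, PiLp.smul_apply, smul_eq_mul]
    exact ⟨mul_pos hl (hc.trans_le hcu), by linarith⟩
  · rintro ⟨hx, hle⟩
    have hx0 : x ≠ 0 := by rintro rfl; simp at hx
    have hnorm : 0 < ‖x‖ := norm_pos_iff.2 hx0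
    refine ⟨‖x‖, hnorm, ‖x‖⁻¹ • x, ⟨norm_smul_inv_norm hx0, ?_⟩, (smul_inv_smul₀ hnorm.ne' x).symm⟩
    rw [PiLp.smul_apply, smul_eq_mul, inv_mul_eq_div, le_div_iff₀ hnorm]
    linarith

theorem isLinearMap_last : IsLinearMap ℝ fun x : V n ↦ x (Fin.last n) :=
  (EuclideanSpace.proj (𝕜 := ℝ) (Fin.last n)).toLinearMap.isLinear

theorem convex_coneCap (hc : 0 < Real.cos θ) : Convex ℝ (coneCap n θ) := by
  have hconv : ConvexOn ℝ univ fun x : V n ↦ Real.cos θ * ‖x‖ - x (Fin.last n) :=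
    (convexOn_univ_norm.smul hc.le).sub (isLinearMap_last.mk'.concaveOn convex_univ)
  have h : coneCap n θ = {x : V n | 0 < x (Fin.last n)} ∩
      {x ∈ univ | Real.cos θ * ‖x‖ - x (Fin.last n) ≤ 0} := by
    ext x; simp [mem_coneCap_iff hc]
  rw [h]
  exact ((convex_Ioi 0).is_linear_preimage isLinearMap_last).inter (hconv.convex_le 0)

theorem add_mem_coneCap (hc : 0 < Real.cos θ) {x y : V n} (hx : x ∈ coneCap n θ)
    (hy : y ∈ coneCap n θ) : x + y ∈ coneCap n θ := by
  have h := smul_mem_coneCap two_pos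
    (convex_coneCap hc hx hy one_half_pos.le one_half_pos.le (add_halves 1))
  rwa [smul_add, smul_smul, smul_smul, mul_one_div_cancel two_ne_zero, one_smul, one_smul] at h

theorem uniqueDiffOn_coneCap (hc : 0 < Real.cos θ) (hc1 : Real.cos θ < 1) :
    UniqueDiffOn ℝ (coneCap n θ) := by
  refine uniqueDiffOn_convex (convex_coneCap hc) ⟨Etop n, mem_interior.2
    ⟨{x | Real.cos θ * ‖x‖ < x (Fin.last n)}, fun x hx ↦ ?_,
      isOpen_lt (by fun_prop) (by fun_prop), ?_⟩⟩
  · exact (mem_coneCap_iff hc).2 ⟨(by positivity : 0 ≤ Real.cos θ * ‖x‖).trans_lt hx,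
      sub_nonpos.2 (le_of_lt hx)⟩
  · simpa [norm_Etop, Etop_last] using hc1

theorem smul_add_smul_Etop_mem_coneCap (hc : 0 < Real.cos θ) {b : V n}
    (hb : b ∈ sphCap n θ) {r t : ℝ} (hr : 0 ≤ r) (ht : 0 ≤ t)
    (hne : r • b + t • Etop n ≠ 0) : r • b + t • Etop n ∈ coneCap n θ := by
  rcases hr.eq_or_lt with rfl | hr
  · rcases ht.eq_or_lt with rfl | ht
    · simp at hne
    · simpa using smul_mem_coneCap ht (sphCap_subset_coneCap Etop_mem_sphCap)
  rcases ht.eq_or_lt with rfl | ht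
  · simpa using smul_mem_coneCap hr (sphCap_subset_coneCap hb)
  exact add_mem_coneCap hc (smul_mem_coneCap hr (sphCap_subset_coneCap hb))
    (smul_mem_coneCap ht (sphCap_subset_coneCap Etop_mem_sphCap))

theorem exists_unit_horizontal (hn : 1 ≤ n) (v : V n) :
    ∃ e : V n, ‖e‖ = 1 ∧ e (Fin.last n) = 0 ∧
      ∃ ρ : ℝ, 0 ≤ ρ ∧ v = ρ • e + v (Fin.last n) • Etop n := by
  set p := v - v (Fin.last n) • Etop n
  rcases eq_or_ne p 0 with hp | hp
  · have h0 : Fin.last n ≠ 0 := by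
      rw [Ne, Fin.ext_iff, Fin.val_last, Fin.val_zero]; omega
    exact ⟨EuclideanSpace.single 0 1, by simp, by simp [h0], 0, le_rfl, by
      rw [zero_smul, zero_add, ← sub_eq_zero]; exact hp⟩
  · refine ⟨‖p‖⁻¹ • p, norm_smul_inv_norm hp, by simp [p, Etop_last], ‖p‖, norm_nonneg p, ?_⟩
    rw [smul_inv_smul₀ (norm_ne_zero_iff.2 hp), sub_add_cancel]

theorem sin_smul_add_cos_smul_Etop_mem_sphCapBdry {e : V n} (he : ‖e‖ = 1)
    (he0 : e (Fin.last n) = 0) :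
    Real.sin θ • e + Real.cos θ • Etop n ∈ sphCapBdry n θ := by
  have horth : ⟪Real.sin θ • e, Real.cos θ • Etop n⟫ = 0 := by
    rw [real_inner_smul_left, real_inner_smul_right, real_inner_comm, inner_Etop_left, he0,
      mul_zero, mul_zero]
  refine ⟨?_, by simp [he0, Etop_last]⟩
  rw [← sq_eq_sq₀ (norm_nonneg _) zero_le_one, norm_add_sq_real, horth]
  simp [norm_smul, he, norm_Etop]

theorem exists_eq_smul_add_smul_Etop (hn : 1 ≤ n) (hθ : θ ∈ Ioo 0 (π / 2)) (v : V n) :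
    ∃ b ∈ sphCapBdry n θ, ∃ r : ℝ, 0 ≤ r ∧ ∃ t : ℝ, v = r • b + t • Etop n := by
  have hsin : 0 < Real.sin θ := Real.sin_pos_of_pos_of_lt_pi hθ.1 (by linarith [hθ.2, Real.pi_pos])
  obtain ⟨e, he, he0, ρ, hρ, hv⟩ := exists_unit_horizontal hn v
  refine ⟨_, sin_smul_add_cos_smul_Etop_mem_sphCapBdry he he0, ρ / Real.sin θ, by positivity,
    v (Fin.last n) - ρ / Real.sin θ * Real.cos θ, ?_⟩
  conv_lhs => rw [hv]
  rw [smul_add, smul_smul, div_mul_cancel₀ _ hsin.ne']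
  module

end CapGeometry

section CapHull

variable {n : ℕ} {θ : ℝ} {X : V n → V n}

theorem StrictlyExposes.last_pos (hX : StrictlyExposes X (sphCap n θ))
    (hbdry : ∀ b ∈ sphCapBdry n θ, X b (Fin.last n) = 0) (hn : 1 ≤ n) (hθ : θ ∈ Ioo 0 (π / 2))
    {u : V n} (hu : u ∈ sphCap n θ) (hlt : Real.cos θ < u (Fin.last n)) :
    0 < X u (Fin.last n) := by
  have hc := cos_pos_of_mem_Ioo_zero_pi_div_two hθ
  obtain ⟨b, hb, r, hr, t, hut⟩ := exists_eq_smul_add_smul_Etop hn hθ u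
  have hbu : b ≠ u := by rintro rfl; exact hlt.ne' hb.2
  have ht : 0 < t := by
    by_contra! ht
    have hlast : u (Fin.last n) = r * Real.cos θ + t := by
      rw [hut]; simp [hb.2, Etop_last]
    have hnorm : r ≤ 1 - t := calc
      r = ‖u - t • Etop n‖ := by
        rw [hut, add_sub_cancel_right, norm_smul, hb.1, mul_one, Real.norm_of_nonneg hr]
      _ ≤ ‖u‖ + ‖t • Etop n‖ := norm_sub_le _ _
      _ = 1 - t := by
        rw [hu.1, norm_smul, norm_Etop, mul_one, Real.norm_of_nonpos ht, sub_eq_add_neg]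
    nlinarith [Real.cos_le_one θ]
  have hmono := hX.inner_smul_sub_smul_lt hu (sphCapBdry_subset_sphCap hb) hbu one_pos hr
  rw [one_smul, sub_eq_of_eq_add' hut, real_inner_smul_left, real_inner_smul_left,
    inner_Etop_left, inner_Etop_left, hbdry b hb, mul_lt_mul_iff_right₀ ht] at hmono
  exact hmono

theorem StrictlyExposes.last_nonneg_of_mem_convexHull (hX : StrictlyExposes X (sphCap n θ))
    (hbdry : ∀ b ∈ sphCapBdry n θ, X b (Fin.last n) = 0) (hn : 1 ≤ n) (hθ : θ ∈ Ioo 0 (π / 2))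
    {x : V n} (hx : x ∈ convexHull ℝ (X '' sphCap n θ)) : 0 ≤ x (Fin.last n) := by
  refine convexHull_min ?_ (convex_halfSpace_ge isLinearMap_last 0) hx
  rintro _ ⟨u, hu, rfl⟩
  rcases hu.2.eq_or_lt with heq | hlt
  · exact (hbdry u ⟨hu.1, heq.symm⟩).ge
  · exact (hX.last_pos hbdry hn hθ hu hlt).le

theorem StrictlyExposes.interior_convexHull_nonempty (hX : StrictlyExposes X (sphCap n θ))
    (hbdry : ∀ b ∈ sphCapBdry n θ, X b (Fin.last n) = 0) (hn : 1 ≤ n)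
    (hθ : θ ∈ Ioo 0 (π / 2)) : (interior (convexHull ℝ (X '' sphCap n θ))).Nonempty := by
  have hc := cos_pos_of_mem_Ioo_zero_pi_div_two hθ
  have hc1 := cos_lt_one_of_mem_Ioo_zero_pi_div_two hθ
  have hE : Etop n ∈ sphCap n θ := Etop_mem_sphCap
  refine _root_.interior_convexHull_nonempty ⟨_, mem_image_of_mem X hE⟩ fun v hv ↦ ?_
  wlog hlast : v (Fin.last n) ≤ 0 generalizing v
  · refine neg_eq_zero.1 (this (-v) (fun x hx y hy ↦ ?_) ?_)
    · rw [inner_neg_left, inner_neg_left, hv x hx y hy]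
    · rw [PiLp.neg_apply]; linarith
  obtain ⟨b, hb, r, hr, t, rfl⟩ := exists_eq_smul_add_smul_Etop hn hθ v
  have hbcap := sphCapBdry_subset_sphCap hb
  have hEb : Etop n ≠ b := by rintro rfl; exact hc1.ne' (Etop_last (n := n) ▸ hb.2)
  have hEv := hv _ (mem_image_of_mem X hE) _ (mem_image_of_mem X hbcap)
  have ht : t ≤ 0 := by
    simp only [PiLp.add_apply, PiLp.smul_apply, smul_eq_mul, hb.2, Etop_last, mul_one] at hlast
    nlinarith
  obtain rfl : r = 0 := by
    by_contra hr0
    have hlt := hX.inner_smul_sub_smul_lt hbcap hE hEb (hr.lt_of_ne' hr0) (neg_nonneg.2 ht)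
    rw [neg_smul, sub_neg_eq_add] at hlt
    exact hlt.ne hEv
  rw [zero_smul, zero_add, real_inner_smul_left, real_inner_smul_left, inner_Etop_left,
    inner_Etop_left, hbdry b hb, mul_zero, mul_eq_zero] at hEv
  have hpos := hX.last_pos hbdry hn hθ hE (hc1.trans_eq Etop_last.symm)
  rw [hEv.resolve_right hpos.ne', zero_smul, zero_smul, add_zero]

theorem StrictlyExposes.mem_image_of_mem_frontier (hX : StrictlyExposes X (sphCap n θ))
    (hbdry : ∀ b ∈ sphCapBdry n θ, X b (Fin.last n) = 0) (hn : 1 ≤ n) (hθ : θ ∈ Ioo 0 (π / 2))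
    {x : V n} (hxK : x ∈ convexHull ℝ (X '' sphCap n θ))
    (hx : x ∈ frontier (convexHull ℝ (X '' sphCap n θ))) (hpos : 0 < x (Fin.last n)) :
    x ∈ X '' sphCap n θ := by
  have hc := cos_pos_of_mem_Ioo_zero_pi_div_two hθ
  obtain ⟨v, hv0, hv⟩ := exists_forall_inner_le_of_mem_frontier (convex_convexHull ℝ _)
    (hX.interior_convexHull_nonempty hbdry hn hθ) hx
  have hvX : ∀ u ∈ sphCap n θ, ⟪v, X u⟫ ≤ ⟪v, x⟫ := fun u hu ↦
    hv _ (subset_convexHull ℝ _ (mem_image_of_mem X hu))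
  obtain ⟨b, hb, r, hr, t, rfl⟩ := exists_eq_smul_add_smul_Etop hn hθ v
  have hbcap := sphCapBdry_subset_sphCap hb
  have ht : 0 ≤ t := by
    have hsupp := hvX b hbcap
    have hbx : r * ⟪b, x⟫ ≤ r * ⟪b, X b⟫ := mul_le_mul_of_nonneg_left (hX.inner_le hbcap hxK) hr
    simp only [inner_add_left, real_inner_smul_left, inner_Etop_left, hbdry b hb] at hsupp
    exact nonneg_of_mul_nonneg_left (by linarith) hpos
  obtain ⟨l, hl, u, hu, hlu⟩ := smul_add_smul_Etop_mem_coneCap hc hbcap hr ht hv0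
  have hux := hvX u hu
  rw [hlu, real_inner_smul_left, real_inner_smul_left, mul_le_mul_iff_right₀ hl] at hux
  rcases hX.inner_lt_or_eq hu hxK with hlt | rfl
  · exact absurd hux hlt.not_ge
  · exact mem_image_of_mem X hu

theorem StrictlyExposes.frontier_convexHull (hX : StrictlyExposes X (sphCap n θ))
    (hcont : ContinuousOn X (sphCap n θ))
    (hbdry : ∀ b ∈ sphCapBdry n θ, X b (Fin.last n) = 0) (hn : 1 ≤ n) (hθ : θ ∈ Ioo 0 (π / 2)) :
    frontier (convexHull ℝ (X '' sphCap n θ)) = X '' sphCap n θ ∪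
      (convexHull ℝ (X '' sphCap n θ) ∩ {x : V n | x (Fin.last n) = 0}) := by
  have hclosed : IsClosed (convexHull ℝ (X '' sphCap n θ)) :=
    (isCompact_convexHull (isCompact_sphCap.image_of_continuousOn hcont)).isClosed
  have hnonneg : ∀ x ∈ convexHull ℝ (X '' sphCap n θ), 0 ≤ x (Fin.last n) :=
    fun _ ↦ hX.last_nonneg_of_mem_convexHull hbdry hn hθ
  refine Subset.antisymm (fun x hx ↦ ?_) (union_subset ?_ ?_)
  · have hxK := hclosed.frontier_subset hx
    rcases (hnonneg x hxK).eq_or_lt with h0 | hpos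
    · exact Or.inr ⟨hxK, h0.symm⟩
    · exact Or.inl (hX.mem_image_of_mem_frontier hbdry hn hθ hxK hx hpos)
  · rintro _ ⟨u, hu, rfl⟩
    exact hX.mem_frontier hu (ne_zero_of_mem_sphCap hu)
  · rintro x ⟨hxK, hx0 : x (Fin.last n) = 0⟩
    refine mem_frontier_of_forall_inner_le
      (neg_ne_zero.2 (ne_zero_of_mem_sphCap (Etop_mem_sphCap (θ := θ)))) hxK fun y hy ↦ ?_
    rw [inner_neg_left, inner_neg_left, inner_Etop_left, inner_Etop_left, hx0]
    exact neg_le_neg (hnonneg y hy)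

end CapHull

section CapillaryGradient

variable {n : ℕ} {θ : ℝ} {s G : V n → ℝ}

theorem IsHomExt.of_le {m m' : ℕ∞} (hs : IsHomExt n θ m s G) (hm : m' ≤ m) :
    IsHomExt n θ m' s G := by
  obtain ⟨⟨U, hU, hCU, hGU⟩, hhom, hrestr⟩ := hs
  exact ⟨⟨U, hU, hCU, hGU.of_le (by exact_mod_cast hm)⟩, hhom, hrestr⟩

theorem IsHomExt.contDiffAt {m : ℕ∞} (hs : IsHomExt n θ m s G) {x : V n}
    (hx : x ∈ coneCap n θ) : ContDiffAt ℝ m G x := by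
  obtain ⟨⟨U, hU, hCU, hGU⟩, -, -⟩ := hs
  exact hGU.contDiffAt (hU.mem_nhds (hCU hx))

theorem IsHomExt.posHomogeneousOn {m : ℕ∞} (hs : IsHomExt n θ m s G) :
    PosHomogeneousOn 1 G (coneCap n θ) := by
  rintro l hl _ ⟨r, hr, u, hu, rfl⟩
  rw [smul_smul, hs.2.1 _ (mul_pos hl hr) u hu, hs.2.1 r hr u hu, zpow_one, smul_eq_mul, mul_assoc]

theorem gradient_apply_last (G : V n → ℝ) (u : V n) :
    gradient G u (Fin.last n) = fderiv ℝ G u (Etop n) := by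
  rw [← inner_Etop_left, real_inner_comm, inner_gradient_left]

theorem IsHomExt.inner_gradient_self (hs : IsHomExt n θ 2 s G) {u : V n}
    (hu : u ∈ sphCap n θ) : ⟪u, gradient G u⟫ = G u := by
  have huC := sphCap_subset_coneCap hu
  rw [real_inner_comm, inner_gradient_left, hs.posHomogeneousOn.fderiv_apply_self huC
    ((hs.contDiffAt huC).differentiableAt (by norm_num)), Int.cast_one, one_smul]

theorem IsHomExt.continuousOn_gradient (hs : IsHomExt n θ 2 s G) :
    ContinuousOn (gradient G) (sphCap n θ) := fun u hu ↦
  ((InnerProductSpace.toDual ℝ (V n)).symm.continuous.continuousAt.comp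
    ((hs.contDiffAt (sphCap_subset_coneCap hu)).fderiv_right (m := 1)
      (by norm_num)).continuousAt).continuousWithinAt

theorem IsHomExt.fderiv_fderiv_pos (hs : IsHomExt n θ 2 s G) (hτ : TauPos n θ G)
    (hc : 0 < Real.cos θ) (hc1 : Real.cos θ < 1) {z : V n} (hz : z ∈ coneCap n θ) {v : V n}
    (hzv : LinearIndependent ℝ ![z, v]) : 0 < fderiv ℝ (fderiv ℝ G) z v v := by
  have hsmul : ∀ l : ℝ, 0 < l → ∀ x ∈ coneCap n θ, l • x ∈ coneCap n θ :=
    fun _ hl _ ↦ smul_mem_coneCap hl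
  have huniq := uniqueDiffOn_coneCap (n := n) hc hc1
  have hd : ∀ x ∈ coneCap n θ, DifferentiableAt ℝ G x := fun x hx ↦
    (hs.contDiffAt hx).differentiableAt (by norm_num)
  have hd' : ∀ x ∈ coneCap n θ, DifferentiableAt ℝ (fderiv ℝ G) x := fun x hx ↦
    ((hs.contDiffAt hx).fderiv_right (m := 1) (by norm_num)).differentiableAt (by norm_num)
  have hgrad := hs.posHomogeneousOn.fderiv huniq hsmul hd
  have hhess := hgrad.fderiv huniq hsmul hd'
  refine apply_self_pos_of_linearIndependent ((hs.contDiffAt hz).isSymmSndFDerivAt (by simp)).eq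
    (by simpa using hgrad.fderiv_apply_self hz (hd' z hz)) (fun w hw hwz ↦ ?_) hzv
  obtain ⟨r, hr, u, hu, rfl⟩ := hz
  have hwu : ⟪w, u⟫ = 0 := by
    rw [real_inner_smul_right] at hwz
    exact (mul_eq_zero.1 hwz).resolve_left hr.ne'
  rw [hhess r hr u (sphCap_subset_coneCap hu)]
  exact mul_pos (zpow_pos hr _) (hτ.2 u hu w hw hwu)

theorem IsHomExt.strictlyExposes_gradient (hs : IsHomExt n θ 2 s G) (hτ : TauPos n θ G)
    (hθ : θ ∈ Ioo 0 (π / 2)) : StrictlyExposes (gradient G) (sphCap n θ) := by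
  intro u hu w hw hwu
  have hc := cos_pos_of_mem_Ioo_zero_pi_div_two hθ
  have hc1 := cos_lt_one_of_mem_Ioo_zero_pi_div_two hθ
  rw [hs.inner_gradient_self hu, real_inner_comm, inner_gradient_left]
  exact hs.posHomogeneousOn.fderiv_apply_lt (convex_coneCap hc) (fun _ ↦ hs.contDiffAt)
    (fun _ hz _ ↦ hs.fderiv_fderiv_pos hτ hc hc1 hz) (sphCap_subset_coneCap hw)
    (sphCap_subset_coneCap hu) (linearIndependent_of_mem_sphCap hc hu hw hwu)

end CapillaryGradient

theorem capillary_gradient_body_general (n : ℕ) (hn : 1 ≤ n) (θ : ℝ) (hθ : θ ∈ Ioo 0 (π / 2))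
    (s G : V n → ℝ) (hs : IsHomExt n θ 2 s G) (hcap : IsCapillaryF n θ G)
    (hτ : TauPos n θ G) :
    Set.InjOn (gradient G) (sphCap n θ) ∧
    (∀ u ∈ sphCap n θ, Real.cos θ < u (Fin.last n) → 0 < (gradient G u) (Fin.last n)) ∧
    (∀ u ∈ sphCapBdry n θ, (gradient G u) (Fin.last n) = 0) ∧
    (∀ K : Set (V n), K = convexHull ℝ (gradient G '' sphCap n θ) →
      IsCompact K ∧ Convex ℝ K ∧ (interior K).Nonempty ∧
      (∀ x ∈ K, 0 ≤ x (Fin.last n)) ∧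
      (∀ u ∈ sphCap n θ, suppFn n K u = G u) ∧
      frontier K = (gradient G '' sphCap n θ) ∪ (K ∩ {x : V n | x (Fin.last n) = 0})) := by
  have hX := hs.strictlyExposes_gradient hτ hθ
  have hcont := hs.continuousOn_gradient
  have hbdry : ∀ b ∈ sphCapBdry n θ, gradient G b (Fin.last n) = 0 := fun b hb ↦
    (gradient_apply_last G b).trans (hcap b hb)
  refine ⟨hX.injOn, fun u hu ↦ hX.last_pos hbdry hn hθ hu, hbdry, ?_⟩
  rintro K rfl
  exact ⟨isCompact_convexHull (isCompact_sphCap.image_of_continuousOn hcont),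
    convex_convexHull ℝ _, hX.interior_convexHull_nonempty hbdry hn hθ,
    fun _ ↦ hX.last_nonneg_of_mem_convexHull hbdry hn hθ,
    fun u hu ↦ (hX.isGreatest_inner hu).csSup_eq.trans (hs.inner_gradient_self hu),
    hX.frontier_convexHull hcont hbdry hn hθ⟩

/-- the gradient map of a strictly convex capillary support function
produces a capillary convex body. -/
theorem capillary_gradient_body (n : ℕ) (hn : 1 ≤ n) (θ : ℝ) (hθ : θ ∈ Ioo 0 (π / 2))
    (s G : V n → ℝ) (hs : IsHomExt n θ ⊤ s G) (hcap : IsCapillaryF n θ G)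
    (hτ : TauPos n θ G) :
    Set.InjOn (gradient G) (sphCap n θ) ∧
    (∀ u ∈ sphCap n θ, Real.cos θ < u (Fin.last n) → 0 < (gradient G u) (Fin.last n)) ∧
    (∀ u ∈ sphCapBdry n θ, (gradient G u) (Fin.last n) = 0) ∧
    (∀ K : Set (V n), K = convexHull ℝ (gradient G '' sphCap n θ) →
      IsCompact K ∧ Convex ℝ K ∧ (interior K).Nonempty ∧
      (∀ x ∈ K, 0 ≤ x (Fin.last n)) ∧
      (∀ u ∈ sphCap n θ, suppFn n K u = G u) ∧
      frontier K = (gradient G '' sphCap n θ) ∪ (K ∩ {x : V n | x (Fin.last n) = 0})) := by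
  exact capillary_gradient_body_general n hn θ hθ s G (hs.of_le le_top) hcap hτ
end
end
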